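/- Let p = p(k) satisfy k^{-3/2} ≪ p(k) (i.e. p(k)·k^{3/2} → ∞) and p(k) ≤ 10·(ln k)/k. Let λ = (k-1)p/(1-(1-p)^k) and λ^R = (k-1)p(1-p)^{k-1}/(1-(1-p)^k). Let ESC be the escape event for the leftwalk with i.i.d. steps Z_i ~ Po(λ), and ESC^R the escape event for the rightwalk with i.i.d. steps Z_i^R ~ Po(λ^R). Then, as k → ∞, Pr[TREE] ~ Pr[ESC]·Pr[ESC^R]. -/

import Mathlib

open Filter Topology Real Finset

-- Indicator of a proposition, as a real number.
open Classical in
noncomputable def ind (P : Prop) : ℝ := if P then 1 else 0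

/-- Poisson point mass: `Pr[Po(r) = n]`. -/
noncomputable def poissonP (r : ℝ) (n : ℕ) : ℝ := Real.exp (-r) * r ^ n / n.factorial

/-- The escape condition for the leftwalk `Y_0 = 1`, `Y_i = Y_{i-1} + Z_i - 1` up to
time `L`: `Y_t > 0` for `1 ≤ t ≤ L`, i.e. `Z_1 + ⋯ + Z_t ≥ t`.  Here bin `i+1`
contains `z i` balls (0-based indexing). -/
def leftOK (L : ℕ) (z : Fin L → ℕ) : Prop :=
  ∀ t, 1 ≤ t → t ≤ L → t ≤ ∑ i ∈ Finset.univ.filter (fun i : Fin L => (i : ℕ) < t), z i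

/-- The escape condition for the rightwalk `Y_0^R = 0`, `Y_i^R = Y_{i-1}^R + 1 - Z_i^R`
up to time `L`: `Y_t^R > 0` for `1 ≤ t ≤ L`, i.e. `Z_1^R + ⋯ + Z_t^R ≤ t - 1`. -/
def rightOK (L : ℕ) (z : Fin L → ℕ) : Prop :=
  ∀ t, 1 ≤ t → t ≤ L → (∑ i ∈ Finset.univ.filter (fun i : Fin L => (i : ℕ) < t), z i) < t

/-- `Pr[ESC_L]` for the leftwalk with independent steps `Z_i ∼ Po(lam i)`. -/
noncomputable def escLProbV (lam : ℕ → ℝ) (L : ℕ) : ℝ :=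
  ∑' z : Fin L → ℕ, (∏ i : Fin L, poissonP (lam (i : ℕ)) (z i)) * ind (leftOK L z)

/-- `Pr[ESC_L]` for the leftwalk with i.i.d. steps `Z_i ∼ Po(r)`. -/
noncomputable def escLProb (r : ℝ) (L : ℕ) : ℝ := escLProbV (fun _ => r) L

/-- `Pr[ESC]` for the leftwalk with i.i.d. steps `Z_i ∼ Po(r)`: since
`ESC = ⋂_L ESC_L` is a decreasing intersection, `Pr[ESC] = inf_L Pr[ESC_L]`. -/
noncomputable def escProb (r : ℝ) : ℝ := ⨅ L : ℕ, escLProb r L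

/-- `Pr[ESC_L^R]` for the rightwalk with independent steps `Z_i^R ∼ Po(lam i)`. -/
noncomputable def escRLProbV (lam : ℕ → ℝ) (L : ℕ) : ℝ :=
  ∑' z : Fin L → ℕ, (∏ i : Fin L, poissonP (lam (i : ℕ)) (z i)) * ind (rightOK L z)

/-- `Pr[ESC_L^R]` for the rightwalk with i.i.d. steps `Z_i^R ∼ Po(r)`. -/
noncomputable def escRLProb (r : ℝ) (L : ℕ) : ℝ := escRLProbV (fun _ => r) L

/-- `Pr[ESC^R]` for the rightwalk with i.i.d. steps `Z_i^R ∼ Po(r)`. -/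
noncomputable def escRProb (r : ℝ) : ℝ := ⨅ L : ℕ, escRLProb r L

/-- Weight of a placement `T` of the `k-1` balls into the `k` bins under the tilted
(truncated geometric) distribution. -/
noncomputable def wt (k : ℕ) (p : ℝ) (T : Fin (k - 1) → Fin k) : ℝ :=
  ∏ j, p * (1 - p) ^ ((T j : ℕ)) / (1 - (1 - p) ^ k)

/-- The event TREE: `Y_t > 0` for all `1 ≤ t ≤ k-1`. -/
def TREEevt (k : ℕ) (T : Fin (k - 1) → Fin k) : Prop :=
  ∀ t, 1 ≤ t → t ≤ k - 1 →
    t ≤ (Finset.univ.filter (fun j => ((T j : ℕ) < t))).card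

/-- `Pr[TREE]` under the tilted balls-into-bins distribution. -/
noncomputable def treeProb (k : ℕ) (p : ℝ) : ℝ :=
  ∑ T : Fin (k - 1) → Fin k, wt k p T * ind (TREEevt k T)

open scoped ENNReal

/-! ### Part 1: Poisson weights and the transfer operators of the two walks -/

lemma poissonP_nonneg {r : ℝ} (hr : 0 ≤ r) (j : ℕ) : 0 ≤ poissonP r j := by
  unfold poissonP; positivity

lemma hasSum_poissonP (r : ℝ) : HasSum (poissonP r) 1 := by
  have h := NormedSpace.expSeries_div_hasSum_exp (𝔸 := ℝ) r
  rw [← Real.exp_eq_exp_ℝ] at h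
  have h2 := h.mul_left (Real.exp (-r))
  rw [← Real.exp_add, neg_add_cancel, Real.exp_zero] at h2
  have e : poissonP r = fun i => Real.exp (-r) * (r ^ i / (i.factorial : ℝ)) := by
    funext j
    unfold poissonP
    ring
  rw [e]
  exact h2

/-- Poisson weight as an extended nonnegative real. -/
noncomputable def PP (r : ℝ) (j : ℕ) : ℝ≥0∞ := ENNReal.ofReal (poissonP r j)

lemma PP_sum {r : ℝ} (hr : 0 ≤ r) : ∑' j, PP r j = 1 := by
  unfold PP
  rw [← ENNReal.ofReal_tsum_of_nonneg (poissonP_nonneg hr) (hasSum_poissonP r).summable,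
    (hasSum_poissonP r).tsum_eq, ENNReal.ofReal_one]

lemma PP_tilt {r a : ℝ} (hr : 0 ≤ r) (ha : 0 < a) (j : ℕ) :
    PP r j * ENNReal.ofReal (a ^ j) = ENNReal.ofReal (Real.exp (r * (a - 1))) * PP (r * a) j := by
  unfold PP
  rw [← ENNReal.ofReal_mul (poissonP_nonneg hr j), ← ENNReal.ofReal_mul (Real.exp_pos _).le]
  congr 1
  unfold poissonP
  have : Real.exp (-r) = Real.exp (r * (a - 1)) * Real.exp (-(r * a)) := by
    rw [← Real.exp_add]; congr 1; ring
  rw [this, mul_pow]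
  ring

lemma PP_tilt_sum {r a : ℝ} (hr : 0 ≤ r) (ha : 0 < a) :
    ∑' j, PP r j * ENNReal.ofReal (a ^ j) = ENNReal.ofReal (Real.exp (r * (a - 1))) := by
  simp_rw [PP_tilt hr ha]
  rw [ENNReal.tsum_mul_left, PP_sum (by positivity), mul_one]

lemma poissonP_conv (r s : ℝ) (n : ℕ) :
    poissonP (r + s) n = ∑ ij ∈ antidiagonal n, poissonP r ij.1 * poissonP s ij.2 := by
  unfold poissonP
  rw [(Commute.all r s).add_pow', mul_div_assoc, Finset.sum_div, Finset.mul_sum]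
  refine Finset.sum_congr rfl fun ij hij => ?_
  have hn : ij.1 + ij.2 = n := by simpa using hij
  have hc : (n.choose ij.1 : ℝ) = n.factorial / (ij.1.factorial * ij.2.factorial) := by
    rw [← hn, Nat.cast_add_choose]
  have hf : (n.factorial : ℝ) ≠ 0 := by positivity
  rw [nsmul_eq_mul, hc, neg_add, Real.exp_add]
  field_simp

lemma PP_conv {r s : ℝ} (hr : 0 ≤ r) (hs : 0 ≤ s) (f : ℕ → ℝ≥0∞) :
    ∑' n, PP (r + s) n * f n = ∑' i, ∑' j, PP r i * PP s j * f (i + j) := by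
  have h1 : ∀ n, PP (r + s) n * f n
      = ∑' x : antidiagonal n, PP r x.1.1 * PP s x.1.2 * f (x.1.1 + x.1.2) := by
    intro n
    rw [tsum_fintype]
    rw [Finset.sum_coe_sort (antidiagonal n)
      (fun x => PP r x.1 * PP s x.2 * f (x.1 + x.2))]
    unfold PP
    rw [poissonP_conv, ENNReal.ofReal_sum_of_nonneg, Finset.sum_mul]
    · refine Finset.sum_congr rfl fun ij hij => ?_
      rw [ENNReal.ofReal_mul (poissonP_nonneg hr _)]
      rw [mem_antidiagonal.1 hij]
    · intro ij _
      exact mul_nonneg (poissonP_nonneg hr _) (poissonP_nonneg hs _)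
  simp_rw [h1]
  rw [← ENNReal.tsum_prod (f := fun i j => PP r i * PP s j * f (i + j)),
    ← Finset.HasAntidiagonal.sigmaAntidiagonalEquivProd.tsum_eq, ENNReal.tsum_sigma']
  rfl

lemma PP_mono {r r' : ℝ} (hr : 0 ≤ r) (h : r ≤ r') {f : ℕ → ℝ≥0∞} (hf : Monotone f) :
    ∑' j, PP r j * f j ≤ ∑' j, PP r' j * f j := by
  have e : r' = r + (r' - r) := by ring
  rw [e, PP_conv hr (by linarith)]
  refine ENNReal.tsum_le_tsum fun i => ?_
  calc PP r i * f i = ∑' j, PP r i * PP (r' - r) j * f i := by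
        rw [ENNReal.tsum_mul_right, ENNReal.tsum_mul_left, PP_sum (by linarith), mul_one]
    _ ≤ _ := ENNReal.tsum_le_tsum fun j => by gcongr; exact hf (by omega)

lemma PP_anti {r r' : ℝ} (hr : 0 ≤ r) (h : r ≤ r') {f : ℕ → ℝ≥0∞} (hf : Antitone f) :
    ∑' j, PP r' j * f j ≤ ∑' j, PP r j * f j := by
  have e : r' = r + (r' - r) := by ring
  rw [e, PP_conv hr (by linarith)]
  refine ENNReal.tsum_le_tsum fun i => ?_
  calc _ ≤ ∑' j, PP r i * PP (r' - r) j * f i :=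
        ENNReal.tsum_le_tsum fun j => by gcongr; exact hf (by omega)
    _ = PP r i * f i := by
        rw [ENNReal.tsum_mul_right, ENNReal.tsum_mul_left, PP_sum (by linarith), mul_one]

/-- One step of the killed left walk (state = slack). -/
noncomputable def SL (r : ℝ) (ψ : ℕ → ℝ≥0∞) (h : ℕ) : ℝ≥0∞ :=
  ∑' j, PP r j * (if 1 ≤ h + j then ψ (h + j - 1) else 0)

/-- `L` steps of the killed left walk. -/
noncomputable def WL : (ℕ → ℝ) → ℕ → (ℕ → ℝ≥0∞) → ℕ → ℝ≥0∞
  | _, 0, φ => φ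
  | r, L + 1, φ => SL (r 0) (WL (fun i => r (i + 1)) L φ)

lemma SL_mono_fun (r : ℝ) {ψ ψ' : ℕ → ℝ≥0∞} (h : ∀ n, ψ n ≤ ψ' n) (n : ℕ) :
    SL r ψ n ≤ SL r ψ' n := by
  refine ENNReal.tsum_le_tsum fun j => ?_
  gcongr
  split_ifs
  · exact h _
  · exact le_rfl

lemma SL_add (r : ℝ) (ψ ψ' : ℕ → ℝ≥0∞) (n : ℕ) :
    SL r (fun m => ψ m + ψ' m) n = SL r ψ n + SL r ψ' n := by
  unfold SL
  rw [← ENNReal.tsum_add]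
  congr 1; funext j
  split_ifs <;> simp [mul_add]

lemma SL_const_mul (r : ℝ) (c : ℝ≥0∞) (ψ : ℕ → ℝ≥0∞) (n : ℕ) :
    SL r (fun m => c * ψ m) n = c * SL r ψ n := by
  unfold SL
  rw [← ENNReal.tsum_mul_left]
  congr 1; funext j
  split_ifs <;> simp [mul_left_comm]

lemma SL_monotone (r : ℝ) {ψ : ℕ → ℝ≥0∞} (h : Monotone ψ) : Monotone (SL r ψ) := by
  intro a b hab
  refine ENNReal.tsum_le_tsum fun j => ?_
  gcongr
  split_ifs with h1 h2
  · exact h (by omega)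
  · omega
  · exact zero_le
  · exact le_rfl

lemma SL_mono_rate {r r' : ℝ} (hr : 0 ≤ r) (hrr : r ≤ r') {ψ : ℕ → ℝ≥0∞} (h : Monotone ψ)
    (n : ℕ) : SL r ψ n ≤ SL r' ψ n := by
  refine PP_mono hr hrr ?_
  intro a b hab
  dsimp only
  split_ifs with h1 h2
  · exact h (by omega)
  · omega
  · exact zero_le
  · exact le_rfl

lemma WL_monotone (L : ℕ) : ∀ (r : ℕ → ℝ) {φ : ℕ → ℝ≥0∞}, Monotone φ → Monotone (WL r L φ) := by
  induction L with
  | zero => intro r φ h; exact h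
  | succ L ih => intro r φ h; exact SL_monotone _ (ih _ h)

lemma WL_mono_fun (L : ℕ) : ∀ (r : ℕ → ℝ) {φ φ' : ℕ → ℝ≥0∞}, (∀ n, φ n ≤ φ' n) →
    ∀ n, WL r L φ n ≤ WL r L φ' n := by
  induction L with
  | zero => intro r φ φ' h; exact h
  | succ L ih => intro r φ φ' h n; exact SL_mono_fun _ (ih _ h) n

lemma WL_add (L : ℕ) : ∀ (r : ℕ → ℝ) (φ φ' : ℕ → ℝ≥0∞) (n : ℕ),
    WL r L (fun m => φ m + φ' m) n = WL r L φ n + WL r L φ' n := by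
  induction L with
  | zero => intro r φ φ' n; rfl
  | succ L ih =>
    intro r φ φ' n
    simp only [WL]
    rw [← SL_add]
    congr 1; funext m; exact ih _ _ _ _

lemma WL_const_mul (L : ℕ) : ∀ (r : ℕ → ℝ) (c : ℝ≥0∞) (φ : ℕ → ℝ≥0∞) (n : ℕ),
    WL r L (fun m => c * φ m) n = c * WL r L φ n := by
  induction L with
  | zero => intro r c φ n; rfl
  | succ L ih =>
    intro r c φ n
    simp only [WL]
    rw [← SL_const_mul]
    congr 1; funext m; exact ih _ _ _ _

lemma WL_mono_rate (L : ℕ) : ∀ {r r' : ℕ → ℝ}, (∀ i < L, 0 ≤ r i) → (∀ i < L, r i ≤ r' i) →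
    ∀ {φ : ℕ → ℝ≥0∞}, Monotone φ → ∀ n, WL r L φ n ≤ WL r' L φ n := by
  induction L with
  | zero => intro r r' _ _ φ _ n; exact le_rfl
  | succ L ih =>
    intro r r' h0 h1 φ hφ n
    simp only [WL]
    refine (SL_mono_rate (h0 0 (by omega)) (h1 0 (by omega)) (WL_monotone L _ hφ) n).trans ?_
    exact SL_mono_fun _ (ih (fun i hi => h0 _ (by omega)) (fun i hi => h1 _ (by omega)) hφ) n

lemma WL_append (L M : ℕ) : ∀ (r : ℕ → ℝ) (φ : ℕ → ℝ≥0∞),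
    WL r (L + M) φ = WL r L (WL (fun i => r (i + L)) M φ) := by
  induction L with
  | zero => intro r φ; simp [WL]
  | succ L ih =>
    intro r φ
    rw [show L + 1 + M = (L + M) + 1 by ring]
    simp only [WL]
    rw [ih]
    congr 3

lemma WL_le_one (L : ℕ) : ∀ {r : ℕ → ℝ}, (∀ i < L, 0 ≤ r i) → ∀ n, WL r L (fun _ => 1) n ≤ 1 := by
  induction L with
  | zero => intro r _ n; exact le_rfl
  | succ L ih =>
    intro r h0 n
    simp only [WL]
    calc _ ≤ ∑' j, PP (r 0) j := by
          refine ENNReal.tsum_le_tsum fun j => ?_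
          refine mul_le_of_le_one_right zero_le ?_
          split_ifs
          · exact ih (fun i hi => h0 _ (by omega)) _
          · exact zero_le
      _ = 1 := PP_sum (h0 0 (by omega))

lemma SL_tilt {r a : ℝ} (hr : 0 ≤ r) (ha : 0 < a) (ψ : ℕ → ℝ≥0∞) (n : ℕ) :
    SL r (fun m => ENNReal.ofReal (a ^ (m + 1)) * ψ m) n
      = ENNReal.ofReal (a ^ n * Real.exp (r * (a - 1))) * SL (r * a) ψ n := by
  unfold SL
  rw [← ENNReal.tsum_mul_left]
  congr 1; funext j
  split_ifs with h
  · dsimp only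
    rw [show n + j - 1 + 1 = n + j by omega, pow_add, ENNReal.ofReal_mul (by positivity),
      ENNReal.ofReal_mul (by positivity)]
    have := PP_tilt hr ha j
    calc _ = ENNReal.ofReal (a ^ n) * (PP r j * ENNReal.ofReal (a ^ j)) * ψ (n + j - 1) := by ring
      _ = _ := by rw [this]; ring
  · simp

lemma WL_tilt {a : ℝ} (ha : 0 < a) (L : ℕ) : ∀ {r : ℕ → ℝ}, (∀ i < L, 0 ≤ r i) →
    ∀ (φ : ℕ → ℝ≥0∞) (n : ℕ), WL r L (fun m => ENNReal.ofReal (a ^ (m + 1)) * φ m) n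
      = ENNReal.ofReal (a ^ (n + 1) * Real.exp (-∑ i ∈ range L, (r i * (1 - a) + Real.log a)))
        * WL (fun i => r i * a) L φ n := by
  induction L with
  | zero => intro r _ φ n; simp [WL]
  | succ L ih =>
    intro r h0 φ n
    simp only [WL]
    have := ih (r := fun i => r (i + 1)) (fun i hi => h0 _ (by omega)) φ
    rw [show WL (fun i => r (i + 1)) L (fun m => ENNReal.ofReal (a ^ (m + 1)) * φ m)
      = fun n => ENNReal.ofReal (Real.exp (-∑ i ∈ range L, (r (i+1) * (1 - a) + Real.log a))) *
        (ENNReal.ofReal (a ^ (n + 1)) * WL (fun i => r (i + 1) * a) L φ n) from by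
      funext n
      rw [this, ENNReal.ofReal_mul (by positivity)]
      ring]
    rw [SL_const_mul, SL_tilt (h0 0 (by omega)) ha, ← mul_assoc,
      ← ENNReal.ofReal_mul (by positivity)]
    congr 2
    rw [Finset.sum_range_succ', neg_add, Real.exp_add, neg_add, Real.exp_add (-(r 0 * (1 - a))),
      Real.exp_neg (Real.log a), Real.exp_log ha, pow_succ,
      show -(r 0 * (1 - a)) = r 0 * (a - 1) by ring]
    generalize Real.exp (-∑ x ∈ range L, (r (x + 1) * (1 - a) + log a)) = E
    field_simp

lemma doob_left {a : ℝ} (ha : 0 < a) (M : ℕ) : ∀ {r : ℕ → ℝ}, (∀ i < M, 0 ≤ r i) →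
    ∀ {c : ℝ}, 0 ≤ c → (∀ t ≤ M, -c ≤ ∑ i ∈ range t, (r i * (1 - a) + Real.log a)) →
    ∀ n, 1 ≤ WL r M (fun _ => 1) n + ENNReal.ofReal (Real.exp c * a ^ (n + 1)) := by
  induction M with
  | zero => intro r _ c hc _ n; simp [WL]
  | succ M ih =>
    intro r h0 c hc hs n
    have h1 := hs 1 (by omega)
    simp only [range_one, sum_singleton] at h1
    set d := r 0 * (1 - a) + Real.log a with hd
    have ih' := ih (r := fun i => r (i + 1)) (fun i hi => h0 _ (by omega)) (c := c + d)
      (by linarith) (fun t ht => by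
        have := hs (t + 1) (by omega)
        rw [Finset.sum_range_succ'] at this
        linarith)
    have hr := h0 0 (by omega)
    have key : Real.exp c * a ^ (n + 1)
        = Real.exp (c + d) * a ^ n * Real.exp (r 0 * (a - 1)) := by
      rw [hd, Real.exp_add, Real.exp_add (r 0 * (1 - a)), Real.exp_log ha, pow_succ]
      have : Real.exp (r 0 * (1 - a)) * Real.exp (r 0 * (a - 1)) = 1 := by
        rw [← Real.exp_add, ← Real.exp_zero]; congr 1; ring
      linear_combination (-Real.exp c * a ^ n * a) * this
    rw [key, ENNReal.ofReal_mul (by positivity), ← PP_tilt_sum hr ha, ← ENNReal.tsum_mul_left]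
    simp only [WL]
    unfold SL
    rw [← ENNReal.tsum_add]
    refine (PP_sum hr).symm.le.trans ?_
    refine ENNReal.tsum_le_tsum fun j => ?_
    rw [mul_left_comm, ← mul_add]
    refine le_mul_of_one_le_right zero_le ?_
    rw [← ENNReal.ofReal_mul (by positivity), mul_assoc, ← pow_add]
    split_ifs with h
    · have := ih' (n + j - 1)
      rwa [show n + j - 1 + 1 = n + j by omega] at this
    · rw [show n + j = 0 by omega]
      rw [zero_add, ← ENNReal.ofReal_one]
      refine ENNReal.ofReal_le_ofReal ?_
      rw [pow_zero, mul_one]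
      exact Real.one_le_exp (by linarith)

lemma exact_left {x r : ℝ} (hx : 0 < x) (hr : 0 ≤ r) (hxr : x = Real.exp (r * (x - 1))) (M : ℕ) :
    ∀ n, WL (fun _ => r) M (fun _ => 1) n + ENNReal.ofReal (x ^ (n + 1))
      ≤ 1 + WL (fun _ => r) M (fun m => ENNReal.ofReal (x ^ (m + 1))) n := by
  induction M with
  | zero => intro n; exact le_rfl
  | succ M ih =>
    intro n
    simp only [WL]
    have key : x ^ (n + 1) = x ^ n * Real.exp (r * (x - 1)) := by rw [← hxr, pow_succ]
    rw [key, ENNReal.ofReal_mul (by positivity), ← PP_tilt_sum hr hx, ← ENNReal.tsum_mul_left]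
    unfold SL
    rw [← ENNReal.tsum_add]
    refine le_trans ?_ (add_le_add_left (PP_sum hr).le _)
    rw [← ENNReal.tsum_add]
    refine ENNReal.tsum_le_tsum fun j => ?_
    rw [mul_left_comm, ← mul_add, ← mul_one_add]
    refine mul_le_mul_right ?_ _
    rw [← ENNReal.ofReal_mul (by positivity), ← pow_add]
    split_ifs with h
    · have := ih (n + j - 1)
      rwa [show n + j - 1 + 1 = n + j by omega] at this
    · rw [show n + j = 0 by omega]; simp

/-! ### Part 2: the right walk -/

/-- One step of the killed right walk. -/
noncomputable def SR (r : ℝ) (ψ : ℕ → ℝ≥0∞) (h : ℕ) : ℝ≥0∞ :=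
  ∑' j, PP r j * (if j ≤ h then ψ (h + 1 - j) else 0)

/-- `L` steps of the killed right walk. -/
noncomputable def WR : (ℕ → ℝ) → ℕ → (ℕ → ℝ≥0∞) → ℕ → ℝ≥0∞
  | _, 0, φ => φ
  | r, L + 1, φ => SR (r 0) (WR (fun i => r (i + 1)) L φ)

lemma SR_mono_fun (r : ℝ) {ψ ψ' : ℕ → ℝ≥0∞} (h : ∀ n, ψ n ≤ ψ' n) (n : ℕ) :
    SR r ψ n ≤ SR r ψ' n := by
  refine ENNReal.tsum_le_tsum fun j => ?_
  gcongr
  split_ifs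
  · exact h _
  · exact le_rfl

lemma SR_add (r : ℝ) (ψ ψ' : ℕ → ℝ≥0∞) (n : ℕ) :
    SR r (fun m => ψ m + ψ' m) n = SR r ψ n + SR r ψ' n := by
  unfold SR
  rw [← ENNReal.tsum_add]
  congr 1; funext j
  split_ifs <;> simp [mul_add]

lemma SR_const_mul (r : ℝ) (c : ℝ≥0∞) (ψ : ℕ → ℝ≥0∞) (n : ℕ) :
    SR r (fun m => c * ψ m) n = c * SR r ψ n := by
  unfold SR
  rw [← ENNReal.tsum_mul_left]
  congr 1; funext j
  split_ifs <;> simp [mul_left_comm]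

lemma SR_monotone (r : ℝ) {ψ : ℕ → ℝ≥0∞} (h : Monotone ψ) : Monotone (SR r ψ) := by
  intro a b hab
  refine ENNReal.tsum_le_tsum fun j => ?_
  gcongr
  split_ifs with h1 h2
  · exact h (by omega)
  · omega
  · exact zero_le
  · exact le_rfl

lemma SR_anti_rate {r r' : ℝ} (hr : 0 ≤ r) (hrr : r ≤ r') {ψ : ℕ → ℝ≥0∞} (h : Monotone ψ)
    (n : ℕ) : SR r' ψ n ≤ SR r ψ n := by
  refine PP_anti hr hrr ?_
  intro a b hab
  dsimp only
  split_ifs with h1 h2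
  · exact h (by omega)
  · omega
  · exact zero_le
  · exact le_rfl

lemma WR_monotone (L : ℕ) : ∀ (r : ℕ → ℝ) {φ : ℕ → ℝ≥0∞}, Monotone φ → Monotone (WR r L φ) := by
  induction L with
  | zero => intro r φ h; exact h
  | succ L ih => intro r φ h; exact SR_monotone _ (ih _ h)

lemma WR_mono_fun (L : ℕ) : ∀ (r : ℕ → ℝ) {φ φ' : ℕ → ℝ≥0∞}, (∀ n, φ n ≤ φ' n) →
    ∀ n, WR r L φ n ≤ WR r L φ' n := by
  induction L with
  | zero => intro r φ φ' h; exact h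
  | succ L ih => intro r φ φ' h n; exact SR_mono_fun _ (ih _ h) n

lemma WR_add (L : ℕ) : ∀ (r : ℕ → ℝ) (φ φ' : ℕ → ℝ≥0∞) (n : ℕ),
    WR r L (fun m => φ m + φ' m) n = WR r L φ n + WR r L φ' n := by
  induction L with
  | zero => intro r φ φ' n; rfl
  | succ L ih =>
    intro r φ φ' n
    simp only [WR]
    rw [← SR_add]
    congr 1; funext m; exact ih _ _ _ _

lemma WR_const_mul (L : ℕ) : ∀ (r : ℕ → ℝ) (c : ℝ≥0∞) (φ : ℕ → ℝ≥0∞) (n : ℕ),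
    WR r L (fun m => c * φ m) n = c * WR r L φ n := by
  induction L with
  | zero => intro r c φ n; rfl
  | succ L ih =>
    intro r c φ n
    simp only [WR]
    rw [← SR_const_mul]
    congr 1; funext m; exact ih _ _ _ _

lemma WR_anti_rate (L : ℕ) : ∀ {r r' : ℕ → ℝ}, (∀ i < L, 0 ≤ r i) → (∀ i < L, r i ≤ r' i) →
    ∀ {φ : ℕ → ℝ≥0∞}, Monotone φ → ∀ n, WR r' L φ n ≤ WR r L φ n := by
  induction L with
  | zero => intro r r' _ _ φ _ n; exact le_rfl
  | succ L ih =>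
    intro r r' h0 h1 φ hφ n
    simp only [WR]
    refine (SR_anti_rate (h0 0 (by omega)) (h1 0 (by omega)) (WR_monotone L _ hφ) n).trans ?_
    exact SR_mono_fun _ (ih (fun i hi => h0 _ (by omega)) (fun i hi => h1 _ (by omega)) hφ) n

lemma WR_append (L M : ℕ) : ∀ (r : ℕ → ℝ) (φ : ℕ → ℝ≥0∞),
    WR r (L + M) φ = WR r L (WR (fun i => r (i + L)) M φ) := by
  induction L with
  | zero => intro r φ; simp [WR]
  | succ L ih =>
    intro r φ
    rw [show L + 1 + M = (L + M) + 1 by ring]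
    simp only [WR]
    rw [ih]
    congr 3

lemma WR_le_one (L : ℕ) : ∀ {r : ℕ → ℝ}, (∀ i < L, 0 ≤ r i) → ∀ n, WR r L (fun _ => 1) n ≤ 1 := by
  induction L with
  | zero => intro r _ n; exact le_rfl
  | succ L ih =>
    intro r h0 n
    simp only [WR]
    calc _ ≤ ∑' j, PP (r 0) j := by
          refine ENNReal.tsum_le_tsum fun j => ?_
          refine mul_le_of_le_one_right zero_le ?_
          split_ifs
          · exact ih (fun i hi => h0 _ (by omega)) _
          · exact zero_le
      _ = 1 := PP_sum (h0 0 (by omega))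

lemma SR_tilt {r a : ℝ} (hr : 0 ≤ r) (ha : 0 < a) (ψ : ℕ → ℝ≥0∞) (n : ℕ) :
    SR r (fun m => ENNReal.ofReal (a ^ m) * ψ m) n
      = ENNReal.ofReal (a ^ (n + 1) * Real.exp (r * (a⁻¹ - 1))) * SR (r * a⁻¹) ψ n := by
  unfold SR
  rw [← ENNReal.tsum_mul_left]
  congr 1; funext j
  have hi : 0 < a⁻¹ := inv_pos.2 ha
  split_ifs with h
  · dsimp only
    rw [show a ^ (n + 1 - j) = a ^ (n + 1) * a⁻¹ ^ j by
      rw [pow_sub₀ _ ha.ne' (by omega), inv_pow], ENNReal.ofReal_mul (by positivity),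
      ENNReal.ofReal_mul (by positivity)]
    have := PP_tilt hr hi j
    calc _ = ENNReal.ofReal (a ^ (n + 1)) * (PP r j * ENNReal.ofReal (a⁻¹ ^ j))
          * ψ (n + 1 - j) := by ring
      _ = _ := by rw [this]; ring
  · simp

lemma WR_tilt {a : ℝ} (ha : 0 < a) (L : ℕ) : ∀ {r : ℕ → ℝ}, (∀ i < L, 0 ≤ r i) →
    ∀ (φ : ℕ → ℝ≥0∞) (n : ℕ), WR r L (fun m => ENNReal.ofReal (a ^ m) * φ m) n
      = ENNReal.ofReal (a ^ n * Real.exp (∑ i ∈ range L, (Real.log a + r i * (a⁻¹ - 1))))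
        * WR (fun i => r i * a⁻¹) L φ n := by
  induction L with
  | zero => intro r _ φ n; simp [WR]
  | succ L ih =>
    intro r h0 φ n
    simp only [WR]
    have := ih (r := fun i => r (i + 1)) (fun i hi => h0 _ (by omega)) φ
    rw [show WR (fun i => r (i + 1)) L (fun m => ENNReal.ofReal (a ^ m) * φ m)
      = fun n => ENNReal.ofReal (Real.exp (∑ i ∈ range L, (Real.log a + r (i+1) * (a⁻¹ - 1)))) *
        (ENNReal.ofReal (a ^ n) * WR (fun i => r (i + 1) * a⁻¹) L φ n) from by
      funext n
      rw [this, ENNReal.ofReal_mul (by positivity)]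
      ring]
    rw [SR_const_mul, SR_tilt (h0 0 (by omega)) ha, ← mul_assoc,
      ← ENNReal.ofReal_mul (by positivity)]
    congr 2
    rw [Finset.sum_range_succ', Real.exp_add, Real.exp_add (Real.log a), Real.exp_log ha, pow_succ]
    ring

lemma doob_right {a : ℝ} (ha : 0 < a) (ha1 : a ≤ 1) (M : ℕ) :
    ∀ {r : ℕ → ℝ}, (∀ i < M, 0 ≤ r i) →
    ∀ {c : ℝ}, 0 ≤ c → (∀ t ≤ M, -c ≤ ∑ i ∈ range t, (-Real.log a - r i * (a⁻¹ - 1))) →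
    ∀ n, 1 ≤ WR r M (fun _ => 1) n + ENNReal.ofReal (Real.exp c * a ^ n) := by
  induction M with
  | zero => intro r _ c hc _ n; simp [WR]
  | succ M ih =>
    intro r h0 c hc hs n
    have h1 := hs 1 (by omega)
    simp only [range_one, sum_singleton] at h1
    set d := -Real.log a - r 0 * (a⁻¹ - 1) with hd
    have ih' := ih (r := fun i => r (i + 1)) (fun i hi => h0 _ (by omega)) (c := c + d)
      (by linarith) (fun t ht => by
        have := hs (t + 1) (by omega)
        rw [Finset.sum_range_succ'] at this
        linarith)
    have hr := h0 0 (by omega)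
    have hi : 0 < a⁻¹ := inv_pos.2 ha
    have key : Real.exp c * a ^ n
        = Real.exp (c + d) * a ^ (n + 1) * Real.exp (r 0 * (a⁻¹ - 1)) := by
      have e : Real.exp c = Real.exp (c + d) * Real.exp (Real.log a)
          * Real.exp (r 0 * (a⁻¹ - 1)) := by
        rw [← Real.exp_add, ← Real.exp_add, hd]; congr 1; ring
      rw [e, Real.exp_log ha, pow_succ]
      ring
    rw [key, ENNReal.ofReal_mul (by positivity), ← PP_tilt_sum hr hi, ← ENNReal.tsum_mul_left]
    simp only [WR]
    unfold SR
    rw [← ENNReal.tsum_add]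
    refine (PP_sum hr).symm.le.trans ?_
    refine ENNReal.tsum_le_tsum fun j => ?_
    rw [mul_left_comm, ← mul_add]
    refine le_mul_of_one_le_right zero_le ?_
    rw [← ENNReal.ofReal_mul (by positivity), mul_assoc]
    split_ifs with h
    · have := ih' (n + 1 - j)
      rwa [pow_sub₀ _ ha.ne' (by omega), ← inv_pow] at this
    · rw [zero_add, ← ENNReal.ofReal_one]
      refine ENNReal.ofReal_le_ofReal ?_
      have h2 : 1 ≤ Real.exp (c + d) := Real.one_le_exp (by linarith)
      have h3 : 1 ≤ a ^ (n + 1) * a⁻¹ ^ j := by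
        obtain ⟨m, rfl⟩ : ∃ m, j = n + 1 + m := ⟨j - (n + 1), by omega⟩
        rw [pow_add a⁻¹, ← mul_assoc, ← mul_pow, mul_inv_cancel₀ ha.ne', one_pow, one_mul]
        exact one_le_pow₀ ((one_le_inv₀ ha).2 ha1)
      nlinarith

/-! ballot theorem -/

lemma poissonP_succ (r : ℝ) (s : ℕ) : ((s : ℝ) + 1) * poissonP r (s + 1) = r * poissonP r s := by
  unfold poissonP
  rw [Nat.factorial_succ, pow_succ]
  push_cast
  have : (s.factorial : ℝ) ≠ 0 := by positivity
  field_simp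

lemma poissonP_conv_mul (r s : ℝ) (n : ℕ) :
    ∑ ij ∈ antidiagonal n, (ij.1 : ℝ) * (poissonP r ij.1 * poissonP s ij.2) * (r + s)
      = r * n * poissonP (r + s) n := by
  cases n with
  | zero => simp
  | succ n =>
    rw [Finset.Nat.sum_antidiagonal_succ]
    simp only [Nat.cast_zero, zero_mul, zero_add]
    have h1 : ∀ ij ∈ antidiagonal n, ((ij.1 + 1 : ℕ) : ℝ) * (poissonP r (ij.1 + 1) *
        poissonP s ij.2) * (r + s) = r * (r + s) * (poissonP r ij.1 * poissonP s ij.2) := by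
      intro ij _
      push_cast
      linear_combination (poissonP s ij.2 * (r + s)) * poissonP_succ r ij.1
    rw [Finset.sum_congr rfl h1, ← Finset.mul_sum, ← poissonP_conv]
    push_cast
    linear_combination -r * poissonP_succ (r + s) n

/-- the ballot weights -/
lemma ballot_conv {r : ℝ} (hr : 0 < r) (L : ℕ) (hL : 1 ≤ L) (n : ℕ) :
    ∑ ij ∈ antidiagonal n, (1 - (ij.1 : ℝ) / L) * poissonP (r * L) ij.1 * poissonP r ij.2
      = (1 - (n : ℝ) / (L + 1)) * poissonP (r * (L + 1)) n := by
  have h1 := poissonP_conv (r * L) r n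
  have h2 := poissonP_conv_mul (r * L) r n
  rw [← Finset.sum_mul] at h2
  have hL' : (0 : ℝ) < L := by exact_mod_cast hL
  have e : r * L + r = r * (L + 1) := by ring
  rw [e] at h1 h2
  have h3 : ∑ ij ∈ antidiagonal n, (1 - (ij.1 : ℝ) / L) * poissonP (r * L) ij.1 * poissonP r ij.2
     = ∑ ij ∈ antidiagonal n, poissonP (r * L) ij.1 * poissonP r ij.2 -
      (∑ ij ∈ antidiagonal n, (ij.1 : ℝ) * (poissonP (r * L) ij.1 * poissonP r ij.2)) / L := by
    rw [Finset.sum_div, ← Finset.sum_sub_distrib]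
    refine Finset.sum_congr rfl fun ij _ => ?_
    ring
  rw [h3, ← h1]
  have h4 : ∑ ij ∈ antidiagonal n, (ij.1 : ℝ) * (poissonP (r * L) ij.1 * poissonP r ij.2)
     = L * n * poissonP (r * (L + 1)) n / (L + 1) := by
    rw [eq_div_iff (by positivity)]
    have : r ≠ 0 := hr.ne'
    apply mul_left_cancel₀ this
    linear_combination h2
  rw [h4]
  field_simp

lemma ballot {r : ℝ} (hr : 0 < r) (L : ℕ) : ∀ φ : ℕ → ℝ≥0∞, WR (fun _ => r) (L + 1) φ 0
    = ∑ s ∈ range (L + 1), ENNReal.ofReal ((1 - (s : ℝ) / (L + 1)) * poissonP (r * (L + 1)) s)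
      * φ (L + 1 - s) := by
  induction L with
  | zero =>
    intro φ
    simp only [WR, SR]
    rw [tsum_eq_single 0]
    · simp [PP]
    · intro j hj; simp [hj]
  | succ L ih =>
    intro φ
    rw [WR_append (L + 1) 1, ih]
    simp only [WR]
    have h0 : ∀ s ∈ range (L + 1), 0 ≤ (1 - (s : ℝ) / (L + 1)) * poissonP (r * (L + 1)) s := by
      intro s hs
      have : (s : ℝ) < L + 1 := by exact_mod_cast Finset.mem_range.1 hs
      refine mul_nonneg ?_ (poissonP_nonneg (by positivity) _)
      rw [sub_nonneg, div_le_one (by positivity)]; exact this.le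
    have h1 : ∀ s ∈ range (L + 1), SR r φ (L + 1 - s)
        = ∑ j ∈ range (L + 2 - s), PP r j * φ (L + 2 - s - j) := by
      intro s hs
      have hs' := Finset.mem_range.1 hs
      unfold SR
      rw [tsum_eq_sum (s := range (L + 2 - s))]
      · refine Finset.sum_congr rfl fun j hj => ?_
        have := Finset.mem_range.1 hj
        rw [if_pos (by omega)]
        congr 2; omega
      · intro j hj
        have : ¬ j < L + 2 - s := by simpa using hj
        rw [if_neg (by omega), mul_zero]
    rw [Finset.sum_congr rfl (fun s hs => by rw [h1 s hs])]
    have h2 : ∀ n ∈ range (L + 1 + 1),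
        ENNReal.ofReal ((1 - (n : ℝ) / ((L + 1 : ℕ) + 1)) * poissonP (r * ((L + 1 : ℕ) + 1)) n)
          * φ (L + 1 + 1 - n)
        = ∑ ij ∈ antidiagonal n, (if ij.1 < L + 1 then
           ENNReal.ofReal ((1 - (ij.1 : ℝ) / (L + 1)) * poissonP (r * (L + 1)) ij.1) *
            (PP r ij.2 * φ (L + 2 - ij.1 - ij.2)) else 0) := by
      intro n hn
      have hn' := Finset.mem_range.1 hn
      have hb := ballot_conv hr (L + 1) (by omega) n
      rw [← hb, ENNReal.ofReal_sum_of_nonneg, Finset.sum_mul]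
      · refine Finset.sum_congr rfl fun ij hij => ?_
        have hij' := mem_antidiagonal.1 hij
        push_cast
        split_ifs with h
        · rw [ENNReal.ofReal_mul (h0 _ (Finset.mem_range.2 h))]
          unfold PP
          rw [show L + 2 - ij.1 - ij.2 = L + 1 + 1 - n by omega]
          ring
        · have : ij.1 = L + 1 := by omega
          rw [this]; push_cast
          rw [div_self (by positivity)]; simp
      · intro ij hij
        have hij' := mem_antidiagonal.1 hij
        refine mul_nonneg (mul_nonneg ?_ (poissonP_nonneg (by positivity) _))
          (poissonP_nonneg hr.le _)
        rw [sub_nonneg, div_le_one (by positivity)]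
        exact_mod_cast (by omega : ij.1 ≤ L + 1)
    rw [Finset.sum_congr rfl h2]
    rw [Finset.sum_sigma']
    simp_rw [Finset.mul_sum]
    rw [Finset.sum_sigma', ← Finset.sum_filter]
    refine Finset.sum_bij' (fun x _ => ⟨x.1 + x.2, (x.1, x.2)⟩) (fun y _ => ⟨y.2.1, y.2.2⟩)
      ?_ ?_ ?_ ?_ ?_
    · rintro ⟨s, j⟩ h
      simp at h ⊢; omega
    · rintro ⟨n, i, j⟩ h
      simp at h ⊢; omega
    · rintro ⟨s, j⟩ h; rfl
    · rintro ⟨n, i, j⟩ h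
      simp at h ⊢
      obtain ⟨⟨h1, h2⟩, h3⟩ := h
      subst h2; simp
    · rintro ⟨s, j⟩ h
      rfl

/-! ### Part 3: escape probabilities as reals, ballot bounds -/

/-- survival probability of the left walk up to time `L` -/
noncomputable def uL (r : ℕ → ℝ) (L : ℕ) : ℝ := (WL r L (fun _ => 1) 0).toReal
/-- survival probability of the right walk up to time `L` -/
noncomputable def uR (r : ℕ → ℝ) (L : ℕ) : ℝ := (WR r L (fun _ => 1) 0).toReal

lemma hasSum_poissonP_mean (r : ℝ) : HasSum (fun s : ℕ => (s : ℝ) * poissonP r s) r := by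
  rw [← hasSum_nat_add_iff' 1]
  have h := (hasSum_poissonP r).mul_left r
  simp only [range_one, sum_singleton, Nat.cast_zero, zero_mul, sub_zero]
  rw [mul_one] at h
  have e : (fun s : ℕ => ((s + 1 : ℕ) : ℝ) * poissonP r (s + 1)) = fun s => r * poissonP r s := by
    funext s
    push_cast
    exact poissonP_succ r s
  rw [e]
  exact h

lemma hasSum_poissonP_sq (r : ℝ) :
    HasSum (fun s : ℕ => (s : ℝ) ^ 2 * poissonP r s) (r ^ 2 + r) := by
  rw [← hasSum_nat_add_iff' 1]
  have h := ((hasSum_poissonP_mean r).add (hasSum_poissonP r)).mul_left r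
  simp only [range_one, sum_singleton, Nat.cast_zero, sub_zero, ne_eq, OfNat.ofNat_ne_zero,
    not_false_eq_true, zero_pow, zero_mul]
  have e : (fun s : ℕ => ((s + 1 : ℕ) : ℝ) ^ 2 * poissonP r (s + 1))
      = fun s : ℕ => r * (s * poissonP r s + poissonP r s) := by
    funext s
    push_cast
    linear_combination ((s : ℝ) + 1) * poissonP_succ r s
  rw [e, show r ^ 2 + r = r * (r + 1) by ring]
  exact h

lemma uR_ballot {r : ℝ} (hr : 0 < r) {L : ℕ} (hL : 1 ≤ L) : uR (fun _ => r) L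
    = ∑ s ∈ range L, (1 - (s : ℝ) / L) * poissonP (r * L) s := by
  obtain ⟨L, rfl⟩ : ∃ m, L = m + 1 := ⟨L - 1, by omega⟩
  unfold uR
  rw [ballot hr]
  have h0 : ∀ s ∈ range (L + 1), 0 ≤ (1 - (s : ℝ) / (L + 1)) * poissonP (r * (L + 1)) s := by
      intro s hs
      have : (s : ℝ) < L + 1 := by exact_mod_cast Finset.mem_range.1 hs
      refine mul_nonneg ?_ (poissonP_nonneg (by positivity) _)
      rw [sub_nonneg, div_le_one (by positivity)]; exact this.le
  simp only [mul_one]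
  rw [← ENNReal.ofReal_sum_of_nonneg h0, ENNReal.toReal_ofReal (Finset.sum_nonneg h0)]
  push_cast
  rfl

lemma uR_ge {r : ℝ} (hr : 0 < r) (L : ℕ) : 1 - r ≤ uR (fun _ => r) L := by
  rcases Nat.eq_zero_or_pos L with rfl | hL
  · simp [uR, WR, hr.le]
  rw [uR_ballot hr hL]
  have hL' : (0 : ℝ) < L := by exact_mod_cast hL
  have h := ((hasSum_poissonP (r * L)).sub ((hasSum_poissonP_mean (r * L)).mul_left (1 / (L : ℝ))))
  have e : (1 : ℝ) - 1 / L * (r * L) = 1 - r := by field_simp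
  rw [e] at h
  have h2 := sum_le_hasSum (range L) (f := fun s : ℕ => -((poissonP (r * L) s
    - 1 / (L : ℝ) * (s * poissonP (r * L) s)))) (a := -(1 - r)) ?_ h.neg
  · rw [Finset.sum_neg_distrib, neg_le_neg_iff] at h2
    refine h2.trans (le_of_eq ?_)
    refine Finset.sum_congr rfl fun s _ => ?_
    ring
  · intro s hs
    have : (L : ℝ) ≤ s := by
      have : ¬ s < L := by simpa using hs
      exact_mod_cast (by omega : L ≤ s)
    have h3 : 1 ≤ 1 / (L : ℝ) * s := by
      rw [one_div, ← div_eq_inv_mul, le_div_iff₀ hL']; linarith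
    have h4 := poissonP_nonneg (r := r * L) (by positivity) s
    nlinarith

lemma uR_le {r : ℝ} (hr : 0 < r) (hr1 : r < 1) {L : ℕ} (hL : 1 ≤ L) :
    uR (fun _ => r) L ≤ (1 - r) + r / (4 * (1 - r) * L) := by
  rw [uR_ballot hr hL]
  have hL' : (0 : ℝ) < L := by exact_mod_cast hL
  have h1 := hasSum_poissonP (r * L)
  have h2 := hasSum_poissonP_mean (r * L)
  have h3 := hasSum_poissonP_sq (r * L)
  have hr' : 0 < 1 - r := by linarith
  set C : ℝ := 1 / (4 * (1 - r) * L ^ 2) with hC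
  have hC0 : 0 < C := by rw [hC]; positivity
  have h := ((h1.mul_left (1 + C * (r * L) ^ 2)).add
    (h2.mul_left (-(1 / (L : ℝ)) - 2 * C * (r * L)))).add (h3.mul_left C)
  have e : (1 + C * (r * L) ^ 2) * 1 + (-(1 / (L : ℝ)) - 2 * C * (r * L)) * (r * L)
     + C * ((r * L) ^ 2 + r * L) = (1 - r) + r / (4 * (1 - r) * L) := by
    rw [hC]; field_simp; ring
  rw [e] at h
  have key : ∀ s : ℕ, -(1 - (s : ℝ) / L) ≤ C * (s - r * L) ^ 2 := by
    intro s
    rw [hC, one_div_mul_eq_div, le_div_iff₀ (by positivity)]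
    have : -(1 - (s : ℝ) / L) * (4 * (1 - r) * L ^ 2) = (s - L) * (4 * (1 - r) * L) := by
      field_simp; ring
    rw [this]
    nlinarith [sq_nonneg ((s : ℝ) - r * L - 2 * ((1 - r) * L))]
  have h2 := sum_le_hasSum (range L) ?_ h
  · refine le_trans (Finset.sum_le_sum fun s _ => ?_) h2
    have h4 := poissonP_nonneg (r := r * L) (by positivity) s
    have h5 : 0 ≤ C * (s - r * L) ^ 2 * poissonP (r * L) s := by positivity
    have : (1 + C * (r * L) ^ 2) * poissonP (r * L) s + (-(1 / (L : ℝ)) - 2 * C * (r * L)) *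
       (s * poissonP (r * L) s) + C * (s ^ 2 * poissonP (r * L) s)
       = (1 - (s : ℝ) / L) * poissonP (r * L) s + C * (s - r * L) ^ 2 * poissonP (r * L) s := by
      ring
    rw [this]
    linarith
  · intro s hs
    have h4 := poissonP_nonneg (r := r * L) (by positivity) s
    have : (1 + C * (r * L) ^ 2) * poissonP (r * L) s + (-(1 / (L : ℝ)) - 2 * C * (r * L)) *
       (s * poissonP (r * L) s) + C * (s ^ 2 * poissonP (r * L) s)
       = ((1 - (s : ℝ) / L) + C * (s - r * L) ^ 2) * poissonP (r * L) s := by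
      ring
    rw [this]
    refine mul_nonneg ?_ h4
    have := key s
    linarith

/-! real versions of the walk lemmas -/

lemma WL_ne_top {r : ℕ → ℝ} {L : ℕ} (h : ∀ i < L, 0 ≤ r i) (n : ℕ) :
    WL r L (fun _ => 1) n ≠ ∞ := ne_top_of_le_ne_top ENNReal.one_ne_top (WL_le_one L h n)
lemma WR_ne_top {r : ℕ → ℝ} {L : ℕ} (h : ∀ i < L, 0 ≤ r i) (n : ℕ) :
    WR r L (fun _ => 1) n ≠ ∞ := ne_top_of_le_ne_top ENNReal.one_ne_top (WR_le_one L h n)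

lemma uL_nonneg (r : ℕ → ℝ) (L : ℕ) : 0 ≤ uL r L := ENNReal.toReal_nonneg
lemma uR_nonneg (r : ℕ → ℝ) (L : ℕ) : 0 ≤ uR r L := ENNReal.toReal_nonneg

lemma uL_mono_rate {r r' : ℕ → ℝ} {L : ℕ} (h0 : ∀ i < L, 0 ≤ r i) (h : ∀ i < L, r i ≤ r' i) :
    uL r L ≤ uL r' L :=
  ENNReal.toReal_mono (WL_ne_top (fun i hi => (h0 i hi).trans (h i hi)) _)
    (WL_mono_rate L h0 h monotone_const 0)

lemma uR_anti_rate {r r' : ℕ → ℝ} {L : ℕ} (h0 : ∀ i < L, 0 ≤ r i) (h : ∀ i < L, r i ≤ r' i) :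
    uR r' L ≤ uR r L :=
  ENNReal.toReal_mono (WR_ne_top h0 _) (WR_anti_rate L h0 h monotone_const 0)

lemma uL_anti_len {r : ℕ → ℝ} {L M : ℕ} (hLM : L ≤ M) (h0 : ∀ i < M, 0 ≤ r i) :
    uL r M ≤ uL r L := by
  obtain ⟨N, rfl⟩ := Nat.exists_eq_add_of_le hLM
  refine ENNReal.toReal_mono (WL_ne_top (fun i hi => h0 i (by omega)) _) ?_
  rw [WL_append]
  exact WL_mono_fun _ _ (WL_le_one N (fun i hi => h0 _ (by omega))) 0

lemma uR_anti_len {r : ℕ → ℝ} {L M : ℕ} (hLM : L ≤ M) (h0 : ∀ i < M, 0 ≤ r i) :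
    uR r M ≤ uR r L := by
  obtain ⟨N, rfl⟩ := Nat.exists_eq_add_of_le hLM
  refine ENNReal.toReal_mono (WR_ne_top (fun i hi => h0 i (by omega)) _) ?_
  rw [WR_append]
  exact WR_mono_fun _ _ (WR_le_one N (fun i hi => h0 _ (by omega))) 0

/-- tail bound for the left walk -/
lemma uL_tail {r r' : ℕ → ℝ} {L M : ℕ} {a γ : ℝ} (ha : 0 < a) (ha1 : a ≤ 1) (hLM : L ≤ M)
    (h0 : ∀ i < M, 0 ≤ r i) (h1 : ∀ i < L, r i ≤ r' i)
    (hγ : ∀ t, L ≤ t → t ≤ M → γ ≤ ∑ i ∈ range t, (r i * (1 - a) + Real.log a)) :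
    uL r L ≤ uL r M + Real.exp (-γ) * uL r' L := by
  obtain ⟨N, rfl⟩ := Nat.exists_eq_add_of_le hLM
  set G := ∑ i ∈ range L, (r i * (1 - a) + Real.log a) with hG
  have hGγ : γ ≤ G := hγ L le_rfl hLM
  have hd := doob_left ha N (r := fun i => r (i + L)) (fun i hi => h0 _ (by omega)) (c := G - γ)
    (by linarith) (fun t ht => by
      have := hγ (L + t) (by omega) (by omega)
      rw [Finset.sum_range_add] at this
      simp_rw [add_comm L] at this
      linarith)
  have h2 : WL r L (fun _ => 1) 0 ≤ WL r (L + N) (fun _ => 1) 0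
      + ENNReal.ofReal (Real.exp (-γ)) * WL r' L (fun _ => 1) 0 := by
    refine (WL_mono_fun L r hd 0).trans ?_
    rw [WL_add, WL_append]
    gcongr
    have e : (fun m : ℕ => ENNReal.ofReal (Real.exp (G - γ) * a ^ (m + 1)))
       = fun m => ENNReal.ofReal (Real.exp (G - γ)) * (ENNReal.ofReal (a ^ (m + 1)) * 1) := by
      funext m
      rw [ENNReal.ofReal_mul (by positivity), mul_one]
    rw [e, WL_const_mul, WL_tilt ha L (fun i hi => h0 i (by omega)), ← mul_assoc,
      ← ENNReal.ofReal_mul (by positivity)]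
    refine mul_le_mul' (ENNReal.ofReal_le_ofReal ?_) ?_
    · have : Real.exp (G - γ) * (a ^ (0 + 1) * Real.exp (-G)) = a * Real.exp (-γ) := by
        have : Real.exp (G - γ) * Real.exp (-G) = Real.exp (-γ) := by
          rw [← Real.exp_add]; congr 1; ring
        rw [zero_add, pow_one]
        linear_combination a * this
      rw [← hG, this]
      exact mul_le_of_le_one_left (Real.exp_pos _).le ha1
    · refine WL_mono_rate L (fun i hi => mul_nonneg (h0 i (by omega)) ha.le) (fun i hi => ?_)
        monotone_const 0
      exact (mul_le_of_le_one_right (h0 i (by omega)) ha1).trans (h1 i hi)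
  have hf1 := WL_ne_top (r := r) (L := L + N) h0 0
  have hf2 := WL_ne_top (r := r') (L := L) (fun i hi => (h0 i (by omega)).trans (h1 i hi)) 0
  have h3 := ENNReal.toReal_mono (ENNReal.add_ne_top.2 ⟨hf1, ENNReal.mul_ne_top
    ENNReal.ofReal_ne_top hf2⟩) h2
  rwa [ENNReal.toReal_add hf1 (ENNReal.mul_ne_top ENNReal.ofReal_ne_top hf2),
    ENNReal.toReal_mul, ENNReal.toReal_ofReal (Real.exp_pos _).le] at h3

/-- tail bound for the right walk -/
lemma uR_tail {r r' : ℕ → ℝ} {L M : ℕ} {a γ : ℝ} (ha : 0 < a) (ha1 : a ≤ 1) (hLM : L ≤ M)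
    (h0 : ∀ i < M, 0 ≤ r' i) (h00 : ∀ i < L, 0 ≤ r i) (h1 : ∀ i < L, r i ≤ r' i)
    (hγ : ∀ t, L ≤ t → t ≤ M → γ ≤ ∑ i ∈ range t, (-Real.log a - r' i * (a⁻¹ - 1))) :
    uR r' L ≤ uR r' M + Real.exp (-γ) * uR r L := by
  obtain ⟨N, rfl⟩ := Nat.exists_eq_add_of_le hLM
  set G := ∑ i ∈ range L, (-Real.log a - r' i * (a⁻¹ - 1)) with hG
  have hGγ : γ ≤ G := hγ L le_rfl hLM
  have hd := doob_right ha ha1 N (r := fun i => r' (i + L)) (fun i hi => h0 _ (by omega))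
    (c := G - γ) (by linarith) (fun t ht => by
      have := hγ (L + t) (by omega) (by omega)
      rw [Finset.sum_range_add] at this
      simp_rw [add_comm L] at this
      linarith)
  have hG' : ∑ i ∈ range L, (Real.log a + r' i * (a⁻¹ - 1)) = -G := by
    rw [hG, ← Finset.sum_neg_distrib]
    exact Finset.sum_congr rfl fun i _ => by ring
  have h2 : WR r' L (fun _ => 1) 0 ≤ WR r' (L + N) (fun _ => 1) 0
      + ENNReal.ofReal (Real.exp (-γ)) * WR r L (fun _ => 1) 0 := by
    refine (WR_mono_fun L r' hd 0).trans ?_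
    rw [WR_add, WR_append]
    gcongr
    have e : (fun m : ℕ => ENNReal.ofReal (Real.exp (G - γ) * a ^ m))
       = fun m => ENNReal.ofReal (Real.exp (G - γ)) * (ENNReal.ofReal (a ^ m) * 1) := by
      funext m
      rw [ENNReal.ofReal_mul (by positivity), mul_one]
    rw [e, WR_const_mul, WR_tilt ha L (fun i hi => h0 i (by omega)), ← mul_assoc,
      ← ENNReal.ofReal_mul (by positivity), hG']
    refine mul_le_mul' (ENNReal.ofReal_le_ofReal ?_) ?_
    · have : Real.exp (G - γ) * Real.exp (-G) = Real.exp (-γ) := by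
        rw [← Real.exp_add]; congr 1; ring
      rw [pow_zero, one_mul, this]
    · refine WR_anti_rate L h00 (fun i hi => ?_) monotone_const 0
      exact (h1 i hi).trans (le_mul_of_one_le_right (h0 i (by omega)) ((one_le_inv₀ ha).2 ha1))
  have hf1 := WR_ne_top (r := r') (L := L + N) h0 0
  have hf2 := WR_ne_top (r := r) (L := L) h00 0
  have h3 := ENNReal.toReal_mono (ENNReal.add_ne_top.2 ⟨hf1, ENNReal.mul_ne_top
    ENNReal.ofReal_ne_top hf2⟩) h2
  rwa [ENNReal.toReal_add hf1 (ENNReal.mul_ne_top ENNReal.ofReal_ne_top hf2),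
    ENNReal.toReal_mul, ENNReal.toReal_ofReal (Real.exp_pos _).le] at h3

/-! ### Part 4: independent Poisson vectors -/

/-- indicator in `ℝ≥0∞` -/
noncomputable def eI (P : Prop) : ℝ≥0∞ := ENNReal.ofReal (ind P)

lemma eI_true {P : Prop} (h : P) : eI P = 1 := by simp [eI, ind, h]
lemma eI_false {P : Prop} (h : ¬ P) : eI P = 0 := by simp [eI, ind, h]
lemma eI_and (P Q : Prop) : eI (P ∧ Q) = eI P * eI Q := by
  by_cases hP : P <;> by_cases hQ : Q <;> simp [eI, ind, hP, hQ]
lemma eI_mono {P Q : Prop} (h : P → Q) : eI P ≤ eI Q := by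
  by_cases hP : P
  · rw [eI_true hP, eI_true (h hP)]
  · rw [eI_false hP]; exact zero_le
lemma eI_le_one (P : Prop) : eI P ≤ 1 := by
  by_cases hP : P
  · rw [eI_true hP]
  · rw [eI_false hP]; exact zero_le

/-- expectation for a vector of independent Poisson variables -/
noncomputable def EE {ι : Type} [Fintype ι] (r : ι → ℝ) (F : (ι → ℕ) → ℝ≥0∞) : ℝ≥0∞ :=
  ∑' z : ι → ℕ, (∏ i, PP (r i) (z i)) * F z

lemma EE_cons {L : ℕ} (r : Fin (L + 1) → ℝ) (F : (Fin (L + 1) → ℕ) → ℝ≥0∞) :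
    EE r F = ∑' j, PP (r 0) j * EE (fun i : Fin L => r i.succ)
      (fun z => F (Fin.cons (α := fun _ => ℕ) j z)) := by
  unfold EE
  rw [← (Fin.consEquiv (fun _ : Fin (L + 1) => ℕ)).tsum_eq, ENNReal.tsum_prod']
  refine tsum_congr fun j => ?_
  rw [← ENNReal.tsum_mul_left]
  refine tsum_congr fun z => ?_
  simp only [Fin.consEquiv, Equiv.coe_fn_mk]
  rw [Fin.prod_univ_succ]
  simp only [Fin.cons_zero, Fin.cons_succ]
  ring

/-- left condition started from slack `h` -/
def leftOKh (h L : ℕ) (z : Fin L → ℕ) : Prop :=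
  ∀ t, 1 ≤ t → t ≤ L → t ≤ h + ∑ i ∈ Finset.univ.filter (fun i : Fin L => (i : ℕ) < t), z i

/-- right condition started from height `h` -/
def rightOKh (h L : ℕ) (z : Fin L → ℕ) : Prop :=
  ∀ t, 1 ≤ t → t ≤ L → (∑ i ∈ Finset.univ.filter (fun i : Fin L => (i : ℕ) < t), z i) < h + t

lemma sum_filter_cons {L : ℕ} (j : ℕ) (z : Fin L → ℕ) (t : ℕ) :
    (∑ i ∈ Finset.univ.filter (fun i : Fin (L + 1) => (i : ℕ) < t + 1),
      (Fin.cons (α := fun _ => ℕ) j z : Fin (L + 1) → ℕ) i)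
    = j + ∑ i ∈ Finset.univ.filter (fun i : Fin L => (i : ℕ) < t), z i := by
  rw [Finset.sum_filter, Fin.sum_univ_succ, Finset.sum_filter]
  simp

lemma leftOKh_cons {h L : ℕ} (j : ℕ) (z : Fin L → ℕ) :
    leftOKh h (L + 1) (Fin.cons (α := fun _ => ℕ) j z) ↔ 1 ≤ h + j ∧ leftOKh (h + j - 1) L z := by
  constructor
  · intro H
    have h1 := H 1 le_rfl (by omega)
    have e := sum_filter_cons j z 0
    simp only [zero_add] at e
    rw [e] at h1
    simp only [Nat.not_lt_zero, Finset.filter_false, sum_empty, add_zero] at h1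
    refine ⟨h1, fun t ht1 ht => ?_⟩
    have h2 := H (t + 1) (by omega) (by omega)
    rw [sum_filter_cons] at h2
    omega
  · rintro ⟨h1, H⟩ t ht1 ht
    obtain ⟨t, rfl⟩ : ∃ s, t = s + 1 := ⟨t - 1, by omega⟩
    rw [sum_filter_cons]
    rcases Nat.eq_zero_or_pos t with rfl | h0
    · omega
    · have := H t h0 (by omega)
      omega

lemma rightOKh_cons {h L : ℕ} (j : ℕ) (z : Fin L → ℕ) :
    rightOKh h (L + 1) (Fin.cons (α := fun _ => ℕ) j z) ↔ j ≤ h ∧ rightOKh (h + 1 - j) L z := by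
  constructor
  · intro H
    have h1 := H 1 le_rfl (by omega)
    have e := sum_filter_cons j z 0
    simp only [zero_add] at e
    rw [e] at h1
    simp only [Nat.not_lt_zero, Finset.filter_false, sum_empty, add_zero] at h1
    refine ⟨by omega, fun t ht1 ht => ?_⟩
    have h2 := H (t + 1) (by omega) (by omega)
    rw [sum_filter_cons] at h2
    omega
  · rintro ⟨h1, H⟩ t ht1 ht
    obtain ⟨t, rfl⟩ : ∃ s, t = s + 1 := ⟨t - 1, by omega⟩
    rw [sum_filter_cons]
    rcases Nat.eq_zero_or_pos t with rfl | h0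
    · simp only [Nat.not_lt_zero, Finset.filter_false, sum_empty]; omega
    · have := H t h0 (by omega)
      omega

lemma EE_zero_mul {ι : Type} [Fintype ι] (r : ι → ℝ) (c : ℝ≥0∞) (F : (ι → ℕ) → ℝ≥0∞) :
    EE r (fun z => c * F z) = c * EE r F := by
  unfold EE
  rw [← ENNReal.tsum_mul_left]
  exact tsum_congr fun z => by ring

lemma EE_leftOKh (L : ℕ) : ∀ (r : ℕ → ℝ) (h : ℕ),
    EE (fun i : Fin L => r i) (fun z => eI (leftOKh h L z)) = WL r L (fun _ => 1) h := by
  induction L with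
  | zero =>
    intro r h
    simp only [EE, WL]
    rw [tsum_eq_single default (fun z hz => absurd (Subsingleton.elim z default) hz)]
    rw [eI_true (by intro t h1 h2; omega)]
    simp
  | succ L ih =>
    intro r h
    rw [EE_cons]
    simp only [WL, SL]
    refine tsum_congr fun j => ?_
    congr 1
    simp_rw [leftOKh_cons, eI_and]
    rw [EE_zero_mul]
    have := ih (fun i => r (i + 1)) (h + j - 1)
    simp only [Fin.val_succ]
    rw [this]
    split_ifs with hh
    · rw [eI_true hh, one_mul]
    · rw [eI_false hh, zero_mul]

lemma EE_rightOKh (L : ℕ) : ∀ (r : ℕ → ℝ) (h : ℕ),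
    EE (fun i : Fin L => r i) (fun z => eI (rightOKh h L z)) = WR r L (fun _ => 1) h := by
  induction L with
  | zero =>
    intro r h
    simp only [EE, WR]
    rw [tsum_eq_single default (fun z hz => absurd (Subsingleton.elim z default) hz)]
    rw [eI_true (by intro t h1 h2; omega)]
    simp
  | succ L ih =>
    intro r h
    rw [EE_cons]
    simp only [WR, SR]
    refine tsum_congr fun j => ?_
    congr 1
    simp_rw [rightOKh_cons, eI_and]
    rw [EE_zero_mul]
    have := ih (fun i => r (i + 1)) (h + 1 - j)
    simp only [Fin.val_succ]
    rw [this]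
    split_ifs with hh
    · rw [eI_true hh, one_mul]
    · rw [eI_false hh, zero_mul]

lemma EE_leftOK (L : ℕ) (r : ℕ → ℝ) :
    EE (fun i : Fin L => r i) (fun z => eI (leftOK L z)) = WL r L (fun _ => 1) 0 := by
  rw [← EE_leftOKh]
  congr; funext z; congr 1; unfold leftOK leftOKh; simp

lemma EE_rightOK (L : ℕ) (r : ℕ → ℝ) :
    EE (fun i : Fin L => r i) (fun z => eI (rightOK L z)) = WR r L (fun _ => 1) 0 := by
  rw [← EE_rightOKh]
  congr; funext z; congr 1; unfold rightOK rightOKh; simp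

lemma ind_nonneg (P : Prop) : 0 ≤ ind P := by unfold ind; split_ifs <;> norm_num

lemma EE_toReal {L : ℕ} {r : ℕ → ℝ} (h0 : ∀ i < L, 0 ≤ r i) (P : (Fin L → ℕ) → Prop) :
    (EE (fun i : Fin L => r i) (fun z => eI (P z))).toReal
      = ∑' z : Fin L → ℕ, (∏ i : Fin L, poissonP (r (i : ℕ)) (z i)) * ind (P z) := by
  unfold EE
  rw [ENNReal.tsum_toReal_eq]
  · refine tsum_congr fun z => ?_
    rw [ENNReal.toReal_mul, ENNReal.toReal_prod]
    congr 1
    swap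
    · exact ENNReal.toReal_ofReal (ind_nonneg _)
    refine Finset.prod_congr rfl fun i _ => ?_
    exact ENNReal.toReal_ofReal (poissonP_nonneg (h0 i i.2) _)
  · intro z
    refine ENNReal.mul_ne_top (ENNReal.prod_ne_top fun i _ => ENNReal.ofReal_ne_top)
      ENNReal.ofReal_ne_top

lemma escLProbV_eq {L : ℕ} {r : ℕ → ℝ} (h0 : ∀ i < L, 0 ≤ r i) : escLProbV r L = uL r L := by
  unfold escLProbV uL
  rw [← EE_leftOK, EE_toReal h0]

lemma escRLProbV_eq {L : ℕ} {r : ℕ → ℝ} (h0 : ∀ i < L, 0 ≤ r i) : escRLProbV r L = uR r L := by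
  unfold escRLProbV uR
  rw [← EE_rightOK, EE_toReal h0]

lemma escProb_eq {r : ℝ} (hr : 0 ≤ r) : escProb r = ⨅ L : ℕ, uL (fun _ => r) L := by
  unfold escProb escLProb
  congr; funext L; exact escLProbV_eq (fun _ _ => hr)

lemma escRProb_eq {r : ℝ} (hr : 0 ≤ r) : escRProb r = ⨅ L : ℕ, uR (fun _ => r) L := by
  unfold escRProb escRLProb
  congr; funext L; exact escRLProbV_eq (fun _ _ => hr)

lemma escProb_le {r : ℝ} (hr : 0 ≤ r) (L : ℕ) : escProb r ≤ uL (fun _ => r) L := by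
  rw [escProb_eq hr]
  exact ciInf_le ⟨0, by rintro _ ⟨L, rfl⟩; exact uL_nonneg _ _⟩ L

lemma escRProb_le {r : ℝ} (hr : 0 ≤ r) (L : ℕ) : escRProb r ≤ uR (fun _ => r) L := by
  rw [escRProb_eq hr]
  exact ciInf_le ⟨0, by rintro _ ⟨L, rfl⟩; exact uR_nonneg _ _⟩ L

lemma le_escProb {r c : ℝ} (hr : 0 ≤ r) (h : ∀ L, c ≤ uL (fun _ => r) L) : c ≤ escProb r := by
  rw [escProb_eq hr]; exact le_ciInf h

lemma le_escRProb {r c : ℝ} (hr : 0 ≤ r) (h : ∀ L, c ≤ uR (fun _ => r) L) : c ≤ escRProb r := by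
  rw [escRProb_eq hr]; exact le_ciInf h

/-! balls in bins -/

lemma PP_succ {r : ℝ} (hr : 0 ≤ r) (j : ℕ) :
    ((j + 1 : ℕ) : ℝ≥0∞) * PP r (j + 1) = ENNReal.ofReal r * PP r j := by
  unfold PP
  rw [← ENNReal.ofReal_natCast, ← ENNReal.ofReal_mul (by positivity), ← ENNReal.ofReal_mul hr]
  congr 1
  push_cast
  exact poissonP_succ r j

lemma EE_mecke {ι : Type} [Fintype ι] [DecidableEq ι] {r : ι → ℝ} (hr : ∀ i, 0 ≤ r i) (i : ι)
    (F : (ι → ℕ) → ℝ≥0∞) :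
    EE r (fun z => (z i : ℝ≥0∞) * F z)
      = ENNReal.ofReal (r i) * EE r (fun z => F (z + Pi.single i 1)) := by
  unfold EE
  rw [← ENNReal.tsum_mul_left]
  have hinj : Function.Injective (fun z : ι → ℕ => z + Pi.single i 1) := add_left_injective _
  rw [← hinj.tsum_eq]
  · refine tsum_congr fun z => ?_
    rw [Fintype.prod_eq_mul_prod_compl i, Fintype.prod_eq_mul_prod_compl i]
    have h2 : ∏ j ∈ ({i} : Finset ι)ᶜ, PP (r j) ((z + Pi.single i 1 : ι → ℕ) j)
        = ∏ j ∈ ({i} : Finset ι)ᶜ, PP (r j) (z j) := by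
      refine Finset.prod_congr rfl fun j hj => ?_
      have : j ≠ i := by simpa using hj
      simp [this]
    rw [h2]
    simp only [Pi.add_apply, Pi.single_eq_same]
    have := PP_succ (hr i) (z i)
    calc _ = (((z i + 1 : ℕ) : ℝ≥0∞) * PP (r i) (z i + 1)) *
          ((∏ j ∈ ({i} : Finset ι)ᶜ, PP (r j) (z j)) * F (z + Pi.single i 1)) := by ring
      _ = _ := by rw [this]; ring
  · intro z hz
    have : z i ≠ 0 := by
      intro h0
      apply hz
      simp [h0]
    refine ⟨z - Pi.single i 1, ?_⟩
    funext j
    by_cases hj : j = i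
    · subst hj; simp; omega
    · simp [hj]

/-- occupancy counts -/
def cnt {ι : Type} [DecidableEq ι] {n : ℕ} (T : Fin n → ι) (i : ι) : ℕ :=
  (Finset.univ.filter (fun j => T j = i)).card

/-- expectation of a function of the occupancy counts of `n` i.i.d. balls -/
noncomputable def BB {ι : Type} [Fintype ι] [DecidableEq ι] (w : ι → ℝ) (n : ℕ)
    (F : (ι → ℕ) → ℝ≥0∞) : ℝ≥0∞ :=
  ∑ T : Fin n → ι, (∏ j, ENNReal.ofReal (w (T j))) * F (cnt T)

lemma cnt_cons {ι : Type} [DecidableEq ι] {n : ℕ} (i : ι) (T : Fin n → ι) :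
    cnt (Fin.cons (α := fun _ => ι) i T : Fin (n + 1) → ι) = cnt T + Pi.single i 1 := by
  funext j
  unfold cnt
  simp only [Finset.card_filter, Fin.sum_univ_succ, Fin.cons_zero, Fin.cons_succ, Pi.add_apply]
  rw [add_comm]
  congr 1
  simp [Pi.single_apply, eq_comm]

lemma BB_succ {ι : Type} [Fintype ι] [DecidableEq ι] (w : ι → ℝ) (n : ℕ)
    (F : (ι → ℕ) → ℝ≥0∞) :
    BB w (n + 1) F = ∑ i, ENNReal.ofReal (w i) * BB w n (fun z => F (z + Pi.single i 1)) := by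
  unfold BB
  rw [← (Fin.consEquiv (fun _ : Fin (n + 1) => ι)).sum_comp, Fintype.sum_prod_type]
  refine Finset.sum_congr rfl fun i _ => ?_
  rw [Finset.mul_sum]
  refine Finset.sum_congr rfl fun T _ => ?_
  simp only [Fin.consEquiv, Equiv.coe_fn_mk]
  rw [cnt_cons, Fin.prod_univ_succ]
  simp only [Fin.cons_zero, Fin.cons_succ]
  ring

lemma BB_zero {ι : Type} [Fintype ι] [DecidableEq ι] (w : ι → ℝ) (F : (ι → ℕ) → ℝ≥0∞) :
    BB w 0 F = F 0 := by
  unfold BB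
  rw [Fintype.sum_unique]
  have : cnt (default : Fin 0 → ι) = 0 := by
    funext i; simp [cnt]
  rw [this]; simp

lemma BB_mono_fun {ι : Type} [Fintype ι] [DecidableEq ι] (w : ι → ℝ) (n : ℕ)
    {F G : (ι → ℕ) → ℝ≥0∞} (h : ∀ z, F z ≤ G z) : BB w n F ≤ BB w n G :=
  Finset.sum_le_sum fun T _ => by gcongr; exact h _

lemma BB_one {ι : Type} [Fintype ι] [DecidableEq ι] {w : ι → ℝ} (hw : ∑ i, ENNReal.ofReal (w i) = 1)
    (n : ℕ) : BB w n (fun _ => 1) = 1 := by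
  induction n with
  | zero => rw [BB_zero]
  | succ n ih => rw [BB_succ]; simp_rw [ih]; simpa using hw

lemma EE_ball {ι : Type} [Fintype ι] [DecidableEq ι] {w : ι → ℝ} (hw : ∀ i, 0 ≤ w i)
    (hw1 : ∑ i, w i = 1) {ν : ℝ} (hν : 0 ≤ ν) (n : ℕ) : ∀ (F : (ι → ℕ) → ℝ≥0∞),
    EE (fun i => ν * w i) (fun z => eI (∑ i, z i = n) * F z) = PP ν n * BB w n F := by
  induction n with
  | zero =>
    intro F
    rw [BB_zero]
    unfold EE
    rw [tsum_eq_single 0]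
    · dsimp only
      rw [eI_true (by simp), one_mul]
      congr 1
      unfold PP
      rw [← ENNReal.ofReal_prod_of_nonneg]
      · congr 1
        simp only [poissonP, Pi.zero_apply, pow_zero, Nat.factorial_zero, Nat.cast_one, mul_one,
          div_one]
        rw [← Real.exp_sum, Finset.sum_neg_distrib, ← Finset.mul_sum, hw1, mul_one]
      · intro i _; exact poissonP_nonneg (mul_nonneg hν (hw i)) _
    · intro z hz
      dsimp only
      rw [eI_false, zero_mul, mul_zero]
      intro h
      apply hz
      funext i
      exact (Finset.sum_eq_zero_iff.1 h) i (Finset.mem_univ i)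
  | succ n ih =>
    intro F
    have hr : ∀ i, 0 ≤ ν * w i := fun i => mul_nonneg hν (hw i)
    have key : ((n + 1 : ℕ) : ℝ≥0∞) * EE (fun i => ν * w i)
        (fun z => eI (∑ i, z i = n + 1) * F z) = ((n + 1 : ℕ) : ℝ≥0∞) * (PP ν (n + 1) *
          BB w (n + 1) F) := by
      rw [← EE_zero_mul]
      have e1 : (fun z : ι → ℕ => ((n + 1 : ℕ) : ℝ≥0∞) * (eI (∑ i, z i = n + 1) * F z))
          = fun z => ∑ i, (z i : ℝ≥0∞) * (eI (∑ i, z i = n + 1) * F z) := by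
        funext z
        rw [← Finset.sum_mul]
        by_cases h : ∑ i, z i = n + 1
        · rw [← Nat.cast_sum, h]
        · rw [eI_false h]; simp
      rw [e1]
      have e2 : EE (fun i => ν * w i) (fun z => ∑ i, (z i : ℝ≥0∞) * (eI (∑ i, z i = n + 1) * F z))
        = ∑ i, EE (fun i => ν * w i) (fun z => (z i : ℝ≥0∞) * (eI (∑ i, z i = n + 1) * F z)) := by
        unfold EE
        simp_rw [Finset.mul_sum]
        rw [Summable.tsum_finsetSum (fun _ _ => ENNReal.summable)]
      rw [e2, BB_succ, ← mul_assoc, PP_succ hν, Finset.mul_sum]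
      refine Finset.sum_congr rfl fun i _ => ?_
      rw [EE_mecke hr]
      have e3 : (fun z : ι → ℕ => eI (∑ j, (z + Pi.single i 1 : ι → ℕ) j = n + 1) * F (z + Pi.single i 1))
          = fun z => eI (∑ j, z j = n) * F (z + Pi.single i 1) := by
        funext z
        congr 2
        simp [Finset.sum_add_distrib]
      rw [e3, ih, ENNReal.ofReal_mul hν]
      ring
    exact (ENNReal.mul_right_inj (by simp) (ENNReal.natCast_ne_top _)).1 key

lemma EE_poissonization {ι : Type} [Fintype ι] [DecidableEq ι] {w : ι → ℝ} (hw : ∀ i, 0 ≤ w i)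
    (hw1 : ∑ i, w i = 1) {ν : ℝ} (hν : 0 ≤ ν) (F : (ι → ℕ) → ℝ≥0∞) :
    EE (fun i => ν * w i) F = ∑' n, PP ν n * BB w n F := by
  simp_rw [← EE_ball hw hw1 hν]
  unfold EE
  rw [ENNReal.tsum_comm]
  refine tsum_congr fun z => ?_
  rw [tsum_eq_single (∑ i, z i)]
  · dsimp only
    rw [eI_true rfl, one_mul]
  · intro n hn
    dsimp only
    rw [eI_false (fun h => hn h.symm)]; simp

/-! ### Part 5: marginals, depoissonization, FKG -/

lemma EE_mono_fun {ι : Type} [Fintype ι] (r : ι → ℝ) {F G : (ι → ℕ) → ℝ≥0∞}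
    (h : ∀ z, F z ≤ G z) : EE r F ≤ EE r G :=
  ENNReal.tsum_le_tsum fun z => by gcongr; exact h z

lemma EE_equiv {ι ι' : Type} [Fintype ι] [Fintype ι'] (e : ι' ≃ ι) (r : ι → ℝ)
    (H : (ι → ℕ) → ℝ≥0∞) :
    EE r H = EE (fun i => r (e i)) (fun x => H (fun i => x (e.symm i))) := by
  unfold EE
  rw [← (Equiv.arrowCongr e (Equiv.refl ℕ)).tsum_eq]
  refine tsum_congr fun x => ?_
  congr 1
  rw [← e.prod_comp]
  refine Finset.prod_congr rfl fun i _ => ?_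
  simp [Equiv.arrowCongr]

lemma EE_sum {α κ : Type} [Fintype α] [Fintype κ] (r : α ⊕ κ → ℝ)
    (H : (α ⊕ κ → ℕ) → ℝ≥0∞) :
    EE r H = ∑' x : α → ℕ, (∏ i, PP (r (Sum.inl i)) (x i)) *
      EE (fun i => r (Sum.inr i)) (fun y => H (Sum.elim x y)) := by
  unfold EE
  rw [← (Equiv.sumArrowEquivProdArrow α κ ℕ).symm.tsum_eq, ENNReal.tsum_prod']
  refine tsum_congr fun x => ?_
  rw [← ENNReal.tsum_mul_left]
  refine tsum_congr fun y => ?_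
  rw [Fintype.prod_sum_type, mul_assoc]
  rfl

lemma EE_sum_mul {α κ : Type} [Fintype α] [Fintype κ] (r : α ⊕ κ → ℝ)
    (F : (α → ℕ) → ℝ≥0∞) (G : (κ → ℕ) → ℝ≥0∞) :
    EE r (fun z => F (fun i => z (Sum.inl i)) * G (fun i => z (Sum.inr i)))
      = EE (fun i => r (Sum.inl i)) F * EE (fun i => r (Sum.inr i)) G := by
  rw [EE_sum]
  simp only [Sum.elim_inl, Sum.elim_inr]
  simp_rw [EE_zero_mul, ← mul_assoc]
  rw [ENNReal.tsum_mul_right]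
  rfl

lemma EE_one_fin (L : ℕ) : ∀ {r : Fin L → ℝ}, (∀ i, 0 ≤ r i) → EE r (fun _ => 1) = 1 := by
  induction L with
  | zero =>
    intro r h
    unfold EE
    rw [tsum_eq_single default (fun z hz => absurd (Subsingleton.elim z default) hz)]
    simp
  | succ L ih =>
    intro r h
    rw [EE_cons]
    simp_rw [ih (fun i => h _), mul_one]
    exact PP_sum (h 0)

lemma EE_one {ι : Type} [Fintype ι] {r : ι → ℝ} (h : ∀ i, 0 ≤ r i) : EE r (fun _ => 1) = 1 := by
  rw [EE_equiv (Fintype.equivFin ι).symm]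
  exact EE_one_fin _ (fun i => h _)

open Classical in
/-- the equivalence splitting off the range of an injection -/
noncomputable def splitE {α ι : Type} (f : α → ι) (hf : Function.Injective f) :
    α ⊕ {i // i ∉ Set.range f} ≃ ι :=
  (Equiv.sumCongr (Equiv.ofInjective f hf) (Equiv.refl _)).trans
    (Equiv.sumCompl (fun i => i ∈ Set.range f))

lemma splitE_inl {α ι : Type} (f : α → ι) (hf : Function.Injective f) (a : α) :
    splitE f hf (Sum.inl a) = f a := rfl

lemma splitE_symm {α ι : Type} (f : α → ι) (hf : Function.Injective f) (a : α) :
    (splitE f hf).symm (f a) = Sum.inl a := by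
  rw [← splitE_inl f hf, Equiv.symm_apply_apply]

lemma EE_marginal {α ι : Type} [Fintype α] [Fintype ι] (f : α → ι) (hf : Function.Injective f)
    {r : ι → ℝ} (hr : ∀ i, 0 ≤ r i) (F : (α → ℕ) → ℝ≥0∞) :
    EE r (fun z => F (fun i => z (f i))) = EE (fun i => r (f i)) F := by
  classical
  rw [EE_equiv (splitE f hf), EE_sum]
  simp only [splitE_symm, splitE_inl, Sum.elim_inl]
  unfold EE
  refine tsum_congr fun x => ?_
  congr 1
  have := EE_zero_mul (fun i => r ((splitE f hf) (Sum.inr i))) (F fun i => x i) (fun _ => 1)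
  rw [EE_one (fun i => hr _)] at this
  simpa [EE] using this

lemma EE_total {ι : Type} [Fintype ι] {r : ι → ℝ} (hr : ∀ i, 0 ≤ r i) (hs : 0 < ∑ i, r i) (c : ℕ) :
    EE r (fun z => eI (∑ i, z i = c)) = PP (∑ i, r i) c := by
  classical
  set ν := ∑ i, r i with hν
  have hw : ∀ i, 0 ≤ r i / ν := fun i => div_nonneg (hr i) hs.le
  have hw1 : ∑ i, r i / ν = 1 := by rw [← Finset.sum_div, ← hν, div_self hs.ne']
  have h := EE_ball hw hw1 hs.le c (fun _ => 1)
  rw [BB_one (by rw [← ENNReal.ofReal_sum_of_nonneg (fun i _ => hw i), hw1, ENNReal.ofReal_one]),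
    mul_one] at h
  rw [← h]
  congr
  · funext i; field_simp
  · funext z; rw [mul_one]

lemma BB_upper {α ι : Type} [Fintype α] [Fintype ι] [DecidableEq ι] (f : α → ι)
    (hf : Function.Injective f) {w : ι → ℝ} (hw : ∀ i, 0 ≤ w i) (hw1 : ∑ i, w i = 1)
    {ν : ℝ} (hν : 0 < ν) (n : ℕ) (F : (α → ℕ) → ℝ≥0∞) (hlt : ∑ i, w (f i) < 1) {C : ℝ≥0∞}
    (hC : ∀ c, PP (ν * (1 - ∑ i, w (f i))) c ≤ C) :
    PP ν n * BB w n (fun z => F (fun i => z (f i))) ≤ EE (fun i => ν * w (f i)) F * C := by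
  classical
  rw [← EE_ball hw hw1 hν.le, EE_equiv (splitE f hf), EE_sum]
  simp only [splitE_symm, splitE_inl, Sum.elim_inl]
  unfold EE
  rw [← ENNReal.tsum_mul_right]
  refine ENNReal.tsum_le_tsum fun x => ?_
  rw [mul_assoc]
  gcongr
  have hsum : ∑ i : {i // i ∉ Set.range f}, ν * w (splitE f hf (Sum.inr i))
      = ν * (1 - ∑ i, w (f i)) := by
    have h := (splitE f hf).sum_comp w
    rw [hw1, Fintype.sum_sum_type] at h
    rw [← Finset.mul_sum]
    simp only [splitE_inl] at h
    congr 1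
    linarith
  have h2 : EE (fun i : {i // i ∉ Set.range f} => ν * w (splitE f hf (Sum.inr i)))
      (fun y => eI (∑ i, (Sum.elim x y : α ⊕ {i // i ∉ Set.range f} → ℕ) ((splitE f hf).symm i) = n)
        * F (fun i => x i)) ≤ F x * C := by
    simp_rw [mul_comm _ (F (fun i => x i))]
    rw [EE_zero_mul]
    gcongr
    have e : ∀ y : {i // i ∉ Set.range f} → ℕ,
        ∑ i, (Sum.elim x y : α ⊕ {i // i ∉ Set.range f} → ℕ) ((splitE f hf).symm i)
          = ∑ i, x i + ∑ i, y i := by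
      intro y
      rw [(splitE f hf).symm.sum_comp, Fintype.sum_sum_type]
      rfl
    simp_rw [e]
    by_cases hx : ∑ i, x i ≤ n
    · have e2 : ∀ y : {i // i ∉ Set.range f} → ℕ, (∑ i, x i + ∑ i, y i = n) ↔
          (∑ i, y i = n - ∑ i, x i) := fun y => by omega
      simp_rw [e2]
      rw [EE_total]
      · rw [hsum]; exact hC _
      · intro i; exact mul_nonneg hν.le (hw _)
      · rw [hsum]; exact mul_pos hν (by linarith)
    · refine le_trans (le_of_eq ?_) (zero_le (a := C))
      unfold EE
      rw [ENNReal.tsum_eq_zero]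
      intro y
      dsimp only
      rw [eI_false (by omega), mul_zero]
  exact h2

/-! depoissonization -/

lemma BB_monotone {ι : Type} [Fintype ι] [DecidableEq ι] {w : ι → ℝ}
    (hw : ∑ i, ENNReal.ofReal (w i) = 1) {F : (ι → ℕ) → ℝ≥0∞} (hF : Monotone F) :
    Monotone (fun n => BB w n F) := by
  refine monotone_nat_of_le_succ fun n => ?_
  rw [BB_succ]
  calc BB w n F = ∑ i, ENNReal.ofReal (w i) * BB w n F := by rw [← Finset.sum_mul, hw, one_mul]
    _ ≤ _ := Finset.sum_le_sum fun i _ => by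
        gcongr
        exact BB_mono_fun _ _ (fun z => hF (le_add_of_nonneg_right (zero_le)))

lemma BB_antitone {ι : Type} [Fintype ι] [DecidableEq ι] {w : ι → ℝ}
    (hw : ∑ i, ENNReal.ofReal (w i) = 1) {F : (ι → ℕ) → ℝ≥0∞} (hF : Antitone F) :
    Antitone (fun n => BB w n F) := by
  refine antitone_nat_of_succ_le fun n => ?_
  rw [BB_succ]
  calc _ ≤ ∑ i, ENNReal.ofReal (w i) * BB w n F := Finset.sum_le_sum fun i _ => by
        gcongr
        exact BB_mono_fun _ _ (fun z => hF (le_add_of_nonneg_right (zero_le)))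
    _ = _ := by rw [← Finset.sum_mul, hw, one_mul]

lemma depois {b : ℕ → ℝ≥0∞} {ν τ : ℝ} (hν : 0 ≤ ν) (n : ℕ)
    (hb : ∀ j, b j ≤ b n ∨ 0 ≤ τ * ((j : ℝ) - n)) :
    ∑' j, PP ν j * b j ≤ b n + ENNReal.ofReal (Real.exp (ν * (Real.exp τ - 1) - τ * n)) *
      ∑' j, PP (ν * Real.exp τ) j * b j := by
  have h1 : ∑' j, PP ν j * b n = b n := by rw [ENNReal.tsum_mul_right, PP_sum hν, one_mul]
  rw [← ENNReal.tsum_mul_left]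
  nth_rewrite 1 [← h1]
  rw [← ENNReal.tsum_add]
  refine ENNReal.tsum_le_tsum fun j => ?_
  have ht := PP_tilt hν (Real.exp_pos τ) j
  have e : ENNReal.ofReal (Real.exp (ν * (Real.exp τ - 1) - τ * n)) * (PP (ν * Real.exp τ) j * b j)
     = PP ν j * (ENNReal.ofReal (Real.exp (τ * (j - n))) * b j) := by
    rw [sub_eq_add_neg, Real.exp_add, ENNReal.ofReal_mul (by positivity)]
    calc _ = (ENNReal.ofReal (Real.exp (ν * (Real.exp τ - 1))) * PP (ν * Real.exp τ) j) *
          ENNReal.ofReal (Real.exp (-(τ * n))) * b j := by ring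
      _ = _ := by
        rw [← ht, mul_assoc (PP ν j), ← ENNReal.ofReal_mul (by positivity), ← Real.exp_nat_mul,
          ← Real.exp_add, mul_assoc]
        congr 4
        ring
  rw [e, ← mul_add]
  gcongr
  rcases hb j with h | h
  · exact h.trans le_self_add
  · refine le_trans ?_ le_add_self
    refine le_mul_of_one_le_left zero_le ?_
    rw [← ENNReal.ofReal_one]
    exact ENNReal.ofReal_le_ofReal (Real.one_le_exp h)

lemma fkg_anti {α : Type} [DistribLattice α] [Fintype α] {μ f g : α → ℝ}
    (hμ₀ : 0 ≤ μ) (hf₀ : 0 ≤ f) (hg₀ : 0 ≤ g) (hf : Antitone f) (hg : Antitone g)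
    (hμ : ∀ a b, μ a * μ b ≤ μ (a ⊓ b) * μ (a ⊔ b)) :
    (∑ a, μ a * f a) * ∑ a, μ a * g a ≤ (∑ a, μ a) * ∑ a, μ a * (f a * g a) := by
  have h := fkg (α := αᵒᵈ) (μ := fun a => μ (OrderDual.ofDual a))
    (f := fun a => f (OrderDual.ofDual a)) (g := fun a => g (OrderDual.ofDual a))
    (fun a => hμ₀ _) (fun a => hf₀ _) (fun a => hg₀ _) (fun a b hab => hf hab)
    (fun a b hab => hg hab) (fun a b => by
      rw [mul_comm (μ _) (μ (OrderDual.ofDual (a ⊔ b)))]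
      exact hμ _ _)
  exact h

lemma fkg_balls {n k : ℕ} {w : Fin k → ℝ} (hw : ∀ i, 0 ≤ w i) (hw1 : ∑ i, w i = 1)
    {f g : (Fin n → Fin k) → ℝ} (hf₀ : 0 ≤ f) (hg₀ : 0 ≤ g) (hf : Antitone f) (hg : Antitone g) :
    (∑ T, (∏ j, w (T j)) * f T) * ∑ T, (∏ j, w (T j)) * g T
      ≤ ∑ T, (∏ j, w (T j)) * (f T * g T) := by
  have h := fkg_anti (μ := fun T : Fin n → Fin k => ∏ j, w (T j))
    (fun T => Finset.prod_nonneg fun j _ => hw _) hf₀ hg₀ hf hg (fun a b => by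
      rw [← Finset.prod_mul_distrib, ← Finset.prod_mul_distrib]
      refine le_of_eq (Finset.prod_congr rfl fun j _ => ?_)
      rcases le_total (a j) (b j) with h | h
      · simp [h]
      · simp [h, mul_comm])
  have h1 : ∑ T : Fin n → Fin k, ∏ j, w (T j) = 1 := by
    have := Finset.prod_univ_sum (fun _ : Fin n => (Finset.univ : Finset (Fin k))) (fun _ i => w i)
    rw [Fintype.piFinset_univ] at this
    rw [← this, hw1]; simp
  rwa [h1, one_mul] at h

/-! ### Part 6: the event TREE -/

/-- bin weights -/
noncomputable def wk (k : ℕ) (p : ℝ) (i : ℕ) : ℝ := p * (1 - p) ^ i / (1 - (1 - p) ^ k)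

lemma wk_den_pos {k : ℕ} {p : ℝ} (hk : 1 ≤ k) (hp : 0 < p) (hp1 : p < 1) :
    0 < 1 - (1 - p) ^ k := by
  have : (1 - p) ^ k < 1 := pow_lt_one₀ (by linarith) (by linarith) (by omega)
  linarith

lemma wk_pos {k : ℕ} {p : ℝ} (hk : 1 ≤ k) (hp : 0 < p) (hp1 : p < 1) (i : ℕ) : 0 < wk k p i := by
  have := wk_den_pos hk hp hp1
  have h2 : 0 < 1 - p := by linarith
  unfold wk; positivity

lemma wk_sum_range {k : ℕ} {p : ℝ} (t : ℕ) :
    ∑ i ∈ range t, wk k p i = (1 - (1 - p) ^ t) / (1 - (1 - p) ^ k) := by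
  unfold wk
  rw [← Finset.sum_div]
  congr 1
  rw [← Finset.mul_sum]
  have := geom_sum_mul (1 - p) t
  linear_combination -this

lemma wk_sum {k : ℕ} {p : ℝ} (hk : 1 ≤ k) (hp : 0 < p) (hp1 : p < 1) :
    ∑ i : Fin k, wk k p i = 1 := by
  rw [Fin.sum_univ_eq_sum_range (fun i => wk k p i), wk_sum_range,
    div_self (wk_den_pos hk hp hp1).ne']

lemma cnt_sum {ι α : Type} [DecidableEq ι] {n : ℕ} (T : Fin n → ι) (A : Finset α) (f : α → ι)
    (hf : Function.Injective f) :
    ∑ i ∈ A, cnt T (f i) = (Finset.univ.filter (fun j => ∃ i ∈ A, f i = T j)).card := by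
  classical
  unfold cnt
  rw [← Finset.card_biUnion]
  · congr 1
    ext j
    simp only [mem_biUnion, mem_filter, mem_univ, true_and]
    constructor
    · rintro ⟨i, h1, h2⟩; exact ⟨i, h1, h2.symm⟩
    · rintro ⟨i, h1, h2⟩; exact ⟨i, h1, h2.symm⟩
  · intro i _ i' _ hii
    rw [Function.onFun, Finset.disjoint_left]
    intro j h1 h2
    simp only [mem_filter, mem_univ, true_and] at h1 h2
    exact hii (hf (h1.symm.trans h2))

/-- the first bins -/
def fl {m k : ℕ} (h : m ≤ k) (i : Fin m) : Fin k := Fin.castLE h i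
/-- the last bins, in reversed order -/
def fr {m k : ℕ} (h : m ≤ k) (i : Fin m) : Fin k := Fin.rev (Fin.castLE h i)

lemma fl_inj {m k : ℕ} (h : m ≤ k) : Function.Injective (fl h) := Fin.castLE_injective h
lemma fr_inj {m k : ℕ} (h : m ≤ k) : Function.Injective (fr h) :=
  Fin.rev_injective.comp (Fin.castLE_injective h)
lemma fl_val {m k : ℕ} (h : m ≤ k) (i : Fin m) : (fl h i : ℕ) = i := rfl
lemma fr_val {m k : ℕ} (h : m ≤ k) (i : Fin m) : (fr h i : ℕ) = k - 1 - i := by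
  simp [fr, Fin.val_rev]; omega

lemma cnt_sum_fl {m k n : ℕ} (h : m ≤ k) (T : Fin n → Fin k) {t : ℕ} (ht : t ≤ m) :
    ∑ i ∈ Finset.univ.filter (fun i : Fin m => (i : ℕ) < t), cnt T (fl h i)
      = (Finset.univ.filter (fun j => (T j : ℕ) < t)).card := by
  rw [cnt_sum T _ _ (fl_inj h)]
  congr 1
  ext j
  simp only [mem_filter, mem_univ, true_and]
  constructor
  · rintro ⟨i, h1, h2⟩
    rw [← h2, fl_val]; exact h1
  · intro h1
    exact ⟨⟨T j, by omega⟩, h1, Fin.ext (fl_val h _)⟩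

lemma cnt_sum_fr {m k n : ℕ} (h : m ≤ k) (T : Fin n → Fin k) {t : ℕ} (ht : t ≤ m) :
    ∑ i ∈ Finset.univ.filter (fun i : Fin m => (i : ℕ) < t), cnt T (fr h i)
      = (Finset.univ.filter (fun j => k - t ≤ (T j : ℕ))).card := by
  rw [cnt_sum T _ _ (fr_inj h)]
  congr 1
  ext j
  have hT := (T j).2
  simp only [mem_filter, mem_univ, true_and]
  constructor
  · rintro ⟨i, h1, h2⟩
    rw [← h2, fr_val]; omega
  · intro h1
    refine ⟨⟨k - 1 - T j, by omega⟩, by simp only; omega, Fin.ext ?_⟩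
    rw [fr_val]; simp only; omega

lemma card_compl_lt {n k : ℕ} (T : Fin n → Fin k) (t : ℕ) :
    (Finset.univ.filter (fun j => (T j : ℕ) < t)).card
      + (Finset.univ.filter (fun j => t ≤ (T j : ℕ))).card = n := by
  have := Finset.card_filter_add_card_filter_not (s := (Finset.univ : Finset (Fin n)))
    (fun j => (T j : ℕ) < t)
  simpa using this

lemma leftOK_cnt {m k n : ℕ} (h : m ≤ k) (T : Fin n → Fin k) :
    leftOK m (fun i => cnt T (fl h i)) ↔ ∀ t, 1 ≤ t → t ≤ m →
      t ≤ (Finset.univ.filter (fun j => (T j : ℕ) < t)).card := by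
  unfold leftOK
  refine forall_congr' fun t => forall_congr' fun h1 => forall_congr' fun h2 => ?_
  rw [cnt_sum_fl h T h2]

lemma rightOK_cnt {m k n : ℕ} (h : m ≤ k) (T : Fin n → Fin k) :
    rightOK m (fun i => cnt T (fr h i)) ↔ ∀ t, 1 ≤ t → t ≤ m →
      (Finset.univ.filter (fun j => k - t ≤ (T j : ℕ))).card < t := by
  unfold rightOK
  refine forall_congr' fun t => forall_congr' fun h1 => forall_congr' fun h2 => ?_
  rw [cnt_sum_fr h T h2]

lemma TREE_of {m k : ℕ} (h : m ≤ k) (T : Fin (k - 1) → Fin k)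
    (h1 : leftOK m (fun i => cnt T (fl h i)))
    (h2 : rightOK (k - m) (fun i => cnt T (fr (Nat.sub_le k m) i))) : TREEevt k T := by
  rw [leftOK_cnt] at h1
  rw [rightOK_cnt] at h2
  intro t ht1 ht2
  by_cases htm : t ≤ m
  · exact h1 t ht1 htm
  · have := h2 (k - t) (by omega) (by omega)
    have h3 := card_compl_lt T t
    rw [show k - (k - t) = t by omega] at this
    omega

lemma TREE_left {m k : ℕ} (h : m ≤ k) (hm : m ≤ k - 1) (T : Fin (k - 1) → Fin k)
    (hT : TREEevt k T) : leftOK m (fun i => cnt T (fl h i)) := by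
  rw [leftOK_cnt]
  intro t h1 h2
  exact hT t h1 (by omega)

lemma TREE_right {m k : ℕ} (h : m ≤ k) (hm : m ≤ k - 1) (T : Fin (k - 1) → Fin k)
    (hT : TREEevt k T) : rightOK m (fun i => cnt T (fr h i)) := by
  rw [rightOK_cnt]
  intro t h1 h2
  have := hT (k - t) (by omega) (by omega)
  have h3 := card_compl_lt T (k - t)
  omega

lemma BB_toReal {ι : Type} [Fintype ι] [DecidableEq ι] {w : ι → ℝ} (hw : ∀ i, 0 ≤ w i) (n : ℕ)
    (P : (ι → ℕ) → Prop) :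
    BB w n (fun z => eI (P z)) = ENNReal.ofReal (∑ T : Fin n → ι, (∏ j, w (T j)) * ind (P (cnt T))) := by
  unfold BB
  rw [ENNReal.ofReal_sum_of_nonneg]
  · refine Finset.sum_congr rfl fun T _ => ?_
    rw [ENNReal.ofReal_mul (Finset.prod_nonneg fun j _ => hw _),
      ENNReal.ofReal_prod_of_nonneg (fun j _ => hw _)]
    rfl
  · intro T _
    exact mul_nonneg (Finset.prod_nonneg fun j _ => hw _) (ind_nonneg _)

lemma ind_and (P Q : Prop) : ind (P ∧ Q) = ind P * ind Q := by
  by_cases hP : P <;> by_cases hQ : Q <;> simp [ind, hP, hQ]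
lemma ind_mono {P Q : Prop} (h : P → Q) : ind P ≤ ind Q := by
  by_cases hP : P
  · have hQ := h hP
    simp [ind, hP, hQ]
  · simp only [ind, hP, if_false]
    split_ifs <;> norm_num

lemma treeProb_nonneg {k : ℕ} {p : ℝ} (hk : 1 ≤ k) (hp : 0 < p) (hp1 : p < 1) : 0 ≤ treeProb k p :=
  Finset.sum_nonneg fun T _ => mul_nonneg
    (Finset.prod_nonneg fun j _ => (wk_pos hk hp hp1 _).le) (ind_nonneg _)

theorem tree_upper {k L : ℕ} {p C : ℝ} (hk : 2 ≤ k) (hp : 0 < p) (hp1 : p < 1) (hL : 2 * L < k)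
    (hC : ∀ c, poissonP (((k - 1 : ℕ) : ℝ) * (1 - ∑ i ∈ range L, wk k p i
      - ∑ i ∈ range L, wk k p (k - 1 - i))) c ≤ C)
    (hlt : ∑ i ∈ range L, wk k p i + ∑ i ∈ range L, wk k p (k - 1 - i) < 1) :
    poissonP ((k - 1 : ℕ) : ℝ) (k - 1) * treeProb k p
      ≤ uL (fun i => ((k - 1 : ℕ) : ℝ) * wk k p i) L
        * uR (fun i => ((k - 1 : ℕ) : ℝ) * wk k p (k - 1 - i)) L * C := by
  set n := k - 1 with hn
  have hn0 : (0 : ℝ) < n := by exact_mod_cast (by omega : 0 < n)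
  have hLk : L ≤ k := by omega
  let f : Fin L ⊕ Fin L → Fin k := Sum.elim (fl hLk) (fr hLk)
  have hf : Function.Injective f := by
    refine Function.Injective.sumElim (fl_inj _) (fr_inj _) ?_
    intro a b hab
    have := congrArg Fin.val hab
    rw [fl_val, fr_val] at this
    omega
  set w : Fin k → ℝ := fun i => wk k p i with hw
  have hwp : ∀ i : ℕ, 0 < wk k p i := wk_pos (by omega) hp hp1
  have hw0 : ∀ i, 0 ≤ w i := fun i => (hwp _).le
  have hw1 : ∑ i, w i = 1 := wk_sum (by omega) hp hp1
  have hsf : ∑ i, w (f i) = ∑ i ∈ range L, wk k p i + ∑ i ∈ range L, wk k p (k - 1 - i) := by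
    rw [Fintype.sum_sum_type]
    simp only [f, Sum.elim_inl, Sum.elim_inr, hw, fl_val, fr_val]
    rw [Fin.sum_univ_eq_sum_range (fun i => wk k p i),
      Fin.sum_univ_eq_sum_range (fun i => wk k p (k - 1 - i))]
  let F : (Fin L ⊕ Fin L → ℕ) → ℝ≥0∞ := fun z =>
    eI (leftOK L (fun i => z (Sum.inl i))) * eI (rightOK L (fun i => z (Sum.inr i)))
  have hC0 : 0 ≤ C := (poissonP_nonneg (by
    refine mul_nonneg hn0.le ?_
    linarith) 0).trans (hC 0)
  have hup := BB_upper f hf hw0 hw1 hn0 n F (by rw [hsf]; exact hlt) (C := ENNReal.ofReal C)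
    (fun c => by
      unfold PP
      refine ENNReal.ofReal_le_ofReal ?_
      rw [hsf, ← sub_sub]
      exact hC c)
  have hEE : EE (fun i => (n : ℝ) * w (f i)) F
      = WL (fun i => (n : ℝ) * wk k p i) L (fun _ => 1) 0
        * WR (fun i => (n : ℝ) * wk k p (k - 1 - i)) L (fun _ => 1) 0 := by
    have := EE_sum_mul (fun i => (n : ℝ) * w (f i)) (fun z => eI (leftOK L z))
      (fun z => eI (rightOK L z))
    rw [← EE_leftOK, ← EE_rightOK]
    simp only [f, Sum.elim_inl, Sum.elim_inr, hw, fl_val, fr_val] at this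
    exact this
  rw [hEE] at hup
  have htree : ENNReal.ofReal (treeProb k p) ≤ BB w n (fun z => F (fun i => z (f i))) := by
    have e : (fun z : Fin k → ℕ => F (fun i => z (f i))) = fun z => eI (leftOK L
        (fun i => z (fl hLk i)) ∧ rightOK L (fun i => z (fr hLk i))) := by
      funext z
      rw [eI_and]
      rfl
    rw [e, BB_toReal hw0]
    refine ENNReal.ofReal_le_ofReal ?_
    refine Finset.sum_le_sum fun T _ => ?_
    refine mul_le_mul_of_nonneg_left (ind_mono fun hT => ?_)
      (Finset.prod_nonneg fun j _ => hw0 _)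
    exact ⟨TREE_left hLk (by omega) T hT, TREE_right hLk (by omega) T hT⟩
  have hfin := (mul_le_mul_right htree (PP n n)).trans hup
  have hf1 := WL_ne_top (r := fun i => (n : ℝ) * wk k p i) (L := L)
    (fun i _ => mul_nonneg hn0.le (hwp _).le) 0
  have hf2 := WR_ne_top (r := fun i => (n : ℝ) * wk k p (k - 1 - i)) (L := L)
    (fun i _ => mul_nonneg hn0.le (hwp _).le) 0
  have := ENNReal.toReal_mono (ENNReal.mul_ne_top (ENNReal.mul_ne_top hf1 hf2)
    ENNReal.ofReal_ne_top) hfin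
  rw [ENNReal.toReal_mul, ENNReal.toReal_mul, ENNReal.toReal_mul, PP,
    ENNReal.toReal_ofReal (poissonP_nonneg hn0.le _),
    ENNReal.toReal_ofReal (treeProb_nonneg (by omega) hp hp1), ENNReal.toReal_ofReal hC0] at this
  exact this

theorem tree_lower {k m : ℕ} {p : ℝ} (hk : 2 ≤ k) (hp : 0 < p) (hp1 : p < 1) (hm : m ≤ k) :
    ∃ bl br : ℝ, 0 ≤ bl ∧ 0 ≤ br ∧ bl * br ≤ treeProb k p ∧
      (∀ ν τ : ℝ, 0 ≤ ν → 0 ≤ τ → uL (fun i => ν * wk k p i) m ≤ bl +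
        Real.exp (ν * (Real.exp τ - 1) - τ * (k - 1 : ℕ)) *
          uL (fun i => ν * Real.exp τ * wk k p i) m) ∧
      (∀ ν τ : ℝ, 0 ≤ ν → τ ≤ 0 → uR (fun i => ν * wk k p (k - 1 - i)) (k - m) ≤ br +
        Real.exp (ν * (Real.exp τ - 1) - τ * (k - 1 : ℕ)) *
          uR (fun i => ν * Real.exp τ * wk k p (k - 1 - i)) (k - m)) := by
  set n := k - 1 with hn
  have hn0 : (0 : ℝ) < n := by exact_mod_cast (by omega : 0 < n)
  set w : Fin k → ℝ := fun i => wk k p i with hw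
  have hwp : ∀ i : ℕ, 0 < wk k p i := wk_pos (by omega) hp hp1
  have hw0 : ∀ i, 0 ≤ w i := fun i => (hwp _).le
  have hw1 : ∑ i, w i = 1 := wk_sum (by omega) hp hp1
  have hw1' : ∑ i, ENNReal.ofReal (w i) = 1 := by
    rw [← ENNReal.ofReal_sum_of_nonneg (fun i _ => hw0 i), hw1, ENNReal.ofReal_one]
  have hs : k - m ≤ k := Nat.sub_le k m
  have hprod : ∀ T : Fin n → Fin k, 0 ≤ ∏ j, w (T j) := fun T =>
    Finset.prod_nonneg fun j _ => hw0 _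
  refine ⟨∑ T : Fin n → Fin k, (∏ j, w (T j)) * ind (leftOK m (fun i => cnt T (fl hm i))),
    ∑ T : Fin n → Fin k, (∏ j, w (T j)) * ind (rightOK (k - m) (fun i => cnt T (fr hs i))),
    Finset.sum_nonneg fun T _ => mul_nonneg (hprod T) (ind_nonneg _),
    Finset.sum_nonneg fun T _ => mul_nonneg (hprod T) (ind_nonneg _), ?_, ?_, ?_⟩
  · refine (fkg_balls hw0 hw1 (fun T => ind_nonneg _) (fun T => ind_nonneg _) ?_ ?_).trans ?_
    · intro T T' hTT
      refine ind_mono fun H => ?_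
      rw [leftOK_cnt] at H ⊢
      intro t h1 h2
      refine (H t h1 h2).trans (Finset.card_le_card fun j => ?_)
      simp only [mem_filter, mem_univ, true_and]
      have : (T j : ℕ) ≤ T' j := hTT j
      omega
    · intro T T' hTT
      refine ind_mono fun H => ?_
      rw [rightOK_cnt] at H ⊢
      intro t h1 h2
      refine lt_of_le_of_lt (Finset.card_le_card fun j => ?_) (H t h1 h2)
      simp only [mem_filter, mem_univ, true_and]
      have : (T j : ℕ) ≤ T' j := hTT j
      omega
    · refine Finset.sum_le_sum fun T _ => ?_
      refine mul_le_mul_of_nonneg_left ?_ (hprod T)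
      rw [← ind_and]
      exact ind_mono fun H => TREE_of hm T H.1 H.2
  · intro ν τ hν hτ
    set F : (Fin k → ℕ) → ℝ≥0∞ := fun z => eI (leftOK m (fun i => z (fl hm i))) with hF
    have hFm : Monotone F := by
      intro z z' hz
      refine eI_mono fun H t h1 h2 => (H t h1 h2).trans ?_
      exact Finset.sum_le_sum fun i _ => hz _
    have hΦ : ∀ ν : ℝ, 0 ≤ ν → ∑' j, PP ν j * BB w j F
        = WL (fun i => ν * wk k p i) m (fun _ => 1) 0 := by
      intro ν hν
      rw [← EE_poissonization hw0 hw1 hν, ← EE_leftOK]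
      exact EE_marginal (fl hm) (fl_inj hm) (fun i => mul_nonneg hν (hw0 i))
        (fun z => eI (leftOK m z))
    have h := depois (b := fun j => BB w j F) (τ := τ) hν n (fun j => by
      rcases le_total j n with h | h
      · left; exact BB_monotone hw1' hFm h
      · right
        have : (n : ℝ) ≤ j := by exact_mod_cast h
        exact mul_nonneg hτ (by linarith))
    rw [hΦ _ hν, hΦ _ (by positivity), hF, BB_toReal hw0] at h
    have hf1 := WL_ne_top (r := fun i => ν * Real.exp τ * wk k p i) (L := m)
      (fun i _ => mul_nonneg (by positivity) (hwp _).le) 0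
    have h3 := ENNReal.toReal_mono (ENNReal.add_ne_top.2 ⟨ENNReal.ofReal_ne_top,
      ENNReal.mul_ne_top ENNReal.ofReal_ne_top hf1⟩) h
    rwa [ENNReal.toReal_add ENNReal.ofReal_ne_top (ENNReal.mul_ne_top ENNReal.ofReal_ne_top hf1),
      ENNReal.toReal_mul, ENNReal.toReal_ofReal (Real.exp_pos _).le, ENNReal.toReal_ofReal
      (Finset.sum_nonneg fun T _ => mul_nonneg (hprod T) (ind_nonneg _))] at h3
  · intro ν τ hν hτ
    set F : (Fin k → ℕ) → ℝ≥0∞ := fun z => eI (rightOK (k - m) (fun i => z (fr hs i))) with hF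
    have hFm : Antitone F := by
      intro z z' hz
      refine eI_mono fun H t h1 h2 => lt_of_le_of_lt ?_ (H t h1 h2)
      exact Finset.sum_le_sum fun i _ => hz _
    have hΦ : ∀ ν : ℝ, 0 ≤ ν → ∑' j, PP ν j * BB w j F
        = WR (fun i => ν * wk k p (k - 1 - i)) (k - m) (fun _ => 1) 0 := by
      intro ν hν
      rw [← EE_poissonization hw0 hw1 hν, ← EE_rightOK]
      have := EE_marginal (fr hs) (fr_inj hs) (fun i => mul_nonneg hν (hw0 i))
        (fun z => eI (rightOK (k - m) z))
      simp only [hw, fr_val] at this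
      exact this
    have h := depois (b := fun j => BB w j F) (τ := τ) hν n (fun j => by
      rcases le_total j n with h | h
      · right
        have : (j : ℝ) ≤ n := by exact_mod_cast h
        nlinarith
      · left; exact BB_antitone hw1' hFm h)
    rw [hΦ _ hν, hΦ _ (by positivity), hF, BB_toReal hw0] at h
    have hf1 := WR_ne_top (r := fun i => ν * Real.exp τ * wk k p (k - 1 - i)) (L := k - m)
      (fun i _ => mul_nonneg (by positivity) (hwp _).le) 0
    have h3 := ENNReal.toReal_mono (ENNReal.add_ne_top.2 ⟨ENNReal.ofReal_ne_top,
      ENNReal.mul_ne_top ENNReal.ofReal_ne_top hf1⟩) h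
    rwa [ENNReal.toReal_add ENNReal.ofReal_ne_top (ENNReal.mul_ne_top ENNReal.ofReal_ne_top hf1),
      ENNReal.toReal_mul, ENNReal.toReal_ofReal (Real.exp_pos _).le, ENNReal.toReal_ofReal
      (Finset.sum_nonneg fun T _ => mul_nonneg (hprod T) (ind_nonneg _))] at h3

/-! ### Part 7: Poisson mode, survival probability of the left walk -/

lemma poissonP_step_down {μ : ℝ} (hμ : 0 < μ) {c : ℕ} (h : μ ≤ c + 1) :
    poissonP μ (c + 1) ≤ poissonP μ c := by
  have h1 := poissonP_succ μ c
  have h2 := poissonP_nonneg hμ.le c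
  have h3 := poissonP_nonneg hμ.le (c + 1)
  have hc : (0 : ℝ) < (c : ℝ) + 1 := by positivity
  by_contra hcon
  push Not at hcon
  nlinarith

lemma poissonP_step_up {μ : ℝ} (hμ : 0 < μ) {c : ℕ} (h : (c : ℝ) + 1 ≤ μ) :
    poissonP μ c ≤ poissonP μ (c + 1) := by
  have h1 := poissonP_succ μ c
  have h2 := poissonP_nonneg hμ.le c
  have h3 := poissonP_nonneg hμ.le (c + 1)
  by_contra hcon
  push Not at hcon
  nlinarith

lemma poissonP_mode {μ : ℝ} {M : ℕ} (hM : 1 ≤ M) (h1 : (M : ℝ) ≤ μ) (h2 : μ ≤ M + 1) (c : ℕ) :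
    poissonP μ c ≤ poissonP μ M := by
  have hμ : 0 < μ := lt_of_lt_of_le (by exact_mod_cast hM) h1
  rcases le_total M c with h | h
  · induction c, h using Nat.le_induction with
    | base => exact le_rfl
    | succ c hc ih =>
      refine (poissonP_step_down hμ ?_).trans ih
      have : (M : ℝ) ≤ c := by exact_mod_cast hc
      linarith
  · induction h using Nat.decreasingInduction with
    | self => exact le_rfl
    | of_succ c hc ih =>
      refine (poissonP_step_up hμ ?_).trans ih
      have : ((c + 1 : ℕ) : ℝ) ≤ M := by exact_mod_cast hc
      push_cast at this
      linarith

lemma poissonP_self_max {μ : ℝ} {M : ℕ} (hM : 1 ≤ M) (hμ : 0 < μ) :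
    poissonP μ M ≤ poissonP M M := by
  have hM' : (0 : ℝ) < M := by exact_mod_cast hM
  unfold poissonP
  gcongr ?_ / _
  have h1 : μ / M ≤ Real.exp (μ / M - 1) := by
    have := Real.add_one_le_exp (μ / M - 1); linarith
  have h2 : (μ / M) ^ M ≤ Real.exp (μ - M) := by
    refine (pow_le_pow_left₀ (by positivity) h1 M).trans (le_of_eq ?_)
    rw [← Real.exp_nat_mul]; congr 1; field_simp
  rw [div_pow, div_le_iff₀ (by positivity)] at h2
  calc Real.exp (-μ) * μ ^ M ≤ Real.exp (-μ) * (Real.exp (μ - M) * M ^ M) := by gcongr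
    _ = _ := by rw [← mul_assoc, ← Real.exp_add]; congr 2; ring

lemma poissonP_self_ratio {c : ℕ} (hc : 1 ≤ c) :
    poissonP c c ≤ Real.exp (1 / (2 * c)) * poissonP ((c + 1 : ℕ) : ℝ) (c + 1) := by
  have hc' : (0 : ℝ) < c := by exact_mod_cast hc
  unfold poissonP
  rw [Nat.factorial_succ, pow_succ]
  push_cast
  have e : Real.exp (1 / (2 * (c : ℝ))) * (Real.exp (-((c : ℝ) + 1)) * (((c : ℝ) + 1) ^ c *
      ((c : ℝ) + 1)) / (((c : ℝ) + 1) * c.factorial))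
      = Real.exp (1 / (2 * (c : ℝ))) * Real.exp (-((c : ℝ) + 1)) * ((c : ℝ) + 1) ^ c
        / c.factorial := by
    field_simp
  rw [e]
  gcongr ?_ / _
  have h1 : Real.exp (1 - 1 / (2 * (c : ℝ))) ≤ (1 + 1 / (c : ℝ)) ^ c := by
    have hl : 1 / (c : ℝ) - (1 / (c : ℝ)) ^ 2 / 2 ≤ Real.log (1 + 1 / c) := by
      have h2 := Real.le_log_one_add_of_nonneg (x := 1 / (c : ℝ)) (by positivity)
      refine le_trans ?_ h2
      rw [le_div_iff₀ (by positivity)]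
      have hx : 0 < 1 / (c : ℝ) := by positivity
      nlinarith [pow_pos hx 3]
    rw [← Real.rpow_natCast, Real.rpow_def_of_pos (by positivity)]
    refine Real.exp_le_exp.2 ?_
    have : 1 - 1 / (2 * (c : ℝ)) = (1 / (c : ℝ) - (1 / (c : ℝ)) ^ 2 / 2) * c := by
      field_simp
    rw [this]
    gcongr
  have h3 : ((c : ℝ) + 1) ^ c = (1 + 1 / (c : ℝ)) ^ c * (c : ℝ) ^ c := by
    rw [← mul_pow]; congr 1; field_simp
  rw [h3]
  calc Real.exp (-(c : ℝ)) * (c : ℝ) ^ c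
      = Real.exp (1 / (2 * (c : ℝ))) * Real.exp (-((c : ℝ) + 1)) *
        (Real.exp (1 - 1 / (2 * (c : ℝ))) * (c : ℝ) ^ c) := by
        rw [← mul_assoc, ← Real.exp_add, ← Real.exp_add]; congr 2; ring
    _ ≤ _ := by gcongr

lemma poissonP_sup {μ : ℝ} {M n : ℕ} (hM : 1 ≤ M) (h1 : (M : ℝ) ≤ μ) (h2 : μ ≤ M + 1) (hMn : M ≤ n)
    (c : ℕ) : poissonP μ c ≤ Real.exp (((n : ℝ) - M) / (2 * M)) * poissonP n n := by
  have hM' : (0 : ℝ) < M := by exact_mod_cast hM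
  have hμ : 0 < μ := hM'.trans_le h1
  refine (poissonP_mode hM h1 h2 c).trans ((poissonP_self_max hM hμ).trans ?_)
  clear h1 h2
  induction n, hMn using Nat.le_induction with
  | base => simp
  | succ n hn ih =>
    refine ih.trans ?_
    have hn' : (M : ℝ) ≤ n := by exact_mod_cast hn
    refine (mul_le_mul_of_nonneg_left (poissonP_self_ratio (by omega : 1 ≤ n))
      (Real.exp_pos _).le).trans ?_
    rw [← mul_assoc, ← Real.exp_add]
    refine mul_le_mul_of_nonneg_right (Real.exp_le_exp.2 ?_) (poissonP_nonneg (by positivity) _)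
    push_cast
    have : 1 / (2 * (n : ℝ)) ≤ 1 / (2 * M) := by gcongr
    calc _ ≤ ((n : ℝ) - M) / (2 * M) + 1 / (2 * M) := by linarith
      _ = _ := by rw [← add_div]; congr 1; ring

lemma exp_neg_le_quad {u : ℝ} (hu : 0 ≤ u) : Real.exp (-u) ≤ 1 - u + u ^ 2 / 2 := by
  have h1 := Real.quadratic_le_exp_of_nonneg hu
  rw [Real.exp_neg, inv_le_comm₀ (Real.exp_pos _) (by nlinarith [sq_nonneg (u - 1)])]
  refine le_trans ?_ h1
  rw [inv_le_iff_one_le_mul₀ (by nlinarith [sq_nonneg (u - 1)])]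
  nlinarith [sq_nonneg (u ^ 2)]

lemma left_root {lam : ℝ} (hl : 1 < lam) : ∃ y : ℝ, 0 < y ∧ y < 1 ∧
    1 - y = Real.exp (-(lam * y)) ∧ (lam - 1) / lam ≤ lam * y := by
  set y0 := 2 * (lam - 1) / lam ^ 2 with hy0
  have hl0 : 0 < lam := by linarith
  have hy0p : 0 < y0 := by
    have : 0 < lam - 1 := by linarith
    rw [hy0]; positivity
  have hy01 : y0 ≤ 1 := by
    rw [hy0, div_le_one (by positivity)]; nlinarith [sq_nonneg (lam - 1)]
  have hcont : ContinuousOn (fun y : ℝ => 1 - y - Real.exp (-(lam * y))) (Set.Icc y0 1) := by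
    fun_prop
  have hmem : (0 : ℝ) ∈ Set.Icc (1 - 1 - Real.exp (-(lam * 1))) (1 - y0 - Real.exp (-(lam * y0))) := by
    constructor
    · have := Real.exp_pos (-(lam * 1)); linarith
    · have h := exp_neg_le_quad (u := lam * y0) (by positivity)
      have e : lam ^ 2 * y0 = 2 * (lam - 1) := by rw [hy0]; field_simp
      nlinarith
  obtain ⟨y, ⟨hy1, hy2⟩, hy⟩ := intermediate_value_Icc' hy01 hcont hmem
  have hye : 1 - y = Real.exp (-(lam * y)) := by linarith
  refine ⟨y, by linarith, ?_, hye, ?_⟩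
  · have := Real.exp_pos (-(lam * y)); linarith
  · have h1 : lam * y0 ≤ lam * y := by gcongr
    refine le_trans ?_ h1
    have : lam * y0 = 2 * ((lam - 1) / lam) := by rw [hy0]; field_simp
    rw [this]
    have : 0 ≤ (lam - 1) / lam := div_nonneg (by linarith) hl0.le
    linarith

lemma uL_ge_sy {lam y s : ℝ} (hl : 1 < lam) (hy : 0 < y) (hy1 : y < 1)
    (hye : 1 - y = Real.exp (-(lam * y))) (hs : 0 ≤ s) (hs1 : s ≤ 1) (M : ℕ) :
    s * y ≤ uL (fun _ => 1 + s * (lam - 1)) M := by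
  have hsy : s * y < 1 := by nlinarith
  have hr : 0 ≤ 1 + s * (lam - 1) := by
    have : 0 ≤ s * (lam - 1) := mul_nonneg hs (by linarith)
    linarith
  have hlog : Real.log (1 - y) = -(lam * y) := by rw [hye, Real.log_exp]
  have key : 0 ≤ (1 + s * (lam - 1)) * (1 - (1 - s * y)) + Real.log (1 - s * y) := by
    have hA := Real.hasSum_pow_div_log_of_abs_lt_one (x := s * y)
      (by rw [abs_of_nonneg (by positivity)]; exact hsy)
    have hB := Real.hasSum_pow_div_log_of_abs_lt_one (x := y)
      (by rw [abs_of_nonneg hy.le]; exact hy1)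
    have hC := (hB.mul_left (s ^ 2)).add (hasSum_ite_eq (0 : ℕ) ((s - s ^ 2) * y))
    have := hasSum_le (fun n => ?_) hA hC
    · rw [hlog] at this; linarith
    · rcases Nat.eq_zero_or_pos n with rfl | hn
      · simp; apply le_of_eq; ring
      · rw [if_neg (by omega), add_zero, mul_pow, mul_div_assoc]
        have : s ^ (n + 1) ≤ s ^ 2 := pow_le_pow_of_le_one hs hs1 (by omega)
        gcongr
  have hd := doob_left (a := 1 - s * y) (by linarith) M (r := fun _ => 1 + s * (lam - 1))
    (fun _ _ => hr) le_rfl (fun t _ => by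
      rw [neg_zero]
      exact Finset.sum_nonneg fun i _ => key) 0
  have hf := WL_ne_top (r := fun _ => 1 + s * (lam - 1)) (L := M) (fun _ _ => hr) 0
  have h2 := ENNReal.toReal_mono (ENNReal.add_ne_top.2 ⟨hf, ENNReal.ofReal_ne_top⟩) hd
  rw [ENNReal.toReal_add hf ENNReal.ofReal_ne_top, ENNReal.toReal_one,
    ENNReal.toReal_ofReal (by
      rw [Real.exp_zero, one_mul, zero_add, pow_one]; linarith)] at h2
  rw [Real.exp_zero, one_mul, zero_add, pow_one] at h2
  unfold uL
  linarith

lemma uL_ge_y {lam y : ℝ} (hl : 1 < lam) (hy : 0 < y) (hy1 : y < 1)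
    (hye : 1 - y = Real.exp (-(lam * y))) (M : ℕ) : y ≤ uL (fun _ => lam) M := by
  have := uL_ge_sy hl hy hy1 hye zero_le_one le_rfl M
  simpa using this

lemma uL_le_y {lam y : ℝ} (hl : 1 < lam) (hy : 0 < y) (hy1 : y < 1)
    (hye : 1 - y = Real.exp (-(lam * y))) (hy2 : (lam - 1) / lam ≤ lam * y) (L : ℕ) :
    uL (fun _ => lam) L * (1 - Real.exp (-(L * ((lam - 1) ^ 2 / (2 * lam))))) ≤ y := by
  have hl0 : 0 < lam := by linarith
  have hx : 0 < 1 - y := by linarith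
  set θ := (lam - 1) / lam with hθ
  have hθ0 : 0 ≤ θ := div_nonneg (by linarith) hl0.le
  set a := Real.exp (-θ) with ha
  have ha0 : 0 < a := Real.exp_pos _
  have ha1 : a ≤ 1 := by rw [ha]; exact Real.exp_le_one_iff.2 (by linarith)
  have hxa : 1 - y ≤ a := by rw [hye, ha]; exact Real.exp_le_exp.2 (by linarith)
  have hex := exact_left hx hl0.le (by rw [hye]; congr 1; rw [← hye]; ring) L 0
  have hd : (lam - 1) ^ 2 / (2 * lam) ≤ lam * (1 - a) + Real.log a := by
    rw [ha, Real.log_exp]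
    have h1 := exp_neg_le_quad hθ0
    have h2 : lam * (θ - θ ^ 2 / 2) - θ = (lam - 1) ^ 2 / (2 * lam) := by
      rw [hθ]; field_simp; ring
    nlinarith
  have hstep : WL (fun _ => lam) L (fun m => ENNReal.ofReal ((1 - y) ^ (m + 1))) 0
      ≤ ENNReal.ofReal (Real.exp (-(L * ((lam - 1) ^ 2 / (2 * lam))))) *
        WL (fun _ => lam) L (fun _ => 1) 0 := by
    have h1 : WL (fun _ => lam) L (fun m => ENNReal.ofReal ((1 - y) ^ (m + 1))) 0
        ≤ WL (fun _ => lam) L (fun m => ENNReal.ofReal (a ^ (m + 1)) * 1) 0 := by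
      refine WL_mono_fun _ _ (fun m => ?_) 0
      rw [mul_one]
      exact ENNReal.ofReal_le_ofReal (pow_le_pow_left₀ hx.le hxa _)
    refine h1.trans ?_
    rw [WL_tilt ha0 L (fun _ _ => hl0.le)]
    refine mul_le_mul' (ENNReal.ofReal_le_ofReal ?_) ?_
    · rw [Finset.sum_const, card_range, nsmul_eq_mul, zero_add, pow_one]
      refine (mul_le_of_le_one_left (Real.exp_pos _).le ha1).trans (Real.exp_le_exp.2 ?_)
      rw [neg_le_neg_iff]
      gcongr
    · refine WL_mono_rate L (fun i _ => by positivity) (fun i _ => ?_) monotone_const 0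
      exact mul_le_of_le_one_right hl0.le ha1
  have hex2 := hex.trans (add_le_add_right hstep 1)
  have hf := WL_ne_top (r := fun _ => lam) (L := L) (fun _ _ => hl0.le) 0
  have h3 := ENNReal.toReal_mono (ENNReal.add_ne_top.2 ⟨ENNReal.one_ne_top,
    ENNReal.mul_ne_top ENNReal.ofReal_ne_top hf⟩) hex2
  rw [ENNReal.toReal_add hf ENNReal.ofReal_ne_top, ENNReal.toReal_add ENNReal.one_ne_top
    (ENNReal.mul_ne_top ENNReal.ofReal_ne_top hf), ENNReal.toReal_mul, ENNReal.toReal_one,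
    ENNReal.toReal_ofReal (Real.exp_pos _).le, ENNReal.toReal_ofReal (by positivity),
    zero_add, pow_one] at h3
  unfold uL
  linarith

/-! ### Part 8: finite estimates on the weights -/

lemma one_sub_pow_ge {x : ℝ} (hx1 : x ≤ 1) (k : ℕ) :
    1 - k * x + k * (k - 1) / 2 * x ^ 2 - k * (k - 1) * (k - 2) / 6 * x ^ 3 ≤ (1 - x) ^ k := by
  induction k with
  | zero => simp
  | succ k ih =>
    have h := mul_le_mul_of_nonneg_right ih (by linarith : 0 ≤ 1 - x)
    rw [pow_succ]
    refine le_trans ?_ h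
    have h3 : (0 : ℝ) ≤ k * (k - 1) * (k - 2) := by
      rcases k with _ | _ | k
      · simp
      · simp
      · push_cast
        have : (0 : ℝ) ≤ k := k.cast_nonneg
        have h1 : (k : ℝ) + 1 + 1 - 1 = k + 1 := by ring
        have h2 : (k : ℝ) + 1 + 1 - 2 = k := by ring
        rw [h1, h2]; positivity
    have h4 : 0 ≤ k * (k - 1) * (k - 2) * x ^ 4 := mul_nonneg h3 (by positivity)
    push_cast
    nlinarith

lemma one_sub_mul_le_pow {x : ℝ} (hx1 : x ≤ 1) (i : ℕ) : 1 - i * x ≤ (1 - x) ^ i := by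
  have := one_add_mul_le_pow (a := -x) (by linarith) i
  calc 1 - i * x = 1 + i * (-x) := by ring
    _ ≤ _ := this
    _ = _ := by ring_nf

section
variable {k : ℕ} {p σ : ℝ}

lemma wk_zero_mul_sum (hk : 1 ≤ k) (hp : 0 < p) (hp1 : p < 1) :
    wk k p 0 * ∑ i ∈ range k, (1 - p) ^ i = 1 := by
  have := wk_sum_range (k := k) (p := p) k
  rw [div_self (wk_den_pos hk hp hp1).ne'] at this
  refine Eq.trans ?_ this
  rw [Finset.mul_sum]
  refine Finset.sum_congr rfl fun i _ => ?_
  unfold wk; ring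

/-- `1/λ ≤ 1 - σ/4` -/
lemma lam_bound (hp : 0 < p) (hp1 : p < 1) (hσ : 0 < σ) (hσk : σ ≤ k * p) (hσ1 : σ ≤ 1)
    (hkσ : 1000 ≤ k * σ) :
    1 ≤ ((k - 1 : ℕ) : ℝ) * wk k p 0 * (1 - σ / 4) := by
  have hkR : (1000 : ℝ) ≤ k := by nlinarith [(k.cast_nonneg : (0:ℝ) ≤ k)]
  have hk : 1 ≤ k := by
    have : (1 : ℝ) ≤ k := by linarith
    exact_mod_cast this
  have hn : ((k - 1 : ℕ) : ℝ) = k - 1 := by push_cast [Nat.cast_sub hk]; ring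
  have hk0 : (0 : ℝ) < k := by linarith
  set x := σ / k with hx
  have hx0 : 0 < x := by positivity
  have hkx : k * x = σ := by rw [hx]; field_simp
  have hxp : x ≤ p := by
    rw [hx, div_le_iff₀ hk0]; linarith
  have hS : ∑ i ∈ range k, (1 - p) ^ i ≤ ∑ i ∈ range k, (1 - x) ^ i := by
    refine Finset.sum_le_sum fun i _ => pow_le_pow_left₀ (by linarith) (by linarith) i
  have hg : (∑ i ∈ range k, (1 - x) ^ i) * x = 1 - (1 - x) ^ k := by
    have := geom_sum_mul (1 - x) k
    linear_combination -this
  have h3 := one_sub_pow_ge (x := x) (by linarith) k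
  set S := ∑ i ∈ range k, (1 - x) ^ i with hSd
  have hS2 : S * σ = k * (1 - (1 - x) ^ k) := by
    rw [← hkx, ← hg]; ring
  have hS3 : S ≤ k - (k - 1) / 2 * σ + k / 6 * σ ^ 2 := by
    refine le_of_mul_le_mul_right ?_ hσ
    rw [hS2]
    have e1 : (k : ℝ) * (k * (k - 1) / 2 * x ^ 2) = (k - 1) / 2 * σ ^ 2 := by rw [← hkx]; ring
    have e2 : (k : ℝ) * (k * (k - 1) * (k - 2) / 6 * x ^ 3) ≤ k / 6 * σ ^ 3 := by
      rw [← hkx]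
      have : (k : ℝ) * (k * (k - 1) * (k - 2) / 6 * x ^ 3) = ((k - 1) * (k - 2)) * (k ^ 2 / 6 * x ^ 3) := by
        ring
      rw [this]
      have : (k : ℝ) / 6 * (k * x) ^ 3 = (k * k) * (k ^ 2 / 6 * x ^ 3) := by ring
      rw [this]
      refine mul_le_mul_of_nonneg_right ?_ (by positivity)
      nlinarith
    have e3 : (k : ℝ) * (k * x) = k * σ := by rw [hkx]
    have := mul_le_mul_of_nonneg_left h3 hk0.le
    nlinarith
  have hS4 : S ≤ (k - 1) * (1 - σ / 4) := by
    have : k / 6 * σ ^ 2 ≤ k / 6 * σ := by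
      have : σ ^ 2 ≤ σ := by nlinarith
      exact mul_le_mul_of_nonneg_left this (by positivity)
    nlinarith
  have hw := wk_zero_mul_sum hk hp hp1
  have hw0 := wk_pos hk hp hp1 0
  rw [hn]
  calc 1 = wk k p 0 * ∑ i ∈ range k, (1 - p) ^ i := hw.symm
    _ ≤ wk k p 0 * ((k - 1) * (1 - σ / 4)) := by gcongr; linarith
    _ = _ := by ring

lemma wk_rev_mul {i : ℕ} (hi : i < k) : wk k p (k - 1 - i) * (1 - p) ^ i = wk k p (k - 1) := by
  unfold wk
  have : (1 - p) ^ (k - 1) = (1 - p) ^ (k - 1 - i) * (1 - p) ^ i := by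
    rw [← pow_add]; congr 1; omega
  rw [this]; ring

lemma wk_rev_sum (hk : 1 ≤ k) (hp : 0 < p) (hp1 : p < 1) {t : ℕ} (ht : t ≤ k) :
    ∑ i ∈ range t, wk k p (k - 1 - i) = 1 - ∑ i ∈ range (k - t), wk k p i := by
  have h1 : ∑ i ∈ range k, wk k p i = 1 := by
    rw [wk_sum_range, div_self (wk_den_pos hk hp hp1).ne']
  have h2 := Finset.sum_range_add_sum_Ico (fun i => wk k p i) (Nat.sub_le k t)
  have h3 : ∑ i ∈ range t, wk k p (k - 1 - i) = ∑ i ∈ Ico (k - t) k, wk k p i := by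
    rw [Finset.sum_Ico_eq_sum_range, ← Finset.sum_range_reflect]
    have : k - (k - t) = t := by omega
    rw [this]
    refine Finset.sum_congr rfl fun i hi => ?_
    rw [mem_range] at hi
    congr 1; omega
  linarith

/-- `λ^R ≤ 1 - σ/3` -/
lemma lamR_bound (hk : 2 ≤ k) (hp : 0 < p) (hp1 : p < 1) (hσ : 0 < σ) (hσk : σ ≤ k * p)
    (hσ1 : σ ≤ 1) :
    ((k - 1 : ℕ) : ℝ) * wk k p (k - 1) ≤ 1 - σ / 3 := by
  have hn : ((k - 1 : ℕ) : ℝ) = k - 1 := by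
    rw [Nat.cast_sub (by omega)]; simp
  have hk0 : (2 : ℝ) ≤ k := by exact_mod_cast hk
  have hw := wk_pos (by omega : 1 ≤ k) hp hp1 (k - 1)
  have h1 := wk_rev_sum (by omega : 1 ≤ k) hp hp1 le_rfl
  simp only [Nat.sub_self, Finset.range_zero, Finset.sum_empty, sub_zero] at h1
  have h2 : ∀ i ∈ range k, wk k p (k - 1) * (1 + i * p) ≤ wk k p (k - 1 - i) := by
    intro i hi
    rw [mem_range] at hi
    rw [← wk_rev_mul hi]
    have h3 : (1 - p) ^ i * (1 + i * p) ≤ 1 := by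
      have h4 := one_add_mul_le_pow (a := p) (by linarith) i
      calc (1 - p) ^ i * (1 + i * p) ≤ (1 - p) ^ i * (1 + p) ^ i := by
            refine mul_le_mul_of_nonneg_left h4 (pow_nonneg (by linarith) _)
        _ = ((1 - p) * (1 + p)) ^ i := by rw [mul_pow]
        _ ≤ 1 := pow_le_one₀ (by nlinarith) (by nlinarith)
    have := mul_le_mul_of_nonneg_left h3 (wk_pos (by omega : 1 ≤ k) hp hp1 (k - 1 - i)).le
    linarith
  have h3 := Finset.sum_le_sum h2
  rw [h1, ← Finset.mul_sum, Finset.sum_add_distrib, ← Finset.sum_mul] at h3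
  have h4 : ∑ i ∈ range k, (i : ℝ) = k * (k - 1) / 2 := by
    clear * -
    induction k with
    | zero => simp
    | succ k ih => rw [Finset.sum_range_succ, ih]; push_cast; ring
  rw [h4] at h3
  simp only [sum_const, card_range, nsmul_eq_mul, mul_one] at h3
  rw [hn]
  set w := wk k p (k - 1)
  have h5 : (k - 1) * w * (1 + σ / 2) ≤ 1 := by
    have : (k - 1) * w * (1 + σ / 2) ≤ (k - 1) * w * (1 + k * p / 2) := by
      have : 0 ≤ (k - 1) * w := mul_nonneg (by linarith) hw.le
      gcongr
    nlinarith
  have h6 : 0 ≤ (k - 1) * w := mul_nonneg (by linarith) hw.le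
  have h7 : 1 ≤ (1 - σ / 3) * (1 + σ / 2) := by nlinarith
  refine le_of_mul_le_mul_right (h5.trans h7) (by linarith)

lemma wk_ge (hk : 1 ≤ k) (hp : 0 < p) (hp1 : p < 1) {i L : ℕ} (hi : i ≤ L) :
    wk k p 0 * (1 - p * L) ≤ wk k p i := by
  have h1 : 1 - p * L ≤ (1 - p) ^ i := by
    have := one_sub_mul_le_pow hp1.le i
    have h2 : (i : ℝ) ≤ L := by exact_mod_cast hi
    nlinarith
  have : wk k p i = wk k p 0 * (1 - p) ^ i := by unfold wk; ring
  rw [this]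
  exact mul_le_mul_of_nonneg_left h1 (wk_pos hk hp hp1 0).le

lemma wk_anti (hk : 1 ≤ k) (hp : 0 < p) (hp1 : p < 1) {i j : ℕ} (hi : i ≤ j) :
    wk k p j ≤ wk k p i := by
  unfold wk
  have := wk_den_pos hk hp hp1
  have h2 : (1 - p) ^ j ≤ (1 - p) ^ i := pow_le_pow_of_le_one (by linarith) (by linarith) hi
  gcongr

lemma wk_rev_le (hp : 0 < p) (hp1 : p < 1) {i L : ℕ} (hi : i ≤ L) (hik : i < k)
    (hpL : p * L ≤ 1 / 2) :
    wk k p (k - 1 - i) ≤ wk k p (k - 1) * (1 + 2 * (p * L)) := by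
  have h1 : 1 - p * L ≤ (1 - p) ^ i := by
    have := one_sub_mul_le_pow hp1.le i
    have h2 : (i : ℝ) ≤ L := by exact_mod_cast hi
    nlinarith
  rw [← wk_rev_mul hik, mul_assoc]
  have h0 : 0 ≤ p * L := by positivity
  have h3 : 1 ≤ (1 - p) ^ i * (1 + 2 * (p * L)) := by
    calc 1 ≤ (1 - p * L) * (1 + 2 * (p * L)) := by nlinarith
      _ ≤ _ := by gcongr
  exact le_mul_of_one_le_right (wk_pos (by omega : 1 ≤ k) hp hp1 _).le h3

/-- `Λ(m) ≥ m + kσ/40` -/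
lemma Lam_mid (hp : 0 < p) (hp1 : p < 1) (hσ : 0 < σ) (hσk : σ ≤ k * p) (hσ1 : σ ≤ 1)
    (hkσ : 1000 ≤ k * σ) :
    (((k + 1) / 2 : ℕ) : ℝ) + k * σ / 40
      ≤ ((k - 1 : ℕ) : ℝ) * ∑ i ∈ range ((k + 1) / 2), wk k p i := by
  have hkR : (1000 : ℝ) ≤ k := by nlinarith [(k.cast_nonneg : (0:ℝ) ≤ k)]
  have hk : 1 ≤ k := by
    have : (1 : ℝ) ≤ k := by linarith
    exact_mod_cast this
  have hn : ((k - 1 : ℕ) : ℝ) = k - 1 := by push_cast [Nat.cast_sub hk]; ring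
  set m := (k + 1) / 2 with hm
  have hm1 : (m : ℝ) ≤ (k + 1) / 2 := by
    have : 2 * m ≤ k + 1 := by omega
    have : (2 : ℝ) * m ≤ k + 1 := by exact_mod_cast this
    linarith
  have hm2 : (k : ℝ) / 2 ≤ m := by
    have : k ≤ 2 * m := by omega
    have : (k : ℝ) ≤ 2 * m := by exact_mod_cast this
    linarith
  rw [wk_sum_range, hn]
  have hD := wk_den_pos hk hp hp1
  set x := (1 - p) ^ m with hx
  have hx0 : 0 ≤ x := pow_nonneg (by linarith) _
  have hx1 : x ≤ 1 - 3 * σ / 8 := by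
    have h1 : x ≤ Real.exp (-(σ / 2)) := by
      have : 1 - p ≤ Real.exp (-p) := by linarith [Real.add_one_le_exp (-p)]
      calc x ≤ Real.exp (-p) ^ m := pow_le_pow_left₀ (by linarith) this m
        _ = Real.exp (-(m * p)) := by rw [← Real.exp_nat_mul]; ring_nf
        _ ≤ _ := Real.exp_le_exp.2 (by nlinarith)
    have := exp_neg_le_quad (u := σ / 2) (by positivity)
    nlinarith
  have hD2 : 1 - (1 - p) ^ k ≤ (1 - x) * (1 + x) := by
    have : (1 - p) ^ (m + m) ≤ (1 - p) ^ k :=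
      pow_le_pow_of_le_one (by linarith) (by linarith) (by omega)
    rw [pow_add] at this
    nlinarith
  have h2 : 1 / (1 + x) ≤ (1 - x) / (1 - (1 - p) ^ k) := by
    rw [div_le_div_iff₀ (by linarith) hD]; linarith
  have h3 : 1 / 2 + (1 - x) / 4 ≤ 1 / (1 + x) := by
    rw [le_div_iff₀ (by linarith)]; nlinarith
  have h4 : 1 / 2 + 3 * σ / 32 ≤ (1 - x) / (1 - (1 - p) ^ k) := by linarith
  have h5 := mul_le_mul_of_nonneg_left h4 (by linarith : (0 : ℝ) ≤ k - 1)
  nlinarith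

lemma den_ge (hp : 0 < p) (hp1 : p < 1) (hσ : 0 < σ) (hσk : σ ≤ k * p) (hσ1 : σ ≤ 1) :
    σ / 2 ≤ 1 - (1 - p) ^ k := by
  have h1 : (1 - p) ^ k ≤ Real.exp (-σ) := by
    have : 1 - p ≤ Real.exp (-p) := by linarith [Real.add_one_le_exp (-p)]
    calc (1 - p) ^ k ≤ Real.exp (-p) ^ k := pow_le_pow_left₀ (by linarith) this k
      _ = Real.exp (-(k * p)) := by rw [← Real.exp_nat_mul]; ring_nf
      _ ≤ _ := Real.exp_le_exp.2 (by linarith)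
  have := exp_neg_le_quad hσ.le
  nlinarith

end

lemma concave_min {c : ℕ → ℝ} {L M t : ℕ} {γ : ℝ}
    (hc : ∀ i j, i ≤ j → j < M → c j ≤ c i) (hLt : L ≤ t) (htM : t ≤ M)
    (h1 : γ ≤ ∑ i ∈ range L, c i) (h2 : γ ≤ ∑ i ∈ range M, c i) :
    γ ≤ ∑ i ∈ range t, c i := by
  rcases Nat.eq_or_lt_of_le htM with h | htM'
  · rw [h]; exact h2
  by_cases h : 0 ≤ c t
  · have := Finset.sum_range_add_sum_Ico c hLt
    have h3 : 0 ≤ ∑ i ∈ Ico L t, c i := Finset.sum_nonneg fun i hi => by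
      rw [mem_Ico] at hi
      exact h.trans (hc _ _ hi.2.le htM')
    linarith
  · push Not at h
    have := Finset.sum_range_add_sum_Ico c htM
    have h3 : ∑ i ∈ Ico t M, c i ≤ 0 := Finset.sum_nonpos fun i hi => by
      rw [mem_Ico] at hi
      exact (hc _ _ hi.1 hi.2).trans h.le
    linarith

/-! ### Part 9: the main finite estimates -/

section
variable {k L : ℕ} {p σ e th : ℝ}

set_option maxHeartbeats 1000000 in
/-- tail exponent on the left -/
lemma left_gamma (hp : 0 < p) (hp1 : p < 1) (hσ : 0 < σ) (hσk : σ ≤ k * p) (hσ1 : σ ≤ 1)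
    (hkσ : 1000 ≤ k * σ) (he : 0 < e) (he1 : e ≤ 1 / 1000) (hpL : p * L ≤ e * σ)
    (hLk : L ≤ e * k) (hth : 0 < th) (hth1 : th ≤ e * σ) {t : ℕ} (hLt : L ≤ t)
    (htM : t ≤ (k + 1) / 2) :
    L * σ ^ 2 / 10 ^ 4 ≤ ∑ i ∈ range t, (((k - 1 : ℕ) : ℝ) * (1 - 2 * th) * wk k p i *
      (1 - Real.exp (-(σ / 100))) + Real.log (Real.exp (-(σ / 100)))) := by
  have hkR : (1000 : ℝ) ≤ k := by nlinarith [(k.cast_nonneg : (0:ℝ) ≤ k)]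
  have hk : 1 ≤ k := by
    have : (1 : ℝ) ≤ k := by linarith
    exact_mod_cast this
  have hn : ((k - 1 : ℕ) : ℝ) = k - 1 := by push_cast [Nat.cast_sub hk]; ring
  have hn0 : (0 : ℝ) ≤ ((k - 1 : ℕ) : ℝ) := Nat.cast_nonneg _
  have hth2 : th ≤ σ / 1000 := by nlinarith
  have hpL2 : p * L ≤ σ / 1000 := by nlinarith
  set u := σ / 100 with hu
  have ha : u - u ^ 2 / 2 ≤ 1 - Real.exp (-u) := by
    have := exp_neg_le_quad (u := u) (by positivity)
    linarith
  have hapos : 0 ≤ u - u ^ 2 / 2 := by nlinarith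
  have hnu : 0 ≤ ((k - 1 : ℕ) : ℝ) * (1 - 2 * th) := mul_nonneg hn0 (by linarith)
  have hsum : ∀ t : ℕ, ∑ i ∈ range t, (((k - 1 : ℕ) : ℝ) * (1 - 2 * th) * wk k p i *
      (1 - Real.exp (-u)) + Real.log (Real.exp (-u)))
      = (1 - 2 * th) * (((k - 1 : ℕ) : ℝ) * ∑ i ∈ range t, wk k p i) * (1 - Real.exp (-u)) - t * u := by
    intro t
    rw [Finset.sum_add_distrib, ← Finset.sum_mul, ← Finset.mul_sum, Real.log_exp]
    simp only [sum_const, card_range, nsmul_eq_mul]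
    ring
  have hsum2 : ∀ t : ℕ, ∀ B : ℝ, 0 ≤ B → B ≤ ((k - 1 : ℕ) : ℝ) * ∑ i ∈ range t, wk k p i →
      u * ((1 - σ / 500) * B * (1 - σ / 200) - t) ≤ ∑ i ∈ range t, (((k - 1 : ℕ) : ℝ) * (1 - 2 * th) * wk k p i *
      (1 - Real.exp (-u)) + Real.log (Real.exp (-u))) := by
    intro t B hB hB2
    rw [hsum]
    have h1 : (1 - σ / 500) * B ≤ (1 - 2 * th) * (((k - 1 : ℕ) : ℝ) * ∑ i ∈ range t, wk k p i) := by
      apply mul_le_mul _ hB2 hB (by linarith)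
      linarith
    have h2 : (1 - σ / 500) * B * (u - u ^ 2 / 2) ≤ (1 - 2 * th) * (((k - 1 : ℕ) : ℝ) * ∑ i ∈ range t, wk k p i) * (1 - Real.exp (-u)) := by
      apply mul_le_mul h1 ha hapos
      exact (mul_nonneg (by linarith) hB).trans h1
    have h3 : u - u ^ 2 / 2 = u * (1 - σ / 200) := by rw [hu]; ring
    rw [h3] at h2
    linarith
  have hL0 : (0 : ℝ) ≤ L := L.cast_nonneg
  refine concave_min (M := (k + 1) / 2) ?_ hLt htM ?_ ?_
  · intro i j hij _
    have h1 := wk_anti hk hp hp1 hij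
    have h2 : 0 ≤ 1 - Real.exp (-u) := hapos.trans ha
    gcongr
  · have hlam := lam_bound hp hp1 hσ hσk hσ1 hkσ
    set lam := ((k - 1 : ℕ) : ℝ) * wk k p 0 with hlamd
    have hlam2 : 1 + σ / 4 ≤ lam := by nlinarith
    refine le_trans ?_ (hsum2 L (L * ((1 + σ / 4) * (1 - σ / 1000))) ?_ ?_)
    · have h1 : 1 + σ / 10 ≤ (1 - σ / 500) * ((1 + σ / 4) * (1 - σ / 1000)) * (1 - σ / 200) := by
        have a1 : 1 - σ / 100 ≤ (1 - σ / 500) * (1 - σ / 1000) * (1 - σ / 200) := by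
          have b1 : 1 - 3 * σ / 1000 ≤ (1 - σ / 500) * (1 - σ / 1000) := by nlinarith only [hσ]
          have b2 := mul_le_mul_of_nonneg_right b1 (by linarith : 0 ≤ 1 - σ / 200)
          nlinarith only [b2, hσ]
        have : (1 + σ / 4) * (1 - σ / 100) ≤ (1 + σ / 4) * ((1 - σ / 500) * (1 - σ / 1000) * (1 - σ / 200)) := by gcongr
        nlinarith
      have h2 := mul_le_mul_of_nonneg_left h1 hL0
      calc (L : ℝ) * σ ^ 2 / 10 ^ 4 ≤ u * (L * (1 + σ / 10) - L) := by
            rw [hu]; nlinarith [mul_nonneg hL0 (sq_nonneg σ)]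
        _ ≤ _ := by
          apply mul_le_mul_of_nonneg_left _ (by positivity)
          linarith
    · have : 0 ≤ 1 - σ / 1000 := by linarith
      positivity
    · rw [Finset.mul_sum]
      have : ∀ i ∈ range L, lam * (1 - σ / 1000) ≤ ((k - 1 : ℕ) : ℝ) * wk k p i := by
        intro i hi
        rw [mem_range] at hi
        have h1 := mul_le_mul_of_nonneg_left (wk_ge hk hp hp1 hi.le) hn0
        have : lam * (1 - σ / 1000) ≤ lam * (1 - p * L) := by
          apply mul_le_mul_of_nonneg_left _ (by linarith); linarith
        rw [hlamd] at this ⊢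
        linarith
      have h3 := Finset.sum_le_sum this
      simp only [sum_const, card_range, nsmul_eq_mul] at h3
      refine le_trans ?_ h3
      gcongr
      linarith
  · have hmid := Lam_mid hp hp1 hσ hσk hσ1 hkσ
    set m := (k + 1) / 2 with hm
    have hm1 : (m : ℝ) ≤ (k + 1) / 2 := by
      have : 2 * m ≤ k + 1 := by omega
      have : (2 : ℝ) * m ≤ k + 1 := by exact_mod_cast this
      linarith
    have hm0 : (0 : ℝ) ≤ m := Nat.cast_nonneg _
    refine le_trans ?_ (hsum2 m (m + k * σ / 40) (by positivity) hmid)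
    have hB : (m : ℝ) + k * σ / 40 ≤ k := by
      have : k * σ ≤ k := mul_le_of_le_one_right (by linarith) hσ1
      linarith
    have h1 : 1 - σ / 100 ≤ (1 - σ / 500) * (1 - σ / 200) := by nlinarith only [hσ]
    have h2 : (m + k * σ / 40) * (1 - σ / 100) ≤ (m + k * σ / 40) * ((1 - σ / 500) * (1 - σ / 200)) := by
      gcongr
    have h3 : k * σ / 100 ≤ (1 - σ / 500) * (m + k * σ / 40) * (1 - σ / 200) - m := by
      have a3 := mul_le_mul_of_nonneg_right hB hσ.le
      linarith only [a3, h2, mul_pos (by linarith : (0:ℝ) < k) hσ]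
    have h4 : u * (k * σ / 100) ≤ u * ((1 - σ / 500) * (m + k * σ / 40) * (1 - σ / 200) - m) := by
      gcongr
    refine le_trans ?_ h4
    rw [hu]
    have : (L : ℝ) ≤ k := by nlinarith
    have a5 := mul_le_mul_of_nonneg_right this (sq_nonneg σ)
    linarith only [a5]

set_option maxHeartbeats 1000000 in
/-- tail exponent on the right -/
lemma right_gamma (hp : 0 < p) (hp1 : p < 1) (hσ : 0 < σ) (hσk : σ ≤ k * p) (hσ1 : σ ≤ 1)
    (hkσ : 1000 ≤ k * σ) (he : 0 < e) (he1 : e ≤ 1 / 1000) (hpL : p * L ≤ e * σ)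
    (hLk : L ≤ e * k) (hth : 0 < th) (hth1 : th ≤ e * σ) {t : ℕ} (hLt : L ≤ t)
    (htM : t ≤ k - (k + 1) / 2) :
    L * σ ^ 2 / 10 ^ 4 ≤ ∑ i ∈ range t, (-Real.log (Real.exp (-(σ / 100))) -
      ((k - 1 : ℕ) : ℝ) * (1 + 2 * th) * wk k p (k - 1 - i) *
      ((Real.exp (-(σ / 100)))⁻¹ - 1)) := by
  have hkR : (1000 : ℝ) ≤ k := by nlinarith [(k.cast_nonneg : (0:ℝ) ≤ k)]
  have hk : 2 ≤ k := by
    have : (2 : ℝ) ≤ k := by linarith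
    exact_mod_cast this
  have hk1 : 1 ≤ k := by omega
  have hn : ((k - 1 : ℕ) : ℝ) = k - 1 := by push_cast [Nat.cast_sub hk1]; ring
  have hn0 : (0 : ℝ) ≤ ((k - 1 : ℕ) : ℝ) := Nat.cast_nonneg _
  have hth2 : th ≤ σ / 1000 := by nlinarith
  have hpL2 : p * L ≤ σ / 1000 := by nlinarith
  set u := σ / 100 with hu
  have hu0 : 0 < u := by positivity
  rw [← Real.exp_neg, neg_neg, Real.log_exp, neg_neg]
  have ha : Real.exp u - 1 ≤ u * (1 + u) := by
    have := Real.abs_exp_sub_one_sub_id_le (x := u) (by rw [abs_of_pos hu0]; linarith)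
    rw [abs_le] at this
    nlinarith
  have hapos : 0 ≤ Real.exp u - 1 := by linarith [Real.add_one_le_exp u]
  have hsum : ∀ t : ℕ, ∑ i ∈ range t, (u - ((k - 1 : ℕ) : ℝ) * (1 + 2 * th) * wk k p (k - 1 - i) *
      (Real.exp u - 1))
      = t * u - (1 + 2 * th) * (((k - 1 : ℕ) : ℝ) * ∑ i ∈ range t, wk k p (k - 1 - i)) * (Real.exp u - 1) := by
    intro t
    rw [Finset.sum_sub_distrib, ← Finset.sum_mul, ← Finset.mul_sum]
    simp only [sum_const, card_range, nsmul_eq_mul]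
    ring
  have hsum2 : ∀ t : ℕ, ∀ B : ℝ, ((k - 1 : ℕ) : ℝ) * ∑ i ∈ range t, wk k p (k - 1 - i) ≤ B →
      u * (t - (1 + σ / 500) * B * (1 + σ / 100)) ≤
      ∑ i ∈ range t, (u - ((k - 1 : ℕ) : ℝ) * (1 + 2 * th) * wk k p (k - 1 - i) *
      (Real.exp u - 1)) := by
    intro t B hB2
    rw [hsum]
    have h0 : 0 ≤ ((k - 1 : ℕ) : ℝ) * ∑ i ∈ range t, wk k p (k - 1 - i) :=
      mul_nonneg hn0 (Finset.sum_nonneg fun i _ => (wk_pos hk1 hp hp1 _).le)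
    have h1 : (1 + 2 * th) * (((k - 1 : ℕ) : ℝ) * ∑ i ∈ range t, wk k p (k - 1 - i)) ≤ (1 + σ / 500) * B := by
      apply mul_le_mul _ hB2 h0 (by linarith)
      linarith
    have h2 : (1 + 2 * th) * (((k - 1 : ℕ) : ℝ) * ∑ i ∈ range t, wk k p (k - 1 - i)) * (Real.exp u - 1)
        ≤ (1 + σ / 500) * B * (u * (1 + u)) := by
      apply mul_le_mul h1 ha hapos
      exact mul_nonneg (by linarith) (h0.trans hB2)
    have h3 : u * (1 + u) = u * (1 + σ / 100) := by rw [hu]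
    rw [h3] at h2
    linarith
  have hL0 : (0 : ℝ) ≤ L := L.cast_nonneg
  refine concave_min (M := k - (k + 1) / 2) ?_ hLt htM ?_ ?_
  · intro i j hij hj
    have h1 := wk_anti hk1 hp hp1 (by omega : k - 1 - j ≤ k - 1 - i)
    have : 0 ≤ ((k - 1 : ℕ) : ℝ) * (1 + 2 * th) := by positivity
    gcongr
  · have hlam := lamR_bound hk hp hp1 hσ hσk hσ1
    set lam := ((k - 1 : ℕ) : ℝ) * wk k p (k - 1) with hlamd
    have hlam0 : 0 ≤ lam := mul_nonneg hn0 (wk_pos hk1 hp hp1 _).le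
    refine le_trans ?_ (hsum2 L (L * ((1 - σ / 3) * (1 + σ / 500))) ?_)
    · have h1 : (1 + σ / 500) * ((1 - σ / 3) * (1 + σ / 500)) * (1 + σ / 100) ≤ 1 - σ / 10 := by
        have a1 : (1 + σ / 500) * (1 + σ / 500) * (1 + σ / 100) ≤ 1 + σ / 50 := by
          have b1 : (1 + σ / 500) * (1 + σ / 500) ≤ 1 + σ / 200 := by nlinarith only [hσ, hσ1]
          have b2 := mul_le_mul_of_nonneg_right b1 (by linarith : 0 ≤ 1 + σ / 100)
          nlinarith only [b2, hσ, hσ1]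
        have : (1 - σ / 3) * ((1 + σ / 500) * (1 + σ / 500) * (1 + σ / 100)) ≤ (1 - σ / 3) * (1 + σ / 50) :=
          mul_le_mul_of_nonneg_left a1 (by linarith)
        nlinarith
      have h2 := mul_le_mul_of_nonneg_left h1 hL0
      calc (L : ℝ) * σ ^ 2 / 10 ^ 4 ≤ u * (L - L * (1 - σ / 10)) := by
            rw [hu]; nlinarith [mul_nonneg hL0 (sq_nonneg σ)]
        _ ≤ _ := by
          apply mul_le_mul_of_nonneg_left _ (by positivity)
          linarith
    · rw [Finset.mul_sum]
      have : ∀ i ∈ range L, ((k - 1 : ℕ) : ℝ) * wk k p (k - 1 - i) ≤ (1 - σ / 3) * (1 + σ / 500) := by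
        intro i hi
        rw [mem_range] at hi
        have h1 := mul_le_mul_of_nonneg_left
          (wk_rev_le hp hp1 hi.le (by omega : i < k) (by linarith : p * L ≤ 1 / 2)) hn0
        have : lam * (1 + 2 * (p * L)) ≤ (1 - σ / 3) * (1 + σ / 500) := by
          apply mul_le_mul hlam (by linarith) (by positivity) (by linarith)
        rw [hlamd] at this
        linarith
      have h3 := Finset.sum_le_sum this
      simpa only [sum_const, card_range, nsmul_eq_mul] using h3
  · have hmid := Lam_mid hp hp1 hσ hσk hσ1 hkσ
    have hrev := wk_rev_sum hk1 hp hp1 (Nat.sub_le k ((k + 1) / 2))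
    have hkk : k - (k - (k + 1) / 2) = (k + 1) / 2 := by omega
    rw [hkk] at hrev
    set m := (k + 1) / 2 with hm
    have hm1 : (k : ℝ) / 2 ≤ m := by
      have : k ≤ 2 * m := by omega
      have : (k : ℝ) ≤ 2 * m := by exact_mod_cast this
      linarith
    have hcast : ((k - m : ℕ) : ℝ) = k - m := by rw [Nat.cast_sub (by omega)]
    have hkm : (0 : ℝ) ≤ ((k - m : ℕ) : ℝ) := Nat.cast_nonneg _
    refine le_trans ?_ (hsum2 (k - m) ((k - m : ℕ) - k * σ / 40) ?_)
    · have hB : ((k - m : ℕ) : ℝ) ≤ k / 2 := by rw [hcast]; linarith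
      set T := ((k - m : ℕ) : ℝ)
      have h1 : (1 + σ / 500) * (1 + σ / 100) ≤ 1 + σ / 80 := by nlinarith
      have h3 : k * σ / 100 ≤ T - (1 + σ / 500) * (T - k * σ / 40) * (1 + σ / 100) := by
        have a1 := mul_le_mul_of_nonneg_left h1 hkm
        have a2 : k * σ / 40 ≤ k * σ / 40 * ((1 + σ / 500) * (1 + σ / 100)) := by
          refine le_mul_of_one_le_right (by positivity) (by nlinarith only [hσ])
        have a3 := mul_le_mul_of_nonneg_right hB hσ.le
        linarith only [a1, a2, a3, mul_pos (by linarith : (0:ℝ) < k) hσ]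
      have h4 := mul_le_mul_of_nonneg_left h3 hu0.le
      refine le_trans ?_ h4
      rw [hu]
      have : (L : ℝ) ≤ k := by nlinarith
      have a5 := mul_le_mul_of_nonneg_right this (sq_nonneg σ)
      linarith only [a5]
    · rw [hrev, hcast]
      nlinarith

end

/-! ### Part 10: sandwich -/

section
variable {k L : ℕ} {p σ e th : ℝ}

/-- bounds for the left walk -/
lemma left_esc (hp : 0 < p) (hp1 : p < 1) (hσ : 0 < σ) (hσk : σ ≤ k * p) (hσ1 : σ ≤ 1)
    (hkσ : 1000 ≤ k * σ) (hE : Real.exp (-(L * σ ^ 2 / 10 ^ 4)) ≤ e) :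
    ∃ y : ℝ, 0 < y ∧ y < 1 ∧ 1 - y = Real.exp (-(((k - 1 : ℕ) : ℝ) * wk k p 0 * y)) ∧
      y ≤ escProb (((k - 1 : ℕ) : ℝ) * wk k p 0) ∧
      escProb (((k - 1 : ℕ) : ℝ) * wk k p 0) ≤ uL (fun _ => ((k - 1 : ℕ) : ℝ) * wk k p 0) L ∧
      uL (fun _ => ((k - 1 : ℕ) : ℝ) * wk k p 0) L * (1 - e) ≤ y := by
  have hlam := lam_bound hp hp1 hσ hσk hσ1 hkσ
  set lam := ((k - 1 : ℕ) : ℝ) * wk k p 0 with hlamd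
  have hlam2 : 1 + σ / 4 ≤ lam := by nlinarith
  have hl : 1 < lam := by linarith
  obtain ⟨y, hy, hy1, hye, hy2⟩ := left_root hl
  refine ⟨y, hy, hy1, hye, le_escProb (by linarith) (uL_ge_y hl hy hy1 hye),
    escProb_le (by linarith) L, ?_⟩
  refine le_trans ?_ (uL_le_y hl hy hy1 hye hy2 L)
  refine mul_le_mul_of_nonneg_left ?_ (uL_nonneg _ _)
  have h1 : σ ^ 2 / 10 ^ 4 ≤ (lam - 1) ^ 2 / (2 * lam) := by
    rw [le_div_iff₀ (by linarith)]
    have h2 : lam * (σ / 4) ≤ lam - 1 := by linarith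
    have h3 : (lam * (σ / 4)) ^ 2 ≤ (lam - 1) ^ 2 := pow_le_pow_left₀ (by positivity) h2 2
    have h4 : lam * σ ^ 2 ≤ lam ^ 2 * σ ^ 2 := by
      have : lam ≤ lam ^ 2 := by nlinarith
      gcongr
    have h5 : 0 ≤ lam * σ ^ 2 := by positivity
    linarith
  have h2 : Real.exp (-(L * ((lam - 1) ^ 2 / (2 * lam)))) ≤ Real.exp (-(L * σ ^ 2 / 10 ^ 4)) := by
    refine Real.exp_le_exp.2 (neg_le_neg ?_)
    rw [mul_div_assoc]
    gcongr
  linarith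

/-- bounds for the right walk -/
lemma right_esc (hk : 2 ≤ k) (hp : 0 < p) (hp1 : p < 1) (hσ : 0 < σ) (hσk : σ ≤ k * p)
    (hσ1 : σ ≤ 1) (hL : 1 ≤ L) (he : 0 < e) (hEL : 9 / 4 ≤ e * (L * σ ^ 2)) :
    1 - ((k - 1 : ℕ) : ℝ) * wk k p (k - 1) ≤ escRProb (((k - 1 : ℕ) : ℝ) * wk k p (k - 1)) ∧
      escRProb (((k - 1 : ℕ) : ℝ) * wk k p (k - 1))
        ≤ uR (fun _ => ((k - 1 : ℕ) : ℝ) * wk k p (k - 1)) L ∧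
      uR (fun _ => ((k - 1 : ℕ) : ℝ) * wk k p (k - 1)) L
        ≤ (1 - ((k - 1 : ℕ) : ℝ) * wk k p (k - 1)) * (1 + e) := by
  have hlam := lamR_bound hk hp hp1 hσ hσk hσ1
  have hn : (0 : ℝ) < ((k - 1 : ℕ) : ℝ) := by exact_mod_cast (by omega : 0 < k - 1)
  have hlam0 : 0 < ((k - 1 : ℕ) : ℝ) * wk k p (k - 1) :=
    mul_pos hn (wk_pos (by omega) hp hp1 _)
  set lam := ((k - 1 : ℕ) : ℝ) * wk k p (k - 1) with hlamd
  have hl : lam < 1 := by linarith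
  refine ⟨le_escRProb hlam0.le (uR_ge hlam0), escRProb_le hlam0.le L, ?_⟩
  refine (uR_le hlam0 hl hL).trans ?_
  have hL0 : (0 : ℝ) < L := by exact_mod_cast hL
  have hη : 0 < 1 - lam := by linarith
  have h1 : lam / (4 * (1 - lam) * L) ≤ (1 - lam) * e := by
    rw [div_le_iff₀ (by positivity)]
    have h2 : (σ / 3) ^ 2 ≤ (1 - lam) ^ 2 := pow_le_pow_left₀ (by positivity) (by linarith) 2
    have h3 : (σ / 3) ^ 2 * (4 * e * L) ≤ (1 - lam) ^ 2 * (4 * e * L) := by gcongr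
    nlinarith
  linarith

set_option maxHeartbeats 1000000 in
/-- upper bound -/
lemma tree_le (hp : 0 < p) (hp1 : p < 1) (hσ : 0 < σ) (hσk : σ ≤ k * p) (hσ1 : σ ≤ 1)
    (hkσ : 1000 ≤ k * σ) (he : 0 < e) (he1 : e ≤ 1 / 1000) (hL : 1 ≤ L) (hpL : p * L ≤ e * σ)
    (hLk : L ≤ e * k) :
    treeProb k p ≤ Real.exp (8 * e) * (uL (fun _ => ((k - 1 : ℕ) : ℝ) * wk k p 0) L *
      uR (fun _ => ((k - 1 : ℕ) : ℝ) * wk k p (k - 1)) L) := by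
  have hkR : (1000 : ℝ) ≤ k := by nlinarith [(k.cast_nonneg : (0:ℝ) ≤ k)]
  have hk : 2 ≤ k := by
    have : (2 : ℝ) ≤ k := by linarith
    exact_mod_cast this
  have hk1 : 1 ≤ k := by omega
  have hn : ((k - 1 : ℕ) : ℝ) = k - 1 := by push_cast [Nat.cast_sub hk1]; ring
  have hn0 : (0 : ℝ) ≤ ((k - 1 : ℕ) : ℝ) := Nat.cast_nonneg _
  have hL1 : (1 : ℝ) ≤ L := by exact_mod_cast hL
  have h2L : 2 * L < k := by
    have : (2 : ℝ) * L < k := by nlinarith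
    exact_mod_cast this
  have hpL2 : p * L ≤ 1 / 2 := by nlinarith
  have hlamR := lamR_bound hk hp hp1 hσ hσk hσ1
  have hW1 : ∑ i ∈ range L, wk k p i ≤ 2 * e := by
    have h1 : ∀ i ∈ range L, wk k p i ≤ wk k p 0 := fun i _ => wk_anti hk1 hp hp1 (Nat.zero_le _)
    have h2 := Finset.sum_le_sum h1
    simp only [sum_const, card_range, nsmul_eq_mul] at h2
    refine h2.trans ?_
    unfold wk
    rw [← mul_div_assoc, div_le_iff₀ (wk_den_pos hk1 hp hp1)]
    have := den_ge hp hp1 hσ hσk hσ1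
    nlinarith
  have hW2 : ((k - 1 : ℕ) : ℝ) * ∑ i ∈ range L, wk k p (k - 1 - i) ≤ 2 * L := by
    rw [Finset.mul_sum]
    have h1 : ∀ i ∈ range L, ((k - 1 : ℕ) : ℝ) * wk k p (k - 1 - i) ≤ 2 := fun i hi => by
      rw [mem_range] at hi
      have h1 := mul_le_mul_of_nonneg_left
        (wk_rev_le hp hp1 hi.le (by omega : i < k) hpL2) hn0
      have h2 : ((k - 1 : ℕ) : ℝ) * wk k p (k - 1) * (1 + 2 * (p * L)) ≤ 1 * 2 := by
        refine mul_le_mul (by linarith) (by linarith) (by positivity) (by norm_num)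
      linarith
    have h2 := Finset.sum_le_sum h1
    simp only [sum_const, card_range, nsmul_eq_mul] at h2
    linarith
  have hW1p : 0 ≤ ∑ i ∈ range L, wk k p i := Finset.sum_nonneg fun i _ => (wk_pos hk1 hp hp1 _).le
  have hW2p : 0 ≤ ∑ i ∈ range L, wk k p (k - 1 - i) :=
    Finset.sum_nonneg fun i _ => (wk_pos hk1 hp hp1 _).le
  have htu := @tree_upper k L p (Real.exp (8 * e) * poissonP ((k - 1 : ℕ) : ℝ) (k - 1)) hk hp hp1 h2L
  set W1 := ∑ i ∈ range L, wk k p i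
  set W2 := ∑ i ∈ range L, wk k p (k - 1 - i)
  set N := ((k - 1 : ℕ) : ℝ) with hN
  have hNpos : 0 < N := by rw [hn]; linarith
  set μ := N * (1 - W1 - W2) with hμ
  have hμ1 : N * (1 - 7 * e) ≤ μ := by
    rw [hμ]; nlinarith
  have heN : 1 ≤ 2 * e * N := by nlinarith
  have hμpos : 0 ≤ μ := le_trans (by apply mul_nonneg hn0; linarith) hμ1
  have hM1 : (⌊μ⌋₊ : ℝ) ≤ μ := Nat.floor_le hμpos
  have hM2 : μ < ⌊μ⌋₊ + 1 := Nat.lt_floor_add_one μ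
  have hM3 : N * (1 - 9 * e) ≤ (⌊μ⌋₊ : ℝ) := by linarith
  have hMh : N / 2 ≤ ⌊μ⌋₊ := by nlinarith
  have hMpos : 1 ≤ ⌊μ⌋₊ := by
    have : (0 : ℝ) < ⌊μ⌋₊ := by linarith
    exact_mod_cast this
  have hMn : ⌊μ⌋₊ ≤ k - 1 := by
    have : (⌊μ⌋₊ : ℝ) ≤ ((k - 1 : ℕ) : ℝ) := by
      refine hM1.trans ?_
      rw [hμ]
      exact mul_le_of_le_one_right hn0 (by linarith)
    exact_mod_cast this
  have hM3' : N * (1 - 9 * e) ≤ (⌊μ⌋₊ : ℝ) := hM3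
  have hpois : ∀ c, poissonP μ c ≤ Real.exp (8 * e) * poissonP N (k - 1) := by
    intro c
    refine (poissonP_sup hMpos hM1 hM2.le hMn c).trans ?_
    have hpp : 0 ≤ poissonP N (k - 1) := by unfold poissonP; positivity
    refine mul_le_mul_of_nonneg_right (Real.exp_le_exp.2 ?_) hpp
    rw [div_le_iff₀ (by linarith)]
    nlinarith
  have hlt : W1 + W2 < 1 := by
    have : 0 < μ := by
      have : (0 : ℝ) < ⌊μ⌋₊ := by exact_mod_cast hMpos
      linarith
    have := pos_of_mul_pos_right this hn0
    linarith
  have h := htu hpois hlt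
  have hpp : 0 < poissonP N (k - 1) := by unfold poissonP; positivity
  have hA : uL (fun i => N * wk k p i) L ≤ uL (fun _ => N * wk k p 0) L := by
    refine uL_mono_rate (fun i _ => mul_nonneg hn0 (wk_pos hk1 hp hp1 _).le) fun i _ => ?_
    exact mul_le_mul_of_nonneg_left (wk_anti hk1 hp hp1 (Nat.zero_le _)) hn0
  have hB : uR (fun i => N * wk k p (k - 1 - i)) L ≤ uR (fun _ => N * wk k p (k - 1)) L := by
    refine uR_anti_rate (fun i _ => mul_nonneg hn0 (wk_pos hk1 hp hp1 _).le) fun i _ => ?_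
    exact mul_le_mul_of_nonneg_left (wk_anti hk1 hp hp1 (by omega)) hn0
  have hAB := mul_le_mul hA hB (uR_nonneg _ _) (uL_nonneg _ _)
  have h2 := h.trans (mul_le_mul_of_nonneg_right hAB (by positivity :
    0 ≤ Real.exp (8 * e) * poissonP N (k - 1)))
  refine le_of_mul_le_mul_left (a := poissonP N (k - 1)) ?_ hpp
  linarith

set_option maxHeartbeats 1000000 in
/-- lower bound -/
lemma tree_ge {y : ℝ} (hp : 0 < p) (hp1 : p < 1) (hσ : 0 < σ) (hσk : σ ≤ k * p) (hσ1 : σ ≤ 1)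
    (hkσ : 1000 ≤ k * σ) (he : 0 < e) (he1 : e ≤ 1 / 1000) (hL : 1 ≤ L) (hpL : p * L ≤ e * σ)
    (hLk : L ≤ e * k) (hth : 0 < th) (hth1 : th ≤ e * σ)
    (hE : Real.exp (-(L * σ ^ 2 / 10 ^ 4)) ≤ e)
    (hE2 : Real.exp (-(((k - 1 : ℕ) : ℝ) * th ^ 2 / 2)) ≤ e)
    (hy : 0 < y) (hy1 : y < 1)
    (hye : 1 - y = Real.exp (-(((k - 1 : ℕ) : ℝ) * wk k p 0 * y))) :
    ∃ bl br : ℝ, 0 ≤ bl ∧ 0 ≤ br ∧ bl * br ≤ treeProb k p ∧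
      (1 - 12 * e) * y ≤ bl + 2 * e * uL (fun _ => ((k - 1 : ℕ) : ℝ) * wk k p 0) L ∧
      (1 - 15 * e) * (1 - ((k - 1 : ℕ) : ℝ) * wk k p (k - 1)) ≤
        br + 2 * e * uR (fun _ => ((k - 1 : ℕ) : ℝ) * wk k p (k - 1)) L := by
  have hkR : (1000 : ℝ) ≤ k := by nlinarith [(k.cast_nonneg : (0:ℝ) ≤ k)]
  have hk : 2 ≤ k := by
    have : (2 : ℝ) ≤ k := by linarith
    exact_mod_cast this
  have hk1 : 1 ≤ k := by omega
  have hn0 : (0 : ℝ) < ((k - 1 : ℕ) : ℝ) := by exact_mod_cast (by omega : 0 < k - 1)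
  have hth2 : th ≤ σ / 1000 := by nlinarith
  have hpL2 : p * L ≤ σ / 1000 := by nlinarith
  have h3L : 3 * L < k := by
    have : (3 : ℝ) * L < k := by nlinarith
    exact_mod_cast this
  have hw := fun i => wk_pos (k := k) (i := i) hk1 hp hp1
  set m := (k + 1) / 2 with hm
  obtain ⟨bl, br, hbl, hbr, hbb, HL, HR⟩ := tree_lower (m := m) hk hp hp1 (by omega)
  refine ⟨bl, br, hbl, hbr, hbb, ?_, ?_⟩
  · set N := ((k - 1 : ℕ) : ℝ) with hN
    have hlam := lam_bound hp hp1 hσ hσk hσ1 hkσ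
    rw [← hN] at hlam
    set lam := N * wk k p 0 with hlamd
    have hl : 1 < lam := by nlinarith
    have hnu : 0 ≤ N * (1 - 2 * th) := mul_nonneg hn0.le (by linarith)
    have h1 := uL_ge_sy (s := 1 - 12 * e) hl hy hy1 hye (by linarith) (by linarith) L
    have hsl : 0 ≤ (1 - 12 * e) * (lam - 1) := mul_nonneg (by linarith) (by linarith)
    have h2 : uL (fun _ => 1 + (1 - 12 * e) * (lam - 1)) L ≤
        uL (fun i => N * (1 - 2 * th) * wk k p i) L := by
      refine uL_mono_rate (fun i _ => by linarith) fun i hi => ?_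
      have a1 := mul_le_mul_of_nonneg_left (wk_ge hk1 hp hp1 hi.le) hnu
      have a2 : N * (1 - 2 * th) * (wk k p 0 * (1 - p * L)) = lam * ((1 - 2 * th) * (1 - p * L)) := by
        rw [hlamd]; ring
      have a3 : 1 - 3 * (e * σ) ≤ (1 - 2 * th) * (1 - p * L) := by
        have : 0 ≤ th * (p * L) := by positivity
        nlinarith only [this, hth1, hpL]
      have a4 := mul_le_mul_of_nonneg_left a3 (by linarith : 0 ≤ lam)
      have a5 : e * 1 ≤ e * (lam * (1 - σ / 4)) := mul_le_mul_of_nonneg_left hlam he.le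
      linarith
    have h3 : uL (fun i => N * (1 - 2 * th) * wk k p i) L ≤
        uL (fun i => N * (1 - 2 * th) * wk k p i) m + Real.exp (-(L * σ ^ 2 / 10 ^ 4)) *
          uL (fun _ => lam) L := by
      refine uL_tail (Real.exp_pos (-(σ / 100))) (Real.exp_le_one_iff.2 (by linarith)) (by omega)
        (fun i _ => mul_nonneg hnu (hw i).le) (fun i _ => ?_) ?_
      · rw [hlamd]
        have a1 := wk_anti hk1 hp hp1 (Nat.zero_le i)
        refine mul_le_mul ?_ a1 (hw i).le hn0.le
        exact mul_le_of_le_one_right hn0.le (by linarith)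
      · intro t ht1 ht2
        exact left_gamma hp hp1 hσ hσk hσ1 hkσ he he1 hpL hLk hth hth1 ht1 ht2
    have h4 := HL (N * (1 - 2 * th)) th hnu hth.le
    have hexp : Real.exp th ≤ 1 + th + th ^ 2 := by
      have := Real.abs_exp_sub_one_sub_id_le (x := th) (by rw [abs_of_pos hth]; linarith)
      rw [abs_le] at this
      linarith [this.2]
    have hexp1 : (1 - 2 * th) * Real.exp th ≤ 1 := by
      have := mul_le_mul_of_nonneg_left hexp (by linarith : 0 ≤ 1 - 2 * th)
      have a : 0 ≤ th ^ 3 := by positivity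
      nlinarith only [this, a, hth, sq_nonneg th]
    have h5 : Real.exp (N * (1 - 2 * th) * (Real.exp th - 1) - th * N) ≤ e := by
      refine le_trans (Real.exp_le_exp.2 ?_) hE2
      have a1 : (1 - 2 * th) * (Real.exp th - 1) - th ≤ - (th ^ 2 / 2) := by
        have := mul_le_mul_of_nonneg_left hexp (by linarith : 0 ≤ 1 - 2 * th)
        have a : 0 ≤ th ^ 3 := by positivity
        nlinarith only [this, a, sq_nonneg th]
      have a2 := mul_le_mul_of_nonneg_left a1 hn0.le
      linarith
    have h6 : uL (fun i => N * (1 - 2 * th) * Real.exp th * wk k p i) m ≤ uL (fun _ => lam) L := by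
      refine le_trans (uL_mono_rate (r' := fun _ => lam) (fun i _ => ?_) (fun i _ => ?_))
        (uL_anti_len (by omega) (fun _ _ => by linarith))
      · exact mul_nonneg (mul_nonneg hnu (Real.exp_pos _).le) (hw i).le
      · refine mul_le_mul ?_ (wk_anti hk1 hp hp1 (Nat.zero_le i)) (hw i).le hn0.le
        rw [mul_assoc]
        exact mul_le_of_le_one_right hn0.le hexp1
    have hU := uL_nonneg (fun _ => lam) L
    have h7 := mul_le_mul h5 h6 (uL_nonneg _ _) he.le
    have h8 := mul_le_mul_of_nonneg_right hE hU
    linarith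
  · set N := ((k - 1 : ℕ) : ℝ) with hN
    have hlam := lamR_bound hk hp hp1 hσ hσk hσ1
    rw [← hN] at hlam
    set lam := N * wk k p (k - 1) with hlamd
    have hl : 0 < lam := mul_pos hn0 (hw _)
    have hnu : 0 ≤ N * (1 + 2 * th) := by positivity
    have hrate : ∀ i, lam ≤ N * (1 + 2 * th) * wk k p (k - 1 - i) := by
      intro i
      have a1 := wk_anti hk1 hp hp1 (by omega : k - 1 - i ≤ k - 1)
      exact mul_le_mul (le_mul_of_one_le_right hn0.le (by linarith)) a1 (hw _).le hnu
    set ρ := lam + 5 * e * σ with hρ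
    have h1 : 1 - ρ ≤ uR (fun _ => ρ) L := uR_ge (by positivity) L
    have h2 : uR (fun _ => ρ) L ≤ uR (fun i => N * (1 + 2 * th) * wk k p (k - 1 - i)) L := by
      refine uR_anti_rate (fun i _ => mul_nonneg hnu (hw _).le) fun i hi => ?_
      have a1 := mul_le_mul_of_nonneg_left
        (wk_rev_le hp hp1 hi.le (by omega : i < k) (by linarith : p * L ≤ 1 / 2)) hnu
      have a2 : N * (1 + 2 * th) * (wk k p (k - 1) * (1 + 2 * (p * L))) =
          lam * ((1 + 2 * th) * (1 + 2 * (p * L))) := by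
        rw [hlamd]; ring
      have a3 : (1 + 2 * th) * (1 + 2 * (p * L)) ≤ 1 + 5 * e * σ := by
        have b1 : (1 + 2 * th) * (1 + 2 * (p * L)) ≤ (1 + 2 * (e * σ)) * (1 + 2 * (e * σ)) := by
          gcongr
        have b2 : e * σ ≤ 1 / 1000 := by nlinarith
        nlinarith [mul_pos he hσ]
      have a4 := mul_le_mul_of_nonneg_left a3 hl.le
      have a5 : lam * (5 * e * σ) ≤ 5 * e * σ := mul_le_of_le_one_left (by positivity) (by linarith)
      linarith
    have h3 : uR (fun i => N * (1 + 2 * th) * wk k p (k - 1 - i)) L ≤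
        uR (fun i => N * (1 + 2 * th) * wk k p (k - 1 - i)) (k - m) +
          Real.exp (-(L * σ ^ 2 / 10 ^ 4)) * uR (fun _ => lam) L := by
      refine uR_tail (Real.exp_pos (-(σ / 100))) (Real.exp_le_one_iff.2 (by linarith)) (by omega)
        (fun i _ => mul_nonneg hnu (hw _).le) (fun _ _ => hl.le) (fun i _ => hrate i) ?_
      intro t ht1 ht2
      exact right_gamma hp hp1 hσ hσk hσ1 hkσ he he1 hpL hLk hth hth1 ht1 ht2
    have h4 := HR (N * (1 + 2 * th)) (-th) hnu (by linarith)
    have hexp := exp_neg_le_quad hth.le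
    have h5 : Real.exp (N * (1 + 2 * th) * (Real.exp (-th) - 1) - (-th) * N) ≤ e := by
      refine le_trans (Real.exp_le_exp.2 ?_) hE2
      have a1 : (1 + 2 * th) * (Real.exp (-th) - 1) + th ≤ - (th ^ 2 / 2) := by
        have := mul_le_mul_of_nonneg_left hexp (by linarith : 0 ≤ 1 + 2 * th)
        have a : th ^ 3 ≤ th ^ 2 := by nlinarith [sq_nonneg th]
        linarith
      have a2 := mul_le_mul_of_nonneg_left a1 hn0.le
      linarith
    have hexp1 : 1 ≤ (1 + 2 * th) * Real.exp (-th) := by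
      have b := Real.add_one_le_exp (-th)
      have := mul_le_mul_of_nonneg_left b (by linarith : 0 ≤ 1 + 2 * th)
      nlinarith
    have h6 : uR (fun i => N * (1 + 2 * th) * Real.exp (-th) * wk k p (k - 1 - i)) (k - m)
        ≤ uR (fun _ => lam) L := by
      refine le_trans (uR_anti_rate (r := fun _ => lam) (fun i _ => hl.le) (fun i _ => ?_))
        (uR_anti_len (by omega) (fun _ _ => hl.le))
      refine mul_le_mul ?_ (wk_anti hk1 hp hp1 (by omega)) (hw _).le (by positivity)
      rw [mul_assoc]
      exact le_mul_of_one_le_right hn0.le hexp1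
    have hU := uR_nonneg (fun _ => lam) L
    have h7 := mul_le_mul h5 h6 (uR_nonneg _ _) he.le
    have h8 := mul_le_mul_of_nonneg_right hE hU
    have h9 : e * (σ / 3) ≤ e * (1 - lam) := mul_le_mul_of_nonneg_left (by linarith) he.le
    linarith

set_option maxHeartbeats 4000000 in
/-- The sandwich. -/
lemma tree_sandwich (hp : 0 < p) (hp1 : p < 1) (hσ : 0 < σ) (hσk : σ ≤ k * p) (hσ1 : σ ≤ 1)
    (hkσ : 1000 ≤ k * σ) (he : 0 < e) (he1 : e ≤ 1 / 1000) (hL : 1 ≤ L) (hpL : p * L ≤ e * σ)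
    (hLk : L ≤ e * k) (hth : 0 < th) (hth1 : th ≤ e * σ)
    (hE : Real.exp (-(L * σ ^ 2 / 10 ^ 4)) ≤ e) (hEL : 9 / 4 ≤ e * (L * σ ^ 2))
    (hE2 : Real.exp (-(((k - 1 : ℕ) : ℝ) * th ^ 2 / 2)) ≤ e) :
    |treeProb k p / (escProb (((k - 1 : ℕ) : ℝ) * wk k p 0) *
      escRProb (((k - 1 : ℕ) : ℝ) * wk k p (k - 1))) - 1| ≤ 50 * e := by
  have hkR : (1000 : ℝ) ≤ k := by nlinarith [(k.cast_nonneg : (0:ℝ) ≤ k)]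
  have hk : 2 ≤ k := by
    have : (2 : ℝ) ≤ k := by linarith
    exact_mod_cast this
  obtain ⟨y, hy, hy1, hye, hyE, hEU, hUy⟩ := left_esc hp hp1 hσ hσk hσ1 hkσ hE
  obtain ⟨hηF, hFV, hVη⟩ := right_esc hk hp hp1 hσ hσk hσ1 hL he hEL
  have hup := tree_le hp hp1 hσ hσk hσ1 hkσ he he1 hL hpL hLk
  obtain ⟨bl, br, hbl, hbr, hbb, h1, h2⟩ :=
    tree_ge hp hp1 hσ hσk hσ1 hkσ he he1 hL hpL hLk hth hth1 hE hE2 hy hy1 hye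
  have hlam := lamR_bound hk hp hp1 hσ hσk hσ1
  have hV0 := uR_nonneg (fun _ => ((k - 1 : ℕ) : ℝ) * wk k p (k - 1)) L
  have hU0 := uL_nonneg (fun _ => ((k - 1 : ℕ) : ℝ) * wk k p 0) L
  set E := escProb (((k - 1 : ℕ) : ℝ) * wk k p 0)
  set F := escRProb (((k - 1 : ℕ) : ℝ) * wk k p (k - 1))
  set U := uL (fun _ => ((k - 1 : ℕ) : ℝ) * wk k p 0) L
  set V := uR (fun _ => ((k - 1 : ℕ) : ℝ) * wk k p (k - 1)) L
  set η := 1 - ((k - 1 : ℕ) : ℝ) * wk k p (k - 1)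
  have hη : 0 < η := by linarith
  have hE0 : 0 < E := by linarith
  have hF0 : 0 < F := by linarith
  clear_value E F U V η
  have hEF : 0 < E * F := mul_pos hE0 hF0
  have hlow : (1 - 50 * e) * (E * F) ≤ treeProb k p := by
    have a1 : (1 - 16 * e) * E ≤ bl := by
      have b1 : U ≤ (1 + 2 * e) * y := by
        have : 1 ≤ (1 - e) * (1 + 2 * e) := by nlinarith
        have := mul_le_mul_of_nonneg_left this hU0
        nlinarith
      have b2 : (1 - 15 * e) * y ≤ bl := by
        have : e * U ≤ e * ((1 + 2 * e) * y) := mul_le_mul_of_nonneg_left b1 he.le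
        have c : e * e * y ≤ e * (1 / 1000) * y := by gcongr
        nlinarith [mul_pos he hy]
      have b3 : (1 - e) * E ≤ y := by
        have := mul_le_mul_of_nonneg_right hEU (by linarith : 0 ≤ 1 - e)
        linarith
      have b4 := mul_le_mul_of_nonneg_left b3 (by linarith : 0 ≤ 1 - 15 * e)
      nlinarith [mul_pos (mul_pos he he) hE0]
    have a2 : (1 - 19 * e) * F ≤ br := by
      have b2 : (1 - 18 * e) * η ≤ br := by
        have : e * V ≤ e * (η * (1 + e)) := mul_le_mul_of_nonneg_left hVη he.le
        have c : e * e * η ≤ e * (1 / 1000) * η := by gcongr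
        nlinarith [mul_pos he hη]
      have b3 : (1 - e) * F ≤ η := by
        have : F * (1 - e) ≤ η * (1 + e) * (1 - e) :=
          mul_le_mul_of_nonneg_right (hFV.trans hVη) (by linarith)
        nlinarith [mul_pos (mul_pos he he) hη]
      have b4 := mul_le_mul_of_nonneg_left b3 (by linarith : 0 ≤ 1 - 18 * e)
      nlinarith [mul_pos (mul_pos he he) hF0]
    refine le_trans ?_ hbb
    have a3 := mul_le_mul a1 a2 (mul_nonneg (by linarith) hF0.le) hbl
    refine le_trans ?_ a3
    have : 1 - 50 * e ≤ (1 - 16 * e) * (1 - 19 * e) := by nlinarith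
    have := mul_le_mul_of_nonneg_right this hEF.le
    linarith
  have hhigh : treeProb k p ≤ (1 + 50 * e) * (E * F) := by
    have a1 : U ≤ (1 + 2 * e) * E := by
      have : 1 ≤ (1 - e) * (1 + 2 * e) := by nlinarith
      have := mul_le_mul_of_nonneg_left this hU0
      nlinarith
    have a2 : V ≤ (1 + e) * F := by nlinarith
    have a3 := mul_le_mul a1 a2 hV0 (by positivity)
    have a4 : Real.exp (8 * e) ≤ 1 + 9 * e := by
      have := Real.abs_exp_sub_one_sub_id_le (x := 8 * e) (by rw [abs_of_pos (by positivity)]; linarith)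
      rw [abs_le] at this
      nlinarith [this.2]
    have a5 := mul_le_mul a4 a3 (mul_nonneg hU0 hV0) (by linarith)
    refine (hup.trans a5).trans ?_
    have : (1 + 9 * e) * ((1 + 2 * e) * (1 + e)) ≤ 1 + 50 * e := by
      have b1 : (1 + 2 * e) * (1 + e) ≤ 1 + 4 * e := by nlinarith
      have b2 := mul_le_mul_of_nonneg_left b1 (by linarith : 0 ≤ 1 + 9 * e)
      nlinarith
    have := mul_le_mul_of_nonneg_right this hEF.le
    linarith
  rw [abs_le]
  constructor
  · have : 1 - 50 * e ≤ treeProb k p / (E * F) := by rw [le_div_iff₀ hEF]; exact hlow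
    linarith
  · have : treeProb k p / (E * F) ≤ 1 + 50 * e := by rw [div_le_iff₀ hEF]; exact hhigh
    linarith

end

/-! ### Part 11: asymptotics -/

lemma tree_close {k : ℕ} {p e K : ℝ} (hp : 0 < p) (hp1 : p ≤ 1) (he : 0 < e) (he1 : e ≤ 1 / 1000)
    (hK : K = 10 ^ 5 / e ^ 3) (h1 : K ≤ k * (min (k * p) 1) ^ 2) (h2 : p * K ≤ (min (k * p) 1) ^ 3)
    (hk1 : 1 ≤ k) :
    |treeProb k p / (escProb (((k - 1 : ℕ) : ℝ) * wk k p 0) *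
      escRProb (((k - 1 : ℕ) : ℝ) * wk k p (k - 1))) - 1| ≤ 50 * e := by
  have hk0 : (0 : ℝ) < k := by exact_mod_cast hk1
  set σ := min (k * p) 1 with hσd
  have hσ : 0 < σ := lt_min (by positivity) one_pos
  have hσk : σ ≤ k * p := min_le_left _ _
  have hσ1 : σ ≤ 1 := min_le_right _ _
  clear_value σ
  have hKe : K * e ^ 3 = 10 ^ 5 := by rw [hK]; field_simp
  have hK0 : 0 < K := by rw [hK]; positivity
  have he2 : e ^ 2 ≤ 1 := by nlinarith
  have he3 : e ^ 3 ≤ 1 := pow_le_one₀ he.le (by linarith)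
  have hK1 : 10 ^ 5 ≤ K := by nlinarith
  have hKe2 : 2 * 10 ^ 4 / e ≤ K * e := by
    rw [div_le_iff₀ he]
    have : K * e * e = K * e ^ 2 := by ring
    rw [this]
    nlinarith [mul_nonneg hK0.le (sq_nonneg e)]
  have hp1' : p < 1 := by
    have : σ ^ 3 ≤ 1 := pow_le_one₀ hσ.le hσ1
    by_contra h
    nlinarith
  have hkσ : 1000 ≤ k * σ := by
    have : k * σ ^ 2 ≤ k * σ := by
      have : σ ^ 2 ≤ σ := by nlinarith
      gcongr
    linarith
  have hkR : (1000 : ℝ) ≤ k := by nlinarith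
  have hn : ((k - 1 : ℕ) : ℝ) = k - 1 := by rw [Nat.cast_sub hk1]; simp
  have hN : (0 : ℝ) < ((k - 1 : ℕ) : ℝ) := by rw [hn]; linarith
  have hσ2 : 0 < σ ^ 2 := by positivity
  have hLl : 10 ^ 4 / e / σ ^ 2 ≤ (⌈10 ^ 4 / e / σ ^ 2⌉₊ : ℝ) := Nat.le_ceil _
  have hLu : (⌈10 ^ 4 / e / σ ^ 2⌉₊ : ℝ) < 10 ^ 4 / e / σ ^ 2 + 1 := Nat.ceil_lt_add_one (by positivity)
  have hC1 : 1 ≤ 10 ^ 4 / e / σ ^ 2 := by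
    rw [le_div_iff₀ hσ2, le_div_iff₀ he]
    have : σ ^ 2 ≤ 1 := pow_le_one₀ hσ.le hσ1
    nlinarith
  set L := ⌈10 ^ 4 / e / σ ^ 2⌉₊ with hLd
  have hL1 : 1 ≤ L := by
    have : (1 : ℝ) ≤ L := by linarith
    exact_mod_cast this
  have hLσ : 10 ^ 4 / e ≤ L * σ ^ 2 := by rwa [div_le_iff₀ hσ2] at hLl
  have hLσ2 : L * σ ^ 2 ≤ K * e := by
    have : (L : ℝ) ≤ 2 * (10 ^ 4 / e / σ ^ 2) := by linarith
    have := mul_le_mul_of_nonneg_right this hσ2.le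
    have e1 : 2 * (10 ^ 4 / e / σ ^ 2) * σ ^ 2 = 2 * 10 ^ 4 / e := by field_simp
    rw [e1] at this
    linarith
  have hexp : ∀ x : ℝ, 1 / e ≤ x → Real.exp (-x) ≤ e := by
    intro x hx
    have : 1 / e ≤ Real.exp x := by linarith [Real.add_one_le_exp x]
    rw [Real.exp_neg]
    exact inv_le_of_inv_le₀ he (by rwa [← one_div])
  refine tree_sandwich (σ := σ) (L := L) (th := Real.sqrt (2 / (e * ((k - 1 : ℕ) : ℝ)))) hp hp1' hσ hσk hσ1 hkσ he he1 hL1 ?_ ?_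
    (Real.sqrt_pos.2 (by positivity)) ?_ ?_ ?_ ?_
  · have a := mul_le_mul_of_nonneg_left hLσ2 hp.le
    have b := mul_le_mul_of_nonneg_left h2 he.le
    have : p * L * σ ^ 2 ≤ e * σ * σ ^ 2 := by nlinarith
    exact le_of_mul_le_mul_right this hσ2
  · have b := mul_le_mul_of_nonneg_left h1 he.le
    have : L * σ ^ 2 ≤ e * k * σ ^ 2 := by nlinarith
    exact le_of_mul_le_mul_right this hσ2
  · refine Real.sqrt_le_iff.2 ⟨by positivity, ?_⟩
    rw [div_le_iff₀ (by positivity), hn]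
    have a : K / 2 ≤ (k - 1) * σ ^ 2 := by nlinarith
    have b := mul_le_mul_of_nonneg_right a (by positivity : 0 ≤ e ^ 3)
    nlinarith
  · refine hexp _ ?_
    rw [le_div_iff₀ (by positivity)]
    calc 1 / e * 10 ^ 4 = 10 ^ 4 / e := by ring
      _ ≤ _ := hLσ
  · have := mul_le_mul_of_nonneg_left hLσ he.le
    have e1 : e * (10 ^ 4 / e) = 10 ^ 4 := by field_simp
    rw [e1] at this
    linarith
  · refine hexp _ ?_
    rw [Real.sq_sqrt (by positivity)]
    apply le_of_eq
    field_simp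

lemma probTREE_aux (p : ℕ → ℝ)
    (hp01 : ∀ k, p k ∈ Set.Ioc (0 : ℝ) 1)
    (hlow : Tendsto (fun k : ℕ => p k * (k : ℝ) ^ ((3 : ℝ) / 2)) atTop atTop)
    (hup : ∀ᶠ k : ℕ in atTop, p k ≤ 10 * Real.log k / k) :
    Tendsto (fun k : ℕ =>
        treeProb k (p k) /
          (escProb (((k : ℝ) - 1) * p k / (1 - (1 - p k) ^ k)) *
            escRProb (((k : ℝ) - 1) * p k * (1 - p k) ^ (k - 1) / (1 - (1 - p k) ^ k))))
      atTop (𝓝 1) := by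
  rw [Metric.tendsto_nhds]
  intro ε hε
  set e := min (ε / 100) (1 / 1000) with hed
  have he : 0 < e := lt_min (by positivity) (by norm_num)
  have he1 : e ≤ 1 / 1000 := min_le_right _ _
  have heε : e ≤ ε / 100 := min_le_left _ _
  clear_value e
  set K := 10 ^ 5 / e ^ 3 with hK
  have hK0 : 0 < K := by positivity
  have hlog : Tendsto (fun k : ℕ => 10 * Real.log k / k) atTop (𝓝 0) := by
    have h := (Real.isLittleO_log_id_atTop.tendsto_div_nhds_zero).comp tendsto_natCast_atTop_atTop
    have := h.const_mul 10
    simp only [mul_zero] at this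
    refine this.congr fun k => ?_
    simp only [Function.comp, id]
    ring
  have hsmall : ∀ᶠ k : ℕ in atTop, 10 * Real.log k / k < 1 / K :=
    hlog.eventually_lt_const (by positivity)
  filter_upwards [hup, hsmall, hlow.eventually_ge_atTop (Real.sqrt K), eventually_ge_atTop 1,
    tendsto_natCast_atTop_atTop.eventually_ge_atTop K] with k h1 h2 h3 hk hkK
  obtain ⟨hp, hp1⟩ := hp01 k
  have hk0 : (0 : ℝ) < k := by exact_mod_cast hk
  have hn : ((k - 1 : ℕ) : ℝ) = k - 1 := by rw [Nat.cast_sub hk]; simp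
  have hpK : p k * K ≤ 1 := by
    have : p k < 1 / K := lt_of_le_of_lt h1 h2
    rw [lt_div_iff₀ hK0] at this
    exact this.le
  have hX : K ≤ p k ^ 2 * k ^ 3 := by
    have a := pow_le_pow_left₀ (Real.sqrt_nonneg K) h3 2
    rw [Real.sq_sqrt hK0.le, mul_pow, ← Real.rpow_natCast ((k : ℝ) ^ ((3 : ℝ) / 2)) 2,
      ← Real.rpow_mul hk0.le] at a
    norm_num at a
    exact_mod_cast a
  have key := tree_close (k := k) (p := p k) (e := e) (K := K) hp hp1 he he1 hK ?_ ?_ hk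
  · rw [Real.dist_eq]
    have e1 : ((k - 1 : ℕ) : ℝ) * wk k (p k) 0 = ((k : ℝ) - 1) * p k / (1 - (1 - p k) ^ k) := by
      rw [hn]; unfold wk; ring
    have e2 : ((k - 1 : ℕ) : ℝ) * wk k (p k) (k - 1) =
        ((k : ℝ) - 1) * p k * (1 - p k) ^ (k - 1) / (1 - (1 - p k) ^ k) := by
      rw [hn]; unfold wk; ring
    rw [e1, e2] at key
    linarith
  · rcases le_total (k * p k) 1 with h | h
    · rw [min_eq_left h]
      calc K ≤ _ := hX
        _ = _ := by ring
    · rw [min_eq_right h]; linarith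
  · rcases le_total (k * p k) 1 with h | h
    · rw [min_eq_left h]
      calc p k * K ≤ p k * (p k ^ 2 * k ^ 3) := by gcongr
        _ = _ := by ring
    · rw [min_eq_right h]; linarith

/-- Theorem `probtreethm`: if `p = p(k)` satisfies
`p(k)·k^{3/2} → ∞` and `p(k) ≤ 10 (ln k)/k`, then `Pr[TREE] ∼ Pr[ESC]·Pr[ESC^R]`
as `k → ∞`, where `ESC` is the escape event of the leftwalk with i.i.d. `Po(λ)`
steps, `ESC^R` that of the rightwalk with i.i.d. `Po(λ^R)` steps,
`λ = (k-1)p/(1-(1-p)^k)` and `λ^R = (k-1)p(1-p)^{k-1}/(1-(1-p)^k)`. -/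
theorem probTREE_asymp (p : ℕ → ℝ)
    (hp01 : ∀ k, p k ∈ Set.Ioc (0 : ℝ) 1)
    (hlow : Tendsto (fun k : ℕ => p k * (k : ℝ) ^ ((3 : ℝ) / 2)) atTop atTop)
    (hup : ∀ᶠ k : ℕ in atTop, p k ≤ 10 * Real.log k / k) :
    Tendsto (fun k : ℕ =>
        treeProb k (p k) /
          (escProb (((k : ℝ) - 1) * p k / (1 - (1 - p k) ^ k)) *
            escRProb (((k : ℝ) - 1) * p k * (1 - p k) ^ (k - 1) / (1 - (1 - p k) ^ k))))
      atTop (𝓝 1) := by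
  exact probTREE_aux p hp01 hlow hup
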